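/- Let X and Y be Borel subsets of the Cantor space 2^ω such that the subspaces X and Y are homogeneous and X ∉ Δ, Y ∉ Δ. Then the following are equivalent: (1) X and Y are homeomorphic; (2) X ≡_W Y and either both X and Y are first category (meager in themselves) or both X and Y are Baire spaces. -/

import Mathlib

open Set

abbrev Cantor := ℕ → Bool

def UpwardClosed (S : Set Cantor) : Prop :=
  ∀ x ∈ S, ∀ y : Cantor, (∀ n, x n = true → y n = true) → y ∈ S

def DownwardClosed (R : Set Cantor) : Prop :=
  ∀ y ∈ R, ∀ x : Cantor, (∀ n, x n = true → y n = true) → x ∈ R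

def ClosedUnderFinMod (S : Set Cantor) : Prop :=
  ∀ x ∈ S, ∀ y : Cantor, {n | x n ≠ y n}.Finite → y ∈ S

def IsSemifilter (S : Set Cantor) : Prop :=
  (fun _ => false) ∉ S ∧ (fun _ => true) ∈ S ∧ UpwardClosed S ∧ ClosedUnderFinMod S

def IsSemiideal (R : Set Cantor) : Prop :=
  (fun _ => false) ∈ R ∧ (fun _ => true) ∉ R ∧ DownwardClosed R ∧ ClosedUnderFinMod R

def ClosedUnderInter (S : Set Cantor) : Prop :=
  ∀ x ∈ S, ∀ y ∈ S, (fun n => x n && y n) ∈ S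

def IsFilterOnOmega (F : Set Cantor) : Prop := IsSemifilter F ∧ ClosedUnderInter F

def IsHomogeneous (X : Type*) [TopologicalSpace X] : Prop :=
  ∀ x y : X, ∃ h : X ≃ₜ X, h x = y

def IsFsigma (A : Set Cantor) : Prop :=
  ∃ F : ℕ → Set Cantor, (∀ n, IsClosed (F n)) ∧ A = ⋃ n, F n

def DOmegaSigmaTwo (X : Set Cantor) : Prop :=
  ∃ A : ℕ → Set Cantor, (∀ n, IsFsigma (A n)) ∧ Monotone A ∧
    X = ⋃ n ∈ {n : ℕ | Odd n}, (A n \ ⋃ m < n, A m)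

def InDelta (X : Set Cantor) : Prop := DOmegaSigmaTwo X ∧ DOmegaSigmaTwo Xᶜ

def WadgeLe (A B : Set Cantor) : Prop :=
  ∃ f : Cantor → Cantor, Continuous f ∧ A = f ⁻¹' B

def WadgeEquiv (A B : Set Cantor) : Prop := WadgeLe A B ∧ WadgeLe B A

def CompletelyMetrizable (X : Type*) [t : TopologicalSpace X] : Prop :=
  ∃ m : MetricSpace X, m.toUniformSpace.toTopologicalSpace = t ∧
    @CompleteSpace X m.toUniformSpace

def FirstCategory (X : Type*) [TopologicalSpace X] : Prop :=
  ∃ f : ℕ → Set X, (∀ n, interior (closure (f n)) = ∅) ∧ (Set.univ : Set X) = ⋃ n, f n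

def CantorFin : Set Cantor := {x | {n | x n = true}.Finite}

def BorelSet (X : Set Cantor) : Prop := @MeasurableSet Cantor (borel Cantor) X

/-- A game space: infinite plays with agreement relations `r n` (agreement up to level `n`). -/
structure Gm : Type 1 where
  X : Type
  r : ℕ → X → X → Prop
  refl : ∀ n x, r n x x
  symm : ∀ {n x y}, r n x y → r n y x
  trans : ∀ {n x y z}, r n x y → r n y z → r n x z
  down : ∀ {n x y}, r (n+1) x y → r n x y
  zero : ∀ x y, r 0 x y
  sep : ∀ {x y}, (∀ n, r n x y) → x = y
  comp : ∀ s : ℕ → X, (∀ n, r n (s n) (s (n+1))) → ∃ x, ∀ n, r n x (s n)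
  ne : Nonempty X

namespace Gm

theorem le (G : Gm) {m n : ℕ} (h : m ≤ n) {x y : G.X} (hr : G.r n x y) : G.r m x y := by
  induction n, h using Nat.le_induction with
  | base => exact hr
  | succ n _ ih => exact ih (G.down hr)

def sd (G : Gm) (n : ℕ) : Setoid G.X := ⟨G.r n, ⟨G.refl n, G.symm, G.trans⟩⟩

noncomputable def rep (G : Gm) (n : ℕ) (x : G.X) : G.X := (Quotient.mk (G.sd n) x).out

theorem rep_r (G : Gm) (n : ℕ) (x : G.X) : G.r n (G.rep n x) x :=
  Quotient.exact (s := G.sd n) (Quotient.out_eq (Quotient.mk (G.sd n) x))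

theorem rep_eq (G : Gm) {n : ℕ} {x y : G.X} (h : G.r n x y) : G.rep n x = G.rep n y := by
  have : Quotient.mk (G.sd n) x = Quotient.mk (G.sd n) y := Quotient.sound h
  unfold rep; rw [this]

end Gm

structure Strat (G : Gm) where
  f : ℕ → G.X → G.X
  ext : ∀ n x, G.r n (f n x) x
  resp : ∀ {n x y}, G.r n x y → G.r (n+1) (f n x) (f n y)

/-- Build a strategy from an arbitrary move function, by evaluating at representatives. -/
noncomputable def Strat.of (G : Gm) (g : ℕ → G.X → G.X) (hg : ∀ n x, G.r n (g n x) x) : Strat G where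
  f n x := g n (G.rep n x)
  ext n x := G.trans (hg n _) (G.rep_r n x)
  resp {n x y} h := by rw [G.rep_eq h]; exact G.refl _ _

def Cons {G : Gm} (b : ℕ) (σ : Strat G) (x : G.X) : Prop :=
  ∀ n, n % 2 = b → G.r (n+1) x (σ.f n x)

def Agree {G : Gm} (n : ℕ) (σ τ : Strat G) : Prop :=
  ∀ m < n, ∀ x, G.r (m+1) (σ.f m x) (τ.f m x)

theorem Agree.mono {G : Gm} {m n : ℕ} (h : m ≤ n) {σ τ : Strat G} (ha : Agree n σ τ) : Agree m σ τ :=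
  fun i hi x => ha i (hi.trans_le h) x

theorem Agree.symm {G : Gm} {n : ℕ} {σ τ : Strat G} (ha : Agree n σ τ) : Agree n τ σ :=
  fun i hi x => G.symm (ha i hi x)

theorem Agree.trans {G : Gm} {n : ℕ} {σ τ υ : Strat G} (ha : Agree n σ τ) (hb : Agree n τ υ) :
    Agree n σ υ :=
  fun i hi x => G.trans (ha i hi x) (hb i hi x)

structure Cov (k : ℕ) (H G : Gm) where
  π : H.X → G.X
  hπ : ∀ {n x y}, H.r n x y → G.r n (π x) (π y)
  inj : ∀ {n x y}, n ≤ k → G.r n (π x) (π y) → H.r n x y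
  surj : ∀ x, ∃ x', G.r k (π x') x
  φ : ℕ → Strat H → Strat G
  loc : ∀ b, b < 2 → ∀ n σ τ, Agree n σ τ → Agree n (φ b σ) (φ b τ)
  low : ∀ b, b < 2 → ∀ σ, ∀ m < k, ∀ x', G.r (m+1) ((φ b σ).f m (π x')) (π (σ.f m x'))
  lift : ∀ b, b < 2 → ∀ σ x, Cons b (φ b σ) x → ∃ x', π x' = x ∧ Cons b σ x'

def Cov.trans {k : ℕ} {J H G : Gm} (c : Cov k J H) (d : Cov k H G) : Cov k J G where
  π x := d.π (c.π x)
  hπ h := d.hπ (c.hπ h)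
  inj hn h := c.inj hn (d.inj hn h)
  surj x := by
    obtain ⟨y, hy⟩ := d.surj x
    obtain ⟨z, hz⟩ := c.surj y
    exact ⟨z, G.trans (d.hπ hz) hy⟩
  φ b σ := d.φ b (c.φ b σ)
  loc b hb n σ τ h := d.loc b hb n _ _ (c.loc b hb n _ _ h)
  low b hb σ m hm x' := G.trans (d.low b hb _ m hm _) (d.hπ (c.low b hb σ m hm x'))
  lift b hb σ x h := by
    obtain ⟨y, hy, hc⟩ := d.lift b hb _ x h
    obtain ⟨z, hz, hc'⟩ := c.lift b hb _ y hc
    exact ⟨z, by rw [hz, hy], hc'⟩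

def Cov.weaken {k l : ℕ} (h : k ≤ l) {H G : Gm} (c : Cov l H G) : Cov k H G where
  π := c.π
  hπ := c.hπ
  inj hn := c.inj (hn.trans h)
  surj x := by
    obtain ⟨y, hy⟩ := c.surj x
    exact ⟨y, G.le h hy⟩
  φ := c.φ
  loc := c.loc
  low b hb σ m hm := c.low b hb σ m (hm.trans_le h)
  lift := c.lift

/-- Positions from which player `b` can force reaching the set `W` of positions. -/
inductive Win {G : Gm} (b : ℕ) (W : ℕ → G.X → Prop) : ℕ → G.X → Prop
  | base {n x} : W n x → Win b W n x
  | mine {n x y} : n % 2 = b → G.r n y x → Win b W (n+1) y → Win b W n x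
  | opp {n x} : n % 2 ≠ b → (∀ y, G.r n y x → Win b W (n+1) y) → Win b W n x

theorem Win.sat {G : Gm} {b : ℕ} {W : ℕ → G.X → Prop}
    (hW : ∀ {n x y}, G.r n x y → W n x → W n y) {n : ℕ} {x y : G.X} (h : Win b W n x)
    (hr : G.r n x y) : Win b W n y := by
  cases h with
  | base h => exact .base (hW hr h)
  | mine hn hz h => exact .mine hn (G.trans hz hr) h
  | opp hn h => exact .opp hn fun z hz => h z (G.trans hz (G.symm hr))

theorem Win.strat {G : Gm} {b : ℕ} {W : ℕ → G.X → Prop} {n : ℕ} {x : G.X} (h : Win b W n x)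
    (hW : ∀ {n x y}, G.r n x y → W n x → W n y) :
    ∃ ω : Strat G, ∀ y, G.r n y x → (∀ m, n ≤ m → m % 2 = b → G.r (m+1) y (ω.f m y)) →
      ∃ i, n ≤ i ∧ W i y := by
  induction h with
  | @base n x h =>
    exact ⟨Strat.of G (fun _ x => x) (fun n x => G.refl _ _),
      fun y hy _ => ⟨n, le_rfl, hW (G.symm hy) h⟩⟩
  | @mine n x z hn hz h ih =>
    obtain ⟨ω, hω⟩ := ih
    classical
    refine ⟨⟨fun m y => if m = n then (if G.r n y x then z else G.rep n y) else ω.f m y, ?_, ?_⟩, ?_⟩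
    · intro m y
      by_cases hm : m = n
      · subst hm
        by_cases hy : G.r m y x
        · simp only [if_true, hy]; exact G.trans hz (G.symm hy)
        · simp only [if_true, hy, if_false]; exact G.rep_r _ _
      · simp only [hm, if_false]; exact ω.ext m y
    · intro m y y' hyy
      by_cases hm : m = n
      · subst hm
        by_cases hy : G.r m y x
        · have : G.r m y' x := G.trans (G.symm hyy) hy
          simp only [if_true, hy, this]; exact G.refl _ _
        · have : ¬ G.r m y' x := fun h' => hy (G.trans hyy h')
          simp only [if_true, hy, this, if_false, G.rep_eq hyy]; exact G.refl _ _
      · simp only [hm, if_false]; exact ω.resp hyy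
    · intro y hy hc
      have h1 := hc n le_rfl hn
      simp only [if_true, hy] at h1
      obtain ⟨i, hi, hw⟩ := hω y h1 (fun m hm hmb => by
        have := hc m (by omega) hmb
        simpa only [show m ≠ n by omega, if_false] using this)
      exact ⟨i, by omega, hw⟩
  | @opp n x hn h ih =>
    have : Nonempty (Strat G) := ⟨Strat.of G (fun _ x => x) (fun n x => G.refl _ _)⟩
    choose! ω hω using ih
    classical
    refine ⟨⟨fun m y => if n + 1 ≤ m then (if G.r n (G.rep (n+1) y) x then
      (ω (G.rep (n+1) y)).f m y else G.rep m y) else G.rep m y, ?_, ?_⟩, ?_⟩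
    · intro m y
      split_ifs
      · exact Strat.ext _ _ _
      · exact G.rep_r _ _
      · exact G.rep_r _ _
    · intro m y y' hyy
      by_cases hm : n + 1 ≤ m
      · have e : G.rep (n+1) y = G.rep (n+1) y' := G.rep_eq (G.le hm hyy)
        simp only [hm, if_true, e]
        split_ifs
        · exact Strat.resp _ hyy
        · rw [G.rep_eq hyy]; exact G.refl _ _
      · simp only [hm, if_false, G.rep_eq hyy]; exact G.refl _ _
    · intro y hy hc
      have hz : G.r (n+1) (G.rep (n+1) y) y := G.rep_r _ _
      have hzx : G.r n (G.rep (n+1) y) x := G.trans (G.down hz) hy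
      obtain ⟨i, hi, hw⟩ := hω _ hzx y (G.symm hz) (fun m hm hmb => by
        have := hc m (by omega) hmb
        simpa only [hm, if_true, hzx] using this)
      exact ⟨i, by omega, hw⟩

/-- Plays avoiding the winning region of the opponent. -/
theorem notWin_strat {G : Gm} {b : ℕ} {W : ℕ → G.X → Prop}
    (hW : ∀ {n x y}, G.r n x y → W n x → W n y) (h0 : ∀ x, ¬ Win b W 0 x) :
    ∃ ω : Strat G, ∀ y, (∀ m, m % 2 ≠ b → G.r (m+1) y (ω.f m y)) → ∀ n, ¬ Win b W n y := by
  classical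
  have key : ∀ n x, ∃ z, G.r n z x ∧ (n % 2 ≠ b → ¬ Win b W n x → ¬ Win b W (n+1) z) := by
    intro n x
    by_cases hh : n % 2 ≠ b ∧ ¬ Win b W n x
    · by_contra hcon
      push Not at hcon
      exact hh.2 (.opp hh.1 fun y hy => by
        obtain ⟨_, _, h⟩ := hcon y hy
        exact h)
    · exact ⟨x, G.refl _ _, fun h1 h2 => (hh ⟨h1, h2⟩).elim⟩
  choose g hg hg' using key
  refine ⟨Strat.of G g hg, fun y hy n => ?_⟩
  induction n with
  | zero => exact h0 y
  | succ n ih =>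
    by_cases hn : n % 2 = b
    · exact fun h => ih (.mine hn (G.refl _ _) h)
    · have h1 := hg' n (G.rep n y) hn (fun h => ih (h.sat hW (G.rep_r n y)))
      exact fun h => h1 (h.sat hW (hy n hn))

/-- Determinacy for payoff sets decided at a finite level. -/
theorem determined_of_decided (G : Gm) (A : Set G.X) (N : ℕ)
    (hN : ∀ x y, G.r N x y → (x ∈ A ↔ y ∈ A)) :
    (∃ σ : Strat G, ∀ x, Cons 0 σ x → x ∈ A) ∨ (∃ σ : Strat G, ∀ x, Cons 1 σ x → x ∉ A) := by
  set W : ℕ → G.X → Prop := fun n x => n = N ∧ x ∈ A with hWd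
  have hW : ∀ {n x y}, G.r n x y → W n x → W n y := by
    rintro n x y h ⟨rfl, hx⟩
    exact ⟨rfl, (hN x y h).1 hx⟩
  by_cases h : ∃ x, Win 0 W 0 x
  · obtain ⟨x, hx⟩ := h
    obtain ⟨ω, hω⟩ := hx.strat hW
    refine Or.inl ⟨ω, fun y hy => ?_⟩
    obtain ⟨i, _, hi⟩ := hω y (G.zero _ _) (fun m _ hm => hy m hm)
    exact hi.2
  · push Not at h
    obtain ⟨ω, hω⟩ := notWin_strat hW h
    refine Or.inr ⟨ω, fun y hy hA => ?_⟩
    exact hω y (fun m hm => hy m (by omega)) N (.base ⟨rfl, hA⟩)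

def UU (G : Gm) (A : Set G.X) : Prop :=
  ∀ (H : Gm) (p : H.X → G.X), (∀ n x y, H.r n x y → G.r n (p x) (p y)) → ∀ k,
    ∃ (J : Gm) (c : Cov k J H) (N : ℕ), ∀ x y, J.r N x y → (p (c.π x) ∈ A ↔ p (c.π y) ∈ A)

theorem UU.compl {G : Gm} {A : Set G.X} (h : UU G A) : UU G Aᶜ := by
  intro H p hp k
  obtain ⟨J, c, N, hN⟩ := h H p hp k
  exact ⟨J, c, N, fun x y hxy => not_congr (hN x y hxy)⟩

theorem UU.determined {G : Gm} {A : Set G.X} (h : UU G A) :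
    (∃ σ : Strat G, ∀ x, Cons 0 σ x → x ∈ A) ∨ (∃ σ : Strat G, ∀ x, Cons 1 σ x → x ∉ A) := by
  obtain ⟨J, c, N, hN⟩ := h G id (fun _ _ _ h => h) 0
  rcases determined_of_decided J {x | c.π x ∈ A} N hN with ⟨σ, hσ⟩ | ⟨σ, hσ⟩
  · refine Or.inl ⟨c.φ 0 σ, fun x hx => ?_⟩
    obtain ⟨y, rfl, hy⟩ := c.lift 0 (by norm_num) σ x hx
    exact hσ y hy
  · refine Or.inr ⟨c.φ 1 σ, fun x hx => ?_⟩
    obtain ⟨y, rfl, hy⟩ := c.lift 1 (by norm_num) σ x hx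
    exact hσ y hy

section Lim

open Classical in
/-- Iterated projection along an inverse sequence. -/
noncomputable def prj {F : ℕ → Type} [∀ i, Nonempty (F i)] (d : ∀ i, F (i+1) → F i) (i : ℕ) :
    ∀ a, F a → F i
  | 0, y => if h : 0 = i then h ▸ y else Classical.choice inferInstance
  | a+1, y => if h : a + 1 = i then h ▸ y else prj d i a (d a y)

theorem prj_self {F : ℕ → Type} [∀ i, Nonempty (F i)] (d : ∀ i, F (i+1) → F i) (i : ℕ) (y : F i) :
    prj d i i y = y := by
  cases i <;> simp [prj]

theorem prj_succ {F : ℕ → Type} [∀ i, Nonempty (F i)] (d : ∀ i, F (i+1) → F i) {i a : ℕ}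
    (h : i ≤ a) (y : F (a+1)) : prj d i (a+1) y = prj d i a (d a y) := by
  have : a + 1 ≠ i := by omega
  simp [prj, this]

theorem d_prj {F : ℕ → Type} [∀ i, Nonempty (F i)] (d : ∀ i, F (i+1) → F i) {i a : ℕ}
    (h : i + 1 ≤ a) (y : F a) : d i (prj d (i+1) a y) = prj d i a y := by
  induction a, h using Nat.le_induction with
  | base => rw [prj_self, prj_succ d le_rfl, prj_self]
  | succ a ha ih => rw [prj_succ d ha, ih, prj_succ d (by omega)]

variable (k : ℕ) (G : ℕ → Gm) (c : ∀ i, Cov (k+i) (G (i+1)) (G i))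

instance instNeX (i : ℕ) : Nonempty (G i).X := (G i).ne
noncomputable instance instNeS (H : Gm) : Nonempty (Strat H) :=
  ⟨Strat.of H (fun _ x => x) (fun _ _ => H.refl _ _)⟩

theorem prj_r {i a n : ℕ} (h : i ≤ a) {x y : (G a).X} (hr : (G a).r n x y) :
    (G i).r n (prj (F := fun i => (G i).X) (fun i => (c i).π) i a x) (prj (F := fun i => (G i).X) (fun i => (c i).π) i a y) := by
  induction a, h using Nat.le_induction with
  | base => rwa [prj_self, prj_self]
  | succ a ha ih =>
    rw [prj_succ _ ha, prj_succ _ ha]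
    exact ih ((c a).hπ hr)

theorem lim_seq (j : ℕ) (x : (G j).X) : ∃ u : ∀ i, (G i).X, u j = x ∧
    ∀ i, j ≤ i → (G i).r (k+i) ((c i).π (u (i+1))) (u i) := by
  classical
  choose v hv using fun i => (c i).surj
  let upd : ∀ i, (G i).X → (G i).X := fun i y => if h : j = i then h ▸ x else y
  let u : ∀ i, (G i).X := fun i => Nat.rec (motive := fun i => (G i).X)
    (upd 0 (Classical.choice (G 0).ne)) (fun i y => upd (i+1) (v i y)) i
  refine ⟨u, ?_, ?_⟩
  · cases j with
    | zero => simp [u, upd]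
    | succ j => simp [u, upd]
  · intro i hi
    have : u (i+1) = v i (u i) := by
      have h : j ≠ i + 1 := by omega
      simp [u, upd, h]
    rw [this]; exact hv i _

theorem lim_lift (j : ℕ) (x : (G j).X) : ∃ y : ∀ i, (G i).X, (∀ i, (c i).π (y (i+1)) = y i) ∧
    (G j).r (k+j) (y j) x := by
  obtain ⟨u, hu, hr⟩ := lim_seq k G c j x
  let q : ∀ i a, (G i).X := fun i a => prj (F := fun i => (G i).X) (fun i => (c i).π) i a (u a)
  have hq : ∀ i a, i ≤ a → j ≤ a → (G i).r (k+a) (q i (a+1)) (q i a) := by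
    intro i a hi hj
    simp only [q]
    rw [prj_succ _ hi]
    exact prj_r k G c hi (hr a hj)
  have hex : ∀ i, ∃ y : (G i).X, ∀ n, (G i).r n y (q i (i+j+n)) := by
    intro i
    refine (G i).comp (fun n => q i (i+j+n)) fun n => (G i).symm ?_
    exact (G i).le (by omega) (hq i (i+j+n) (by omega) (by omega))
  choose y hy using hex
  have hy' : ∀ i n a, i + j + n ≤ a → (G i).r n (y i) (q i a) := by
    intro i n a h
    induction a, h using Nat.le_induction with
    | base => exact hy i n
    | succ a ha ih =>
      exact (G i).trans ih ((G i).symm ((G i).le (by omega) (hq i a (by omega) (by omega))))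
  refine ⟨y, fun i => (G i).sep fun n => ?_, ?_⟩
  · have h1 := (c i).hπ (hy' (i+1) n (i+1+j+n) le_rfl)
    have h2 := hy' i n (i+1+j+n) (by omega)
    have h3 : (c i).π (q (i+1) (i+1+j+n)) = q i (i+1+j+n) :=
      d_prj (F := fun i => (G i).X) (fun i => (c i).π) (by omega) _
    rw [h3] at h1
    exact (G i).trans h1 ((G i).symm h2)
  · have h4 : ∀ a, j ≤ a → (G j).r (k+j) (q j a) x := by
      intro a h
      induction a, h using Nat.le_induction with
      | base => simp only [q]; rw [prj_self, hu]; exact (G j).refl _ _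
      | succ a ha ih => exact (G j).trans ((G j).le (by omega) (hq j a ha ha)) ih
    exact (G j).trans (hy' j (k+j) _ le_rfl) (h4 _ (by omega))

/-- The inverse limit game. -/
def LimG : Gm where
  X := {x : ∀ i, (G i).X // ∀ i, (c i).π (x (i+1)) = x i}
  r n x y := ∀ i, (G i).r n (x.1 i) (y.1 i)
  refl n x i := (G i).refl _ _
  symm h i := (G i).symm (h i)
  trans h h' i := (G i).trans (h i) (h' i)
  down h i := (G i).down (h i)
  zero x y i := (G i).zero _ _
  sep h := Subtype.ext (funext fun i => (G i).sep fun n => h n i)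
  comp s hs := by
    choose x hx using fun i => (G i).comp (fun n => (s n).1 i) (fun n => hs n i)
    refine ⟨⟨x, fun i => (G i).sep fun n => ?_⟩, fun n i => hx i n⟩
    have := (c i).hπ (hx (i+1) n)
    rw [(s n).2 i] at this
    exact (G i).trans this ((G i).symm (hx i n))
  ne := by
    obtain ⟨y, hy, _⟩ := lim_lift k G c 0 (Classical.choice (G 0).ne)
    exact ⟨⟨y, hy⟩⟩

theorem LimG.inj {j n : ℕ} (hn : n ≤ k + j) {x y : (LimG k G c).X}
    (h : (G j).r n (x.1 j) (y.1 j)) : (LimG k G c).r n x y := by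
  have up : ∀ i, j ≤ i → (G i).r n (x.1 i) (y.1 i) := by
    intro i hi
    induction i, hi using Nat.le_induction with
    | base => exact h
    | succ i hi ih =>
      rw [← x.2 i, ← y.2 i] at ih
      exact (c i).inj (by omega) ih
  have dn : ∀ l i, i + l = j → (G i).r n (x.1 i) (y.1 i) := by
    intro l
    induction l with
    | zero => intro i hi; obtain rfl : i = j := by omega
              exact h
    | succ l ih =>
      intro i hi
      have := (c i).hπ (ih (i+1) (by omega))
      rwa [x.2 i, y.2 i] at this
  intro i
  rcases le_total j i with hi | hi
  · exact up i hi
  · exact dn (j - i) i (by omega)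

noncomputable def LimG.hat (j : ℕ) (x : (G j).X) : (LimG k G c).X :=
  ⟨(lim_lift k G c j x).choose, (lim_lift k G c j x).choose_spec.1⟩

theorem LimG.hat_r (j : ℕ) (x : (G j).X) : (G j).r (k+j) ((LimG.hat k G c j x).1 j) x :=
  (lim_lift k G c j x).choose_spec.2

/-- Truncated strategy on the `j`-th game. -/
noncomputable def LimG.tau (σ : Strat (LimG k G c)) (j : ℕ) : Strat (G j) where
  f m x := if m < k + j then (σ.f m (LimG.hat k G c j x)).1 j else (G j).rep m x
  ext m x := by
    split_ifs with h
    · exact (G j).trans (σ.ext m _ j) ((G j).le h.le (LimG.hat_r k G c j x))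
    · exact (G j).rep_r _ _
  resp {m x y} hxy := by
    split_ifs with h
    · refine σ.resp (LimG.inj k G c (j := j) h.le ?_) j
      exact (G j).trans ((G j).le h.le (LimG.hat_r k G c j x)) ((G j).trans hxy
        ((G j).symm ((G j).le h.le (LimG.hat_r k G c j y))))
    · rw [(G j).rep_eq hxy]; exact (G j).refl _ _

theorem LimG.tau_spec (σ : Strat (LimG k G c)) {j m : ℕ} (hm : m < k + j) (x : (LimG k G c).X) :
    (G j).r (m+1) ((LimG.tau k G c σ j).f m (x.1 j)) ((σ.f m x).1 j) := by
  simp only [LimG.tau, hm, if_true]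
  refine σ.resp (LimG.inj k G c (j := j) hm.le ?_) j
  exact (G j).le hm.le (LimG.hat_r k G c j _)

noncomputable def LimG.A (b : ℕ) (σ : Strat (LimG k G c)) (i j : ℕ) : Strat (G i) :=
  prj (F := fun i => Strat (G i)) (fun i => (c i).φ b) i j (LimG.tau k G c σ j)

theorem psh_agree {b : ℕ} (hb : b < 2) {i a n : ℕ} (h : i ≤ a) {σ τ : Strat (G a)} (hr : Agree n σ τ) :
    Agree n (prj (F := fun i => Strat (G i)) (fun i => (c i).φ b) i a σ)
      (prj (F := fun i => Strat (G i)) (fun i => (c i).φ b) i a τ) := by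
  induction a, h using Nat.le_induction with
  | base => rwa [prj_self, prj_self]
  | succ a ha ih =>
    rw [prj_succ _ ha, prj_succ _ ha]
    exact ih ((c a).loc b hb n _ _ hr)

theorem LimG.tau_step {b : ℕ} (hb : b < 2) (σ : Strat (LimG k G c)) (j : ℕ) :
    Agree (k+j) ((c j).φ b (LimG.tau k G c σ (j+1))) (LimG.tau k G c σ j) := by
  intro m hm x
  have hx := LimG.hat_r k G c j x
  set z := LimG.hat k G c j x
  have hx' := (G j).le hm.le hx
  have e1 := ((c j).φ b (LimG.tau k G c σ (j+1))).resp hx'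
  have e2 := (LimG.tau k G c σ j).resp hx'
  have e3 := (c j).low b hb (LimG.tau k G c σ (j+1)) m hm (z.1 (j+1))
  rw [z.2 j] at e3
  have e4 := (c j).hπ (LimG.tau_spec k G c σ (j := j+1) (m := m) (by omega) z)
  rw [(σ.f m z).2 j] at e4
  have e5 := LimG.tau_spec k G c σ hm z
  exact (G j).trans ((G j).symm e1) ((G j).trans e3 ((G j).trans e4 ((G j).trans ((G j).symm e5) e2)))

theorem LimG.A_stab {b : ℕ} (hb : b < 2) (σ : Strat (LimG k G c)) {i j j' : ℕ} (hi : i ≤ j) (hj : j ≤ j') :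
    Agree (k+j) (LimG.A k G c b σ i j') (LimG.A k G c b σ i j) := by
  induction j', hj using Nat.le_induction with
  | base => exact fun _ _ _ => (G i).refl _ _
  | succ a ha ih =>
    refine Agree.trans ?_ ih
    unfold LimG.A
    rw [prj_succ _ (hi.trans ha)]
    exact psh_agree k G c hb (hi.trans ha) ((LimG.tau_step k G c hb σ a).mono (by omega))

noncomputable def LimG.sig (b : ℕ) (σ : Strat (LimG k G c)) (i : ℕ) : Strat (G i) where
  f m := (LimG.A k G c b σ i (i+m+1)).f m
  ext m := (LimG.A k G c b σ i (i+m+1)).ext m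
  resp {m _ _} := (LimG.A k G c b σ i (i+m+1)).resp

theorem LimG.sig_A {b : ℕ} (hb : b < 2) (σ : Strat (LimG k G c)) {i j : ℕ} (hi : i ≤ j) :
    Agree (k+j) (LimG.sig k G c b σ i) (LimG.A k G c b σ i j) := by
  intro m hm x
  rcases le_total j (i+m+1) with h | h
  · exact LimG.A_stab k G c hb σ hi h m hm x
  · exact (LimG.A_stab k G c hb σ (by omega) h).symm m (by omega) x

theorem LimG.phi_sig {b : ℕ} (hb : b < 2) (σ : Strat (LimG k G c)) (i n : ℕ) :
    Agree n ((c i).φ b (LimG.sig k G c b σ (i+1))) (LimG.sig k G c b σ i) := by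
  have h1 := (c i).loc b hb _ _ _ (LimG.sig_A k G c hb σ (i := i+1) (j := i+1+n) (by omega))
  have h2 := LimG.sig_A k G c hb σ (i := i) (j := i+1+n) (by omega)
  have h3 : (c i).φ b (LimG.A k G c b σ (i+1) (i+1+n)) = LimG.A k G c b σ i (i+1+n) :=
    d_prj (F := fun i => Strat (G i)) (fun i => (c i).φ b) (by omega) _
  rw [h3] at h1
  exact (h1.trans h2.symm).mono (by omega)

theorem LimG.lift {b : ℕ} (hb : b < 2) (σ : Strat (LimG k G c)) (x : (G 0).X)
    (hx : Cons b (LimG.sig k G c b σ 0) x) : ∃ y : (LimG k G c).X, y.1 0 = x ∧ Cons b σ y := by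
  have step : ∀ i (y : (G i).X), Cons b (LimG.sig k G c b σ i) y →
      ∃ z : (G (i+1)).X, (c i).π z = y ∧ Cons b (LimG.sig k G c b σ (i+1)) z := by
    intro i y hy
    refine (c i).lift b hb _ y fun n hn => ?_
    exact (G i).trans (hy n hn) ((G i).symm (LimG.phi_sig k G c hb σ i (n+1) n (by omega) y))
  choose g hg hg' using step
  let u : ∀ i, {y : (G i).X // Cons b (LimG.sig k G c b σ i) y} := fun i =>
    Nat.rec (motive := fun i => {y : (G i).X // Cons b (LimG.sig k G c b σ i) y})
      ⟨x, hx⟩ (fun i y => ⟨g i y.1 y.2, hg' i y.1 y.2⟩) i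
  let y : (LimG k G c).X := ⟨fun i => (u i).1, fun i => hg i _ _⟩
  refine ⟨y, rfl, fun m hm => ?_⟩
  refine LimG.inj k G c (j := m+1) (by omega) ?_
  have h1 := (u (m+1)).2 m hm
  have h2 := LimG.sig_A k G c hb σ (i := m+1) (j := m+1) le_rfl m (by omega) (u (m+1)).1
  have h3 : LimG.A k G c b σ (m+1) (m+1) = LimG.tau k G c σ (m+1) := prj_self _ _ _
  rw [h3] at h2
  have h4 := LimG.tau_spec k G c σ (j := m+1) (m := m) (by omega) y
  exact (G (m+1)).trans h1 ((G (m+1)).trans h2 h4)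

noncomputable def LimG.cov : Cov k (LimG k G c) (G 0) where
  π x := x.1 0
  hπ h := h 0
  inj hn h := LimG.inj k G c (j := 0) hn h
  surj x := ⟨LimG.hat k G c 0 x, LimG.hat_r k G c 0 x⟩
  φ b σ := LimG.sig k G c b σ 0
  loc b hb n σ τ h := by
    intro m hm x
    refine psh_agree k G c hb (Nat.zero_le _) (n := n) ?_ m hm x
    intro m hm x
    simp only [LimG.tau]
    split_ifs
    · exact h m hm _ _
    · exact (G _).refl _ _
  low b hb σ m hm x := by
    have h2 := LimG.sig_A k G c hb σ (i := 0) (j := 0) le_rfl m hm (x.1 0)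
    have h3 : LimG.A k G c b σ 0 0 = LimG.tau k G c σ 0 := prj_self _ _ _
    rw [h3] at h2
    exact (G 0).trans h2 (LimG.tau_spec k G c σ hm x)
  lift b hb σ x hx := LimG.lift k G c hb σ x hx

end Lim

theorem Gm.rep_rep (G : Gm) {m n : ℕ} (h : m ≤ n) (x : G.X) : G.rep m (G.rep n x) = G.rep m x :=
  G.rep_eq (G.le h (G.rep_r n x))

theorem Gm.run (G : Gm) (N : ℕ) (R : ℕ → G.X → Prop)
    (sat : ∀ n y z, G.r n y z → R n y → R n z)
    (dn : ∀ n y, N ≤ n → R (n+1) y → R n y)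
    (ex : ∀ n y, N ≤ n → R n y → ∃ z, G.r n z y ∧ R (n+1) z) {n : ℕ} {x : G.X}
    (hn : N ≤ n) (hx : R n x) : ∃ z, G.r n z x ∧ ∀ m, N ≤ m → R m z := by
  classical
  have : Nonempty G.X := G.ne
  have ex' : ∀ i y, ∃ z, n ≤ i → R i y → G.r i z y ∧ R (i+1) z := by
    intro i y
    by_cases h : n ≤ i ∧ R i y
    · obtain ⟨z, hz⟩ := ex i y (by omega) h.2
      exact ⟨z, fun _ _ => hz⟩
    · exact ⟨x, fun h1 h2 => (h ⟨h1, h2⟩).elim⟩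
  choose g hg using ex'
  let s : ℕ → G.X := fun i => Nat.rec x (fun i y => if n ≤ i then g i y else y) i
  have hs : ∀ i, s (i+1) = if n ≤ i then g i (s i) else s i := fun i => rfl
  have h0 : ∀ i, i ≤ n → s i = x := by
    intro i
    induction i with
    | zero => intro _; rfl
    | succ i ih =>
      intro hi
      rw [hs, if_neg (by omega), ih (by omega)]
  have h1 : ∀ i, n ≤ i → R i (s i) := by
    intro i hi
    induction i, hi using Nat.le_induction with
    | base => rwa [h0 n le_rfl]
    | succ i hi ih =>
      rw [hs, if_pos hi]
      exact (hg i _ hi ih).2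
  obtain ⟨z, hz⟩ := G.comp s (fun i => by
    rw [hs]
    split_ifs with h
    · exact G.symm (hg i _ h (h1 i h)).1
    · exact G.refl _ _)
  refine ⟨z, by rw [← h0 n le_rfl]; exact hz n, ?_⟩
  have up : ∀ m, n ≤ m → R m z := fun m hm => sat m _ _ (G.symm (hz m)) (h1 m hm)
  have dn' : ∀ l m, N ≤ m → m + l = n → R m z := by
    intro l
    induction l with
    | zero => intro m _ hm; exact up m (by omega)
    | succ l ih => intro m hm hl; exact dn m z hm (ih (m+1) (by omega) (by omega))
  intro m hm
  rcases le_total n m with h | h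
  · exact up m h
  · exact dn' (n - m) m hm (by omega)

section Unravel

variable (G : Gm) (A : Set G.X) (K : ℕ)

def TA (n : ℕ) (y : G.X) : Prop := ∃ a ∈ A, G.r n a y

structure LegS (S : ℕ → G.X → Prop) (x : G.X) : Prop where
  sat : ∀ n y z, G.r n y z → S n y → S n z
  base : S (K+1) x
  dn : ∀ n y, K + 1 ≤ n → S (n+1) y → S n y
  odd : ∀ n y z, K + 1 ≤ n → n % 2 = 1 → S n y → G.r n z y → S (n+1) z
  even : ∀ n y, K + 1 ≤ n → n % 2 = 0 → S n y → ∃ z, G.r n z y ∧ S (n+1) z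

structure LegR (S R : ℕ → G.X → Prop) : Prop where
  sat : ∀ n y z, G.r n y z → R n y → R n z
  sub : ∀ n y, R n y → S n y ∧ TA G A n y
  dn : ∀ n y, K + 2 ≤ n → R (n+1) y → R n y
  odd : ∀ n y, K + 2 ≤ n → n % 2 = 1 → R n y → ∃ z, G.r n z y ∧ R (n+1) z
  even : ∀ n y z, K + 2 ≤ n → n % 2 = 0 → R n y → G.r n z y → S (n+1) z → R (n+1) z

structure HX where
  x : G.X
  S : ℕ → G.X → Prop
  o : ℕ ⊕ (ℕ → G.X → Prop)
  legS : LegS G K S x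
  legl : ∀ m, o = Sum.inl m → K + 2 ≤ m ∧ S m x ∧ ¬ TA G A m x
  legr : ∀ R, o = Sum.inr R → LegR G A K S R ∧ ∀ n, K + 2 ≤ n → R n x

variable {G A K}

theorem LegS.congr {S : ℕ → G.X → Prop} {x y : G.X} (h : LegS G K S x) (hr : G.r (K+1) x y) :
    LegS G K S y :=
  ⟨h.sat, h.sat _ _ _ hr h.base, h.dn, h.odd, h.even⟩

theorem TA.sat {n : ℕ} {x y : G.X} (hr : G.r n x y) (h : TA G A n x) : TA G A n y := by
  obtain ⟨a, ha, h⟩ := h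
  exact ⟨a, ha, G.trans h hr⟩

theorem TA.dn {n : ℕ} {x : G.X} (h : TA G A (n+1) x) : TA G A n x := by
  obtain ⟨a, ha, h⟩ := h
  exact ⟨a, ha, G.down h⟩

theorem LegS.ex {S : ℕ → G.X → Prop} {x : G.X} (h : LegS G K S x) {n : ℕ} {y : G.X}
    (hn : K + 1 ≤ n) (hy : S n y) : ∃ z, G.r n z y ∧ S (n+1) z := by
  rcases Nat.mod_two_eq_zero_or_one n with h2 | h2
  · exact h.even n y hn h2 hy
  · exact ⟨y, G.refl _ _, h.odd n y y hn h2 hy (G.refl _ _)⟩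

theorem LegR.run {S R : ℕ → G.X → Prop} {x : G.X} (hS : LegS G K S x) (h : LegR G A K S R)
    {n : ℕ} {y : G.X} (hn : K + 2 ≤ n) (hy : R n y) :
    ∃ z, G.r n z y ∧ ∀ m, K + 2 ≤ m → R m z := by
  refine G.run (K+2) R h.sat h.dn ?_ hn hy
  intro m u hm hu
  rcases Nat.mod_two_eq_zero_or_one m with h2 | h2
  · obtain ⟨z, hz, hz'⟩ := hS.even m u (by omega) h2 (h.sub _ _ hu).1
    exact ⟨z, hz, h.even m u z hm h2 hu hz hz'⟩
  · exact h.odd m u hm h2 hu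

/-- Every legal `S` can be completed. -/
theorem HX.exists_of_S {S : ℕ → G.X → Prop} {x : G.X} (hS : LegS G K S x) :
    ∃ a : HX G A K, G.r (K+1) a.x x ∧ a.S = S := by
  by_cases h : ∃ y m, G.r (K+1) y x ∧ K + 2 ≤ m ∧ S m y ∧ ¬ TA G A m y
  · obtain ⟨y, m, hy, hm, h1, h2⟩ := h
    exact ⟨⟨y, S, Sum.inl m, hS.congr (G.symm hy), fun m' h' => by
      obtain rfl : m = m' := by simpa using h'
      exact ⟨hm, h1, h2⟩, fun R h' => by simp at h'⟩, hy, rfl⟩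
  · push Not at h
    let R : ℕ → G.X → Prop := fun n y => K + 2 ≤ n ∧ G.r (K+1) y x ∧ S n y
    have hR : LegR G A K S R := by
      refine ⟨?_, ?_, ?_, ?_, ?_⟩
      · rintro n y z hr ⟨h0, h1, h2⟩
        exact ⟨h0, G.trans (G.le (by omega) (G.symm hr)) h1, hS.sat _ _ _ hr h2⟩
      · rintro n y ⟨h0, h1, h2⟩
        exact ⟨h2, h y n h1 h0 h2⟩
      · rintro n y hn ⟨h0, h1, h2⟩
        exact ⟨hn, h1, hS.dn _ _ (by omega) h2⟩
      · rintro n y hn _ ⟨h0, h1, h2⟩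
        obtain ⟨z, hz, hz'⟩ := hS.ex (by omega) h2
        exact ⟨z, hz, by omega, G.trans (G.le (by omega) hz) h1, hz'⟩
      · rintro n y z hn _ ⟨h0, h1, h2⟩ hz hz'
        exact ⟨by omega, G.trans (G.le (by omega) hz) h1, hz'⟩
    obtain ⟨z, hz, hz'⟩ := hS.ex le_rfl hS.base
    obtain ⟨w, hw, hw'⟩ := hR.run hS (n := K+2) le_rfl (y := z) ⟨le_rfl, hz, hz'⟩
    have hwx : G.r (K+1) w x := G.trans (G.down hw) hz
    exact ⟨⟨w, S, Sum.inr R, hS.congr (G.symm hwx), fun m' h' => by simp at h', fun R' h' => by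
      obtain rfl : R = R' := by simpa using h'
      exact ⟨hR, hw'⟩⟩, hwx, rfl⟩

theorem legS_true (x : G.X) : LegS G K (fun _ _ => True) x :=
  ⟨fun _ _ _ _ _ => trivial, trivial, fun _ _ _ _ => trivial, fun _ _ _ _ _ _ _ => trivial,
    fun _ y _ _ _ => ⟨y, G.refl _ _, trivial⟩⟩

variable (G A K)

def HG : Gm where
  X := HX G A K
  r n a b := G.r n a.x b.x ∧ (K + 1 ≤ n → a.S = b.S) ∧
    (K + 2 ≤ n → a.o = b.o ∧ ∀ m, a.o = Sum.inl m → G.r m a.x b.x)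
  refl n a := ⟨G.refl _ _, fun _ => rfl, fun _ => ⟨rfl, fun _ _ => G.refl _ _⟩⟩
  symm h := ⟨G.symm h.1, fun hn => (h.2.1 hn).symm, fun hn => ⟨(h.2.2 hn).1.symm,
    fun m hm => G.symm ((h.2.2 hn).2 m ((h.2.2 hn).1.trans hm))⟩⟩
  trans h h' := ⟨G.trans h.1 h'.1, fun hn => (h.2.1 hn).trans (h'.2.1 hn), fun hn =>
    ⟨(h.2.2 hn).1.trans (h'.2.2 hn).1, fun m hm => G.trans ((h.2.2 hn).2 m hm)
      ((h'.2.2 hn).2 m ((h.2.2 hn).1 ▸ hm))⟩⟩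
  down h := ⟨G.down h.1, fun hn => h.2.1 (by omega), fun hn => h.2.2 (by omega)⟩
  zero a b := ⟨G.zero _ _, fun h => by omega, fun h => by omega⟩
  sep {a b} h := by
    have h1 := G.sep fun n => (h n).1
    have h2 := (h (K+1)).2.1 le_rfl
    have h3 := ((h (K+2)).2.2 le_rfl).1
    cases a; cases b; simp_all
  comp s hs := by
    obtain ⟨x, hx⟩ := G.comp (fun n => (s n).x) (fun n => (hs n).1)
    have hS : ∀ n, K + 1 ≤ n → (s n).S = (s (K+1)).S := by
      intro n hn
      induction n, hn using Nat.le_induction with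
      | base => rfl
      | succ n hn ih => rw [← (hs n).2.1 hn, ih]
    have ho : ∀ n, K + 2 ≤ n → (s n).o = (s (K+2)).o := by
      intro n hn
      induction n, hn using Nat.le_induction with
      | base => rfl
      | succ n hn ih => rw [← ((hs n).2.2 hn).1, ih]
    have hm : ∀ m n l, (s (K+2)).o = Sum.inl m → K + 2 ≤ n → n ≤ l → G.r m (s n).x (s l).x := by
      intro m n l h hn hl
      induction l, hl using Nat.le_induction with
      | base => exact G.refl _ _
      | succ l hl ih =>
        exact G.trans ih (((hs l).2.2 (by omega)).2 m ((ho l (by omega)).trans h))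
    have hm' : ∀ m n, (s (K+2)).o = Sum.inl m → K + 2 ≤ n → G.r m x (s n).x := by
      intro m n h hn
      exact G.trans (G.le (by omega) (hx (n+m))) (G.symm (hm m n (n+m) h hn (by omega)))
    have hLS : LegS G K (s (K+1)).S x := (s (K+1)).legS.congr (G.symm (hx _))
    refine ⟨⟨x, (s (K+1)).S, (s (K+2)).o, hLS, ?_, ?_⟩, ?_⟩
    · intro m h
      obtain ⟨h1, h2, h3⟩ := (s (K+2)).legl m h
      have h4 := hm' m (K+2) h le_rfl
      rw [hS (K+2) (by omega)] at h2
      exact ⟨h1, hLS.sat _ _ _ (G.symm h4) h2, fun h5 => h3 (h5.sat h4)⟩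
    · intro R h
      obtain ⟨h1, h2⟩ := (s (K+2)).legr R h
      rw [hS (K+2) (by omega)] at h1
      refine ⟨h1, fun n hn => ?_⟩
      obtain ⟨h3, h4⟩ := (s n).legr R ((ho n hn).trans h)
      exact h1.sat _ _ _ (G.symm (hx n)) (h4 n hn)
    · intro n
      exact ⟨hx n, fun hn => (hS n hn).symm, fun hn => ⟨(ho n hn).symm, fun m h => hm' m n h hn⟩⟩
  ne := by
    obtain ⟨x⟩ := G.ne
    obtain ⟨a, _⟩ := HX.exists_of_S (A := A) (K := K) (legS_true x)
    exact ⟨a⟩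

variable {G A K}

theorem HG.decided (hA : ∀ x, x ∉ A → ∃ n, ∀ y, G.r n y x → y ∉ A) (a b : HX G A K)
    (h : (HG G A K).r (K+2) a b) : a.x ∈ A ↔ b.x ∈ A := by
  have key : ∀ a : HX G A K, a.x ∈ A ↔ ∃ R, a.o = Sum.inr R := by
    intro a
    rcases ho : a.o with m | R
    · simp only [reduceCtorEq, exists_false, iff_false]
      exact fun h => (a.legl m ho).2.2 ⟨a.x, h, G.refl _ _⟩
    · simp only [Sum.inr.injEq, exists_eq', iff_true]
      by_contra hx
      obtain ⟨n, hn⟩ := hA _ hx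
      obtain ⟨y, hy, hr⟩ := ((a.legr R ho).1.sub _ _ ((a.legr R ho).2 (n + (K+2)) (by omega))).2
      exact hn y (G.le (by omega) hr) hy
  rw [key, key, (h.2.2 le_rfl).1]

open Classical in
noncomputable def fol0 (σ : Strat (HG G A K)) (n : ℕ) (x : G.X) : G.X :=
  if h : ∃ a : HX G A K, G.r n a.x x then (σ.f n h.choose : HX G A K).x else x

open Classical in
noncomputable def fol (S : ℕ → G.X → Prop) (o : ℕ ⊕ (ℕ → G.X → Prop)) (σ : Strat (HG G A K))
    (n : ℕ) (x : G.X) : G.X :=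
  if h : ∃ a : HX G A K, G.r n a.x x ∧ a.S = S ∧ a.o = o then (σ.f n h.choose : HX G A K).x else x

theorem fol0_ext (σ : Strat (HG G A K)) (n : ℕ) (x : G.X) : G.r n (fol0 σ n x) x := by
  unfold fol0
  split_ifs with h
  · exact G.trans (σ.ext n _).1 h.choose_spec
  · exact G.refl _ _

theorem fol_ext (S : ℕ → G.X → Prop) (o : ℕ ⊕ (ℕ → G.X → Prop)) (σ : Strat (HG G A K))
    (n : ℕ) (x : G.X) : G.r n (fol S o σ n x) x := by
  unfold fol
  split_ifs with h
  · exact G.trans (σ.ext n _).1 h.choose_spec.1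
  · exact G.refl _ _

theorem fol0_spec (σ : Strat (HG G A K)) {n : ℕ} (hn : n ≤ K) {x : G.X} (a : HX G A K)
    (ha : G.r n a.x x) : G.r (n+1) (fol0 σ n x) (σ.f n a : HX G A K).x := by
  have h : ∃ a : HX G A K, G.r n a.x x := ⟨a, ha⟩
  unfold fol0
  rw [dif_pos h]
  exact (σ.resp ⟨G.trans h.choose_spec (G.symm ha), fun h => by omega, fun h => by omega⟩).1

theorem fol_spec (S : ℕ → G.X → Prop) (o : ℕ ⊕ (ℕ → G.X → Prop)) (σ : Strat (HG G A K))
    {n : ℕ} {x : G.X} (a : HX G A K) (ha : G.r n a.x x) (haS : a.S = S) (hao : a.o = o)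
    (hm : ∀ m, o = Sum.inl m → m ≤ n) :
    G.r (n+1) (fol S o σ n x) (σ.f n a : HX G A K).x := by
  have h : ∃ a : HX G A K, G.r n a.x x ∧ a.S = S ∧ a.o = o := ⟨a, ha, haS, hao⟩
  unfold fol
  rw [dif_pos h]
  obtain ⟨h1, h2, h3⟩ := h.choose_spec
  have h4 := G.trans h1 (G.symm ha)
  exact (σ.resp ⟨h4, fun _ => h2.trans haS.symm, fun _ => ⟨h3.trans hao.symm, fun m hm' =>
    G.le (hm m (h3.symm.trans hm')) h4⟩⟩).1

theorem fol0_loc (σ τ : Strat (HG G A K)) {n m : ℕ} (h : Agree n σ τ) (hm : m < n) (x : G.X) :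
    G.r (m+1) (fol0 σ m x) (fol0 τ m x) := by
  unfold fol0
  split_ifs with h'
  · exact (h m hm _).1
  · exact G.refl _ _

theorem fol_loc (S : ℕ → G.X → Prop) (o : ℕ ⊕ (ℕ → G.X → Prop)) (σ τ : Strat (HG G A K)) {n m : ℕ}
    (h : Agree n σ τ) (hm : m < n) (x : G.X) : G.r (m+1) (fol S o σ m x) (fol S o τ m x) := by
  unfold fol
  split_ifs with h'
  · exact (h m hm _).1
  · exact G.refl _ _

end Unravel

section Modes

variable {G : Gm}

open Classical in
noncomputable def om (b : ℕ) (W : ℕ → G.X → Prop) (j : ℕ) (x : G.X) : Strat G :=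
  if h : ∃ ω : Strat G, ∀ y, G.r j y x → (∀ m, j ≤ m → m % 2 = b → G.r (m+1) y (ω.f m y)) →
      ∃ i, j ≤ i ∧ W i y then h.choose else Classical.choice inferInstance

theorem om_spec {b : ℕ} {W : ℕ → G.X → Prop} (hW : ∀ {n x y}, G.r n x y → W n x → W n y)
    {j : ℕ} {x : G.X} (h : Win b W j x) : ∀ y, G.r j y x →
      (∀ m, j ≤ m → m % 2 = b → G.r (m+1) y ((om b W j x).f m y)) → ∃ i, j ≤ i ∧ W i y := by
  have h' := h.strat hW
  unfold om
  rw [dif_pos h']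
  exact h'.choose_spec

open Classical in
noncomputable def mode (b : ℕ) (W : ℕ → G.X → Prop) (N n : ℕ) (x : G.X) (a : ℕ → G.X) (c : G.X) :
    G.X :=
  if h : ∃ i, i ≤ n ∧ W i x then a (Nat.find h)
  else if h : ∃ j, N ≤ j ∧ j ≤ n ∧ Win b W j x then (om b W (Nat.find h) (G.rep (Nat.find h) x)).f n x
  else c

theorem mode_loc {b : ℕ} {W : ℕ → G.X → Prop} {N n : ℕ} {x : G.X} {a a' : ℕ → G.X} {c c' : G.X}
    (ha : ∀ i, G.r (n+1) (a i) (a' i)) (hc : G.r (n+1) c c') :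
    G.r (n+1) (mode b W N n x a c) (mode b W N n x a' c') := by
  unfold mode
  split_ifs
  · exact ha _
  · exact G.refl _ _
  · exact hc

theorem mode_hit {b : ℕ} {W : ℕ → G.X → Prop} (hW : ∀ {n x y}, G.r n x y → W n x → W n y)
    {N n i : ℕ} {x y : G.X} (hxy : G.r n x y)
    (hi : i ≤ n) (hy : W i y) (hl : ∀ i' < i, ¬ W i' y) (a : ℕ → G.X) (c : G.X) :
    mode b W N n x a c = a i := by
  classical
  have h : ∃ i, i ≤ n ∧ W i x := ⟨i, hi, hW (G.symm (G.le hi hxy)) hy⟩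
  unfold mode
  rw [dif_pos h]
  congr 1
  rw [Nat.find_eq_iff]
  exact ⟨⟨hi, hW (G.symm (G.le hi hxy)) hy⟩, fun i' hi' h' => hl i' hi' (hW (G.le h'.1 hxy) h'.2)⟩

theorem mode_win {b : ℕ} {W : ℕ → G.X → Prop} (hW : ∀ {n x y}, G.r n x y → W n x → W n y)
    {N n j : ℕ} {x y : G.X} (hxy : G.r n x y)
    (hn : ∀ i, ¬ W i y) (hj : j ≤ n) (hNj : N ≤ j)
    (hy : Win b W j y) (hl : ∀ j' < j, N ≤ j' → ¬ Win b W j' y) (a : ℕ → G.X) (c : G.X) :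
    mode b W N n x a c = (om b W j (G.rep j y)).f n x := by
  classical
  have h : ¬ ∃ i, i ≤ n ∧ W i x := by
    rintro ⟨i, hi, h⟩
    exact hn i (hW (G.le hi hxy) h)
  have hx : Win b W j x := hy.sat hW (G.symm (G.le hj hxy))
  have h' : ∃ j, N ≤ j ∧ j ≤ n ∧ Win b W j x := ⟨j, hNj, hj, hx⟩
  have : Nat.find h' = j := by
    rw [Nat.find_eq_iff]
    refine ⟨⟨hNj, hj, hx⟩, fun j' hj' h => hl j' hj' h.1 (h.2.2.sat hW (G.le h.2.1 hxy))⟩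
  unfold mode
  rw [dif_neg h, dif_pos h', this, G.rep_eq (G.le hj hxy)]

theorem mode_none {b : ℕ} {W : ℕ → G.X → Prop} (hW : ∀ {n x y}, G.r n x y → W n x → W n y)
    {N n : ℕ} {x y : G.X} (hxy : G.r n x y)
    (hN : ∀ i x, W i x → N ≤ i)
    (hl : ∀ j, N ≤ j → ¬ Win b W j y) (a : ℕ → G.X) (c : G.X) :
    mode b W N n x a c = c := by
  have h : ¬ ∃ i, i ≤ n ∧ W i x := by
    rintro ⟨i, hi, h⟩
    exact hl i (hN _ _ h) (.base (hW (G.le hi hxy) h))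
  have h' : ¬ ∃ j, N ≤ j ∧ j ≤ n ∧ Win b W j x := by
    rintro ⟨j, h1, h2, h3⟩
    exact hl j h1 (h3.sat hW (G.le h2 hxy))
  unfold mode
  rw [dif_neg h, dif_neg h']

open Classical in
noncomputable def Strat.og (g : ℕ → G.X → G.X) : Strat G :=
  Strat.of G (fun n x => if G.r n (g n x) x then g n x else x) (fun n x => by
    split_ifs with h
    · exact h
    · exact G.refl _ _)

theorem og_spec (g : ℕ → G.X → G.X) (n : ℕ) (x : G.X) (h : G.r n (g n (G.rep n x)) x) :
    (Strat.og g).f n x = g n (G.rep n x) := by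
  have : G.r n (g n (G.rep n x)) (G.rep n x) := G.trans h (G.symm (G.rep_r n x))
  simp only [Strat.og, Strat.of, this, if_true]

theorem og_loc (g g' : ℕ → G.X → G.X) (n : ℕ) (h : ∀ x, G.r (n+1) (g n x) (g' n x)) (x : G.X) :
    G.r (n+1) ((Strat.og g).f n x) ((Strat.og g').f n x) := by
  have h' := h (G.rep n x)
  simp only [Strat.og, Strat.of]
  by_cases h1 : G.r n (g n (G.rep n x)) (G.rep n x)
  · have h2 : G.r n (g' n (G.rep n x)) (G.rep n x) := G.trans (G.symm (G.down h')) h1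
    simp only [h1, h2, if_true]; exact h'
  · have h2 : ¬ G.r n (g' n (G.rep n x)) (G.rep n x) := fun h2 => h1 (G.trans (G.down h') h2)
    simp only [h1, h2, if_false]; exact G.refl _ _

/-- No play following the mode strategy can be in the winning region without hitting. -/
theorem mode_contra {b : ℕ} {W : ℕ → G.X → Prop} (hW : ∀ {n x y}, G.r n x y → W n x → W n y)
    {N : ℕ} {x : G.X} (hn : ∀ i, ¬ W i x) (g : ℕ → G.X → G.X) (a : ℕ → ℕ → G.X) (c : ℕ → G.X)
    (hg : ∀ n, N ≤ n → n % 2 = b → g n (G.rep n x) = mode b W N n (G.rep n x) (a n) (c n))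
    (hx : Cons b (Strat.og g) x) : ∀ j, N ≤ j → ¬ Win b W j x := by
  classical
  intro j hj hw
  have hex : ∃ j, N ≤ j ∧ Win b W j x := ⟨j, hj, hw⟩
  obtain ⟨h1, h2⟩ := Nat.find_spec hex
  have h3 : ∀ j' < Nat.find hex, N ≤ j' → ¬ Win b W j' x := fun j' hj' h h' =>
    Nat.find_min hex hj' ⟨h, h'⟩
  set j := Nat.find hex
  obtain ⟨i, _, hi⟩ := om_spec hW (h2.sat hW (G.symm (G.rep_r j x))) x (G.symm (G.rep_r j x)) (by
    intro m hm hmb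
    have h4 := hx m hmb
    have h5 : g m (G.rep m x) = _ := (hg m (by omega) hmb).trans
      (mode_win hW (G.rep_r m x) hn hm h1 h2 h3 _ _)
    have h6 := (om b W j (G.rep j x)).ext m (G.rep m x)
    rw [og_spec g m x (by rw [h5]; exact G.trans h6 (G.rep_r m x)), h5] at h4
    exact G.trans h4 ((om b W j (G.rep j x)).resp (G.rep_r m x)))
  exact hn i hi

end Modes

section Unravel2

variable {G : Gm} {A : Set G.X} {K : ℕ}

theorem cons_step (σ : Strat (HG G A K)) (a : HX G A K) {n : ℕ} (h1 : n ≠ K) (h2 : n ≠ K + 1)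
    (h : G.r (n+1) a.x (σ.f n a : HX G A K).x) : (HG G A K).r (n+1) a (σ.f n a) := by
  have h3 := (HG G A K).symm (σ.ext n a)
  exact ⟨h, fun h => h3.2.1 (by omega), fun h => h3.2.2 (by omega)⟩

theorem HX.exists_lift (x : G.X) : ∃ a : HX G A K, G.r (K+1) a.x x := by
  obtain ⟨a, h, _⟩ := HX.exists_of_S (A := A) (K := K) (legS_true x)
  exact ⟨a, h⟩

/-! Player I -/

variable (A K) in
noncomputable def lft (x : G.X) : HX G A K := (HX.exists_lift (A := A) (K := K) x).choose

theorem lft_spec (x : G.X) : G.r (K+1) (lft A K x).x x :=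
  (HX.exists_lift (A := A) (K := K) x).choose_spec

noncomputable def coreI (σ : Strat (HG G A K)) (x : G.X) : HX G A K :=
  σ.f K (lft A K (G.rep K x))

variable (A K) in
def WI (S : ℕ → G.X → Prop) (i : ℕ) (x : G.X) : Prop := K + 2 ≤ i ∧ S i x ∧ ¬ TA G A i x

variable (A K) in
def RI (S : ℕ → G.X → Prop) (x : G.X) (n : ℕ) (y : G.X) : Prop :=
  K + 2 ≤ n ∧ G.r (K+2) y x ∧ S n y ∧ ∀ n', K + 2 ≤ n' → n' ≤ n → ¬ Win 0 (WI A K S) n' y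

open Classical in
noncomputable def gI (σ : Strat (HG G A K)) (n : ℕ) (x : G.X) : G.X :=
  if n ≤ K then fol0 σ n x else
    mode 0 (WI A K (coreI σ x).S) (K+2) n x (fun i => fol (coreI σ x).S (Sum.inl i) σ n x)
      (fol (coreI σ x).S (Sum.inr (RI A K (coreI σ x).S (G.rep (K+2) x))) σ n x)

theorem coreI_rep (σ : Strat (HG G A K)) {n : ℕ} (hn : K ≤ n) (x : G.X) :
    coreI σ (G.rep n x) = coreI σ x := by
  unfold coreI; rw [G.rep_rep hn]

theorem gI_loc (σ τ : Strat (HG G A K)) {n m : ℕ} (h : Agree n σ τ) (hm : m < n) (x : G.X) :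
    G.r (m+1) (gI σ m x) (gI τ m x) := by
  unfold gI
  split_ifs with hK
  · exact fol0_loc σ τ h hm x
  · have hS : (coreI σ x).S = (coreI τ x).S := (h K (by omega) _).2.1 le_rfl
    rw [← hS]
    exact mode_loc (fun i => fol_loc _ _ σ τ h hm x) (fol_loc _ _ σ τ h hm x)

theorem WI_sat {S : ℕ → G.X → Prop} (hS : ∀ n y z, G.r n y z → S n y → S n z) {n : ℕ} {x y : G.X}
    (hr : G.r n x y) (h : WI A K S n x) : WI A K S n y :=
  ⟨h.1, hS _ _ _ hr h.2.1, fun h' => h.2.2 (h'.sat (G.symm hr))⟩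

theorem RI_leg {S : ℕ → G.X → Prop} {x : G.X} (hS : LegS G K S x) (y : G.X) :
    LegR G A K S (RI A K S y) := by
  have hW : ∀ {n x y}, G.r n x y → WI A K S n x → WI A K S n y := WI_sat hS.sat
  refine ⟨?_, ?_, ?_, ?_, ?_⟩
  · rintro n u v hr ⟨h1, h2, h3, h4⟩
    exact ⟨h1, G.trans (G.symm (G.le h1 hr)) h2, hS.sat _ _ _ hr h3, fun n' hn' hl hw =>
      h4 n' hn' hl (hw.sat hW (G.symm (G.le hl hr)))⟩
  · rintro n u ⟨h1, h2, h3, h4⟩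
    refine ⟨h3, ?_⟩
    by_contra h
    exact h4 n h1 le_rfl (.base ⟨h1, h3, h⟩)
  · rintro n u hn ⟨h1, h2, h3, h4⟩
    exact ⟨hn, h2, hS.dn _ _ (by omega) h3, fun n' hn' hl => h4 n' hn' (by omega)⟩
  · rintro n u hn hodd ⟨h1, h2, h3, h4⟩
    have : ∃ z, G.r n z u ∧ ¬ Win 0 (WI A K S) (n+1) z := by
      by_contra hcon
      push Not at hcon
      exact h4 n hn le_rfl (.opp (by omega) hcon)
    obtain ⟨z, hz, hz'⟩ := this
    refine ⟨z, hz, by omega, G.trans (G.le hn hz) h2, hS.odd n u z (by omega) hodd h3 hz, ?_⟩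
    intro n' hn' hl
    rcases Nat.lt_or_ge n n' with h | h
    · obtain rfl : n' = n + 1 := by omega
      exact hz'
    · exact fun hw => h4 n' hn' h (hw.sat hW (G.le h hz))
  · rintro n u z hn hev ⟨h1, h2, h3, h4⟩ hz hSz
    refine ⟨by omega, G.trans (G.le hn hz) h2, hSz, ?_⟩
    intro n' hn' hl
    rcases Nat.lt_or_ge n n' with h | h
    · obtain rfl : n' = n + 1 := by omega
      exact fun hw => h4 n hn le_rfl (.mine hev hz hw)
    · exact fun hw => h4 n' hn' h (hw.sat hW (G.le h hz))

theorem fol0_og (g : ℕ → G.X → G.X) (σ : Strat (HG G A K)) {n : ℕ} (hn : n ≤ K) (x : G.X)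
    (hg : g n (G.rep n x) = fol0 σ n (G.rep n x)) (a : HX G A K) (ha : G.r n a.x x) :
    G.r (n+1) ((Strat.og g).f n x) (σ.f n a : HX G A K).x := by
  rw [og_spec g n x (by rw [hg]; exact G.trans (fol0_ext σ n _) (G.rep_r n x)), hg]
  exact fol0_spec σ hn a (G.trans ha (G.symm (G.rep_r n x)))

theorem fol_og (g : ℕ → G.X → G.X) (σ : Strat (HG G A K)) {n : ℕ} (x : G.X)
    (a : HX G A K) (ha : G.r n a.x x) (hg : g n (G.rep n x) = fol a.S a.o σ n (G.rep n x))
    (hm : ∀ m, a.o = Sum.inl m → m ≤ n) :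
    G.r (n+1) ((Strat.og g).f n x) (σ.f n a : HX G A K).x := by
  rw [og_spec g n x (by rw [hg]; exact G.trans (fol_ext _ _ σ n _) (G.rep_r n x)), hg]
  exact fol_spec _ _ σ a (G.trans ha (G.symm (G.rep_r n x))) rfl rfl hm

theorem liftI (hK : K % 2 = 0) (σ : Strat (HG G A K)) (x : G.X) (hx : Cons 0 (Strat.og (gI σ)) x) :
    ∃ a : HX G A K, a.x = x ∧ Cons (G := HG G A K) 0 σ a := by
  classical
  set S := (coreI σ x).S with hSd
  have hlow : ∀ n, n ≤ K → n % 2 = 0 → ∀ a : HX G A K, G.r n a.x x →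
      G.r (n+1) x (σ.f n a : HX G A K).x := by
    intro n hn h2 a ha
    exact G.trans (hx n h2) (fol0_og (gI σ) σ hn x (by simp [gI, hn]) a ha)
  have hcore : ∀ a : HX G A K, a.x = x → (σ.f K a : HX G A K).S = S := by
    intro a ha
    have h := lft_spec (A := A) (K := K) (G.rep K x)
    refine (σ.resp (n := K) (x := a) (y := lft A K (G.rep K x))
      ⟨?_, fun h => by omega, fun h => by omega⟩).2.1 le_rfl
    rw [ha]
    exact G.symm (G.trans (G.down h) (G.rep_r K x))
  have hLS : LegS G K S x := by
    refine (coreI σ x).legS.congr (G.symm (hlow K le_rfl hK _ ?_))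
    have h := lft_spec (A := A) (K := K) (G.rep K x)
    exact G.trans (G.down h) (G.rep_r K x)
  have hW : ∀ {n x y}, G.r n x y → WI A K S n x → WI A K S n y := WI_sat hLS.sat
  have hgI : ∀ n, K + 2 ≤ n → gI σ n (G.rep n x) = mode 0 (WI A K S) (K+2) n (G.rep n x)
      (fun i => fol S (Sum.inl i) σ n (G.rep n x))
      (fol S (Sum.inr (RI A K S (G.rep (K+2) x))) σ n (G.rep n x)) := by
    intro n hn
    unfold gI
    rw [if_neg (by omega), coreI_rep σ (by omega), G.rep_rep hn]
  have fin : ∀ a : HX G A K, a.x = x → a.S = S → (∀ n, K + 2 ≤ n → n % 2 = 0 →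
      G.r (n+1) x (σ.f n a : HX G A K).x) → Cons (G := HG G A K) 0 σ a := by
    intro a hax haS h n hn
    rcases lt_trichotomy n K with h1 | h1 | h1
    · exact cons_step σ a (by omega) (by omega) (by rw [hax]; exact hlow n h1.le hn a (by rw [hax]; exact G.refl _ _))
    · subst h1
      refine ⟨by rw [hax]; exact hlow n le_rfl hn a (by rw [hax]; exact G.refl _ _), fun _ => ?_, fun h => by omega⟩
      rw [haS, hcore a hax]
    · exact cons_step σ a (by omega) (by omega) (by rw [hax]; exact h n (by omega) hn)
  by_cases hhit : ∃ i, WI A K S i x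
  · have h1 := Nat.find_spec hhit
    have h2 : ∀ i' < Nat.find hhit, ¬ WI A K S i' x := fun i' h => Nat.find_min hhit h
    set i := Nat.find hhit
    let a : HX G A K := ⟨x, S, Sum.inl i, hLS, fun m h => by
      obtain rfl : i = m := by simpa using h
      exact h1, fun R h => by simp at h⟩
    refine ⟨a, rfl, fin a rfl rfl fun n hn hn2 => ?_⟩
    rcases Nat.lt_or_ge n i with h3 | h3
    · exact G.le (by omega) (((HG G A K).symm (σ.ext n a)).2.2 hn |>.2 i rfl)
    · refine G.trans (hx n hn2) (fol_og (gI σ) σ x a (G.refl _ _) ?_ ?_)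
      · rw [hgI n hn, mode_hit hW (G.rep_r n x) h3 h1 h2]
      · intro m hm
        obtain rfl : i = m := by simpa [a] using hm
        exact h3
  · push Not at hhit
    have hnw : ∀ j, K + 2 ≤ j → ¬ Win 0 (WI A K S) j x :=
      mode_contra hW hhit (gI σ) _ _ (fun n hn _ => hgI n hn) hx
    set R := RI A K S (G.rep (K+2) x) with hR
    have hLR : LegR G A K S R := RI_leg hLS _
    have hmk : ∀ u : G.X, LegS G K S u → (∀ n, K + 2 ≤ n → R n u) →
        ∃ a : HX G A K, a.x = u ∧ a.S = S ∧ a.o = Sum.inr R := by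
      intro u hu hRu
      exact ⟨⟨u, S, Sum.inr R, hu, fun m h => by simp at h, fun R' h => by
        obtain rfl : R = R' := by simpa using h
        exact ⟨hLR, hRu⟩⟩, rfl, rfl, rfl⟩
    have hfol : ∀ n, K + 2 ≤ n → n % 2 = 0 → ∀ a : HX G A K, G.r n a.x x → a.S = S → a.o = Sum.inr R →
        G.r (n+1) x (σ.f n a : HX G A K).x := by
      intro n hn hn2 a ha haS hao
      refine G.trans (hx n hn2) (fol_og (gI σ) σ x a ha ?_ ?_)
      · rw [hgI n hn, mode_none hW (G.rep_r n x) (fun i x h => h.1) hnw, haS, hao]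
      · intro m hm; rw [hao] at hm; simp at hm
    have hRx : ∀ n, K + 2 ≤ n → R n x := by
      intro n hn
      induction n, hn using Nat.le_induction with
      | base =>
        exact ⟨le_rfl, G.symm (G.rep_r _ _), hLS.odd (K+1) x x le_rfl (by omega) hLS.base (G.refl _ _),
          fun n' h _ => hnw n' h⟩
      | succ n hn ih =>
        rcases Nat.mod_two_eq_zero_or_one n with h2 | h2
        · obtain ⟨z, hz, hz'⟩ := hLR.run hLS hn ih
          obtain ⟨a, ha, haS, hao⟩ := hmk z (hLS.congr (G.le (by omega) (G.symm hz))) hz'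
          have h3 := hfol n hn h2 a (by rw [ha]; exact hz) haS hao
          have h4 := ((σ.ext n a).2.2 hn).1
          have h5 := ((σ.f n a : HX G A K).legr R (h4.trans hao)).2 (n+1) (by omega)
          exact hLR.sat _ _ _ (G.symm h3) h5
        · exact ⟨by omega, ih.2.1, hLS.odd n x x (by omega) h2 ih.2.2.1 (G.refl _ _), fun n' h _ => hnw n' h⟩
    obtain ⟨a, ha, haS, hao⟩ := hmk x hLS hRx
    exact ⟨a, ha, fin a ha haS fun n hn hn2 => hfol n hn hn2 a (by rw [ha]; exact G.refl _ _) haS hao⟩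

end Unravel2

section Unravel3

variable {G : Gm} {A : Set G.X} {K : ℕ}

/-! Player II -/

def VII (σ : Strat (HG G A K)) (x : G.X) (m : ℕ) (u : G.X) (S : ℕ → G.X → Prop) : Prop :=
  K + 2 ≤ m ∧ G.r (K+1) u x ∧ ∃ a : HX G A K, G.r (K+1) a.x x ∧ a.S = S ∧
    (σ.f (K+1) a : HX G A K).o = Sum.inl m ∧ G.r m (σ.f (K+1) a : HX G A K).x u

def UV (V : ℕ → G.X → (ℕ → G.X → Prop) → Prop) (m : ℕ) (u : G.X) : Prop := ∃ S, V m u S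

variable (K) in
def SII (V : ℕ → G.X → (ℕ → G.X → Prop) → Prop) (x : G.X) (n : ℕ) (y : G.X) : Prop :=
  K + 1 ≤ n ∧ G.r (K+1) y x ∧ ∀ n', K + 1 ≤ n' → n' ≤ n → ¬ Win 1 (UV V) n' y

variable (A K) in
open Classical in
noncomputable def pickS (S : ℕ → G.X → Prop) (x : G.X) : HX G A K :=
  if h : ∃ a : HX G A K, G.r (K+1) a.x x ∧ a.S = S then h.choose else lft A K x

noncomputable def coreII (σ : Strat (HG G A K)) (S : ℕ → G.X → Prop) (x : G.X) : HX G A K :=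
  σ.f (K+1) (pickS A K S x)

open Classical in
noncomputable def wit (V : ℕ → G.X → (ℕ → G.X → Prop) → Prop) (i : ℕ) (x : G.X) : ℕ → G.X → Prop :=
  if h : UV V i x then h.choose else fun _ _ => True

open Classical in
noncomputable def gII (σ : Strat (HG G A K)) (n : ℕ) (x : G.X) : G.X :=
  if n ≤ K then fol0 σ n x else
    mode 1 (UV (VII σ (G.rep (K+1) x))) (K+1) n x
      (fun i => fol (wit (VII σ (G.rep (K+1) x)) i (G.rep i x)) (Sum.inl i) σ n x)
      (if n = K + 1 then (coreII σ (SII K (VII σ (G.rep (K+1) x)) (G.rep (K+1) x)) (G.rep (K+1) x)).x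
        else fol (SII K (VII σ (G.rep (K+1) x)) (G.rep (K+1) x))
          (coreII σ (SII K (VII σ (G.rep (K+1) x)) (G.rep (K+1) x)) (G.rep (K+1) x)).o σ n x)

theorem VII_sat (σ : Strat (HG G A K)) (x : G.X) {m : ℕ} {u v : G.X} (hr : G.r m u v)
    {S : ℕ → G.X → Prop} (h : VII σ x m u S) : VII σ x m v S := by
  obtain ⟨h1, h2, a, h3, h4, h5, h6⟩ := h
  exact ⟨h1, G.trans (G.symm (G.le (by omega) hr)) h2, a, h3, h4, h5, G.trans h6 hr⟩

theorem VII_loc (σ τ : Strat (HG G A K)) {n : ℕ} (h : Agree n σ τ) (hn : K + 1 < n) (x : G.X) :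
    VII σ x = VII τ x := by
  have key : ∀ σ τ : Strat (HG G A K), Agree n σ τ → ∀ m u S, VII σ x m u S → VII τ x m u S := by
    rintro σ τ h m u S ⟨h1, h2, a, h3, h4, h5, h6⟩
    have h7 := h (K+1) hn a
    have h8 := h7.2.2 le_rfl
    exact ⟨h1, h2, a, h3, h4, h8.1.symm.trans h5, G.trans (G.symm (h8.2 m h5)) h6⟩
  funext m u S
  exact propext ⟨key σ τ h m u S, key τ σ h.symm m u S⟩

theorem coreII_loc (σ τ : Strat (HG G A K)) {n : ℕ} (h : Agree n σ τ) (hn : K + 1 < n)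
    (S : ℕ → G.X → Prop) (x : G.X) : (HG G A K).r (K+2) (coreII σ S x) (coreII τ S x) :=
  h (K+1) hn _

theorem gII_loc (σ τ : Strat (HG G A K)) {n m : ℕ} (h : Agree n σ τ) (hm : m < n) (x : G.X) :
    G.r (m+1) (gII σ m x) (gII τ m x) := by
  unfold gII
  by_cases hK : m ≤ K
  · rw [if_pos hK, if_pos hK]
    exact fol0_loc σ τ h hm x
  · rw [if_neg hK, if_neg hK, ← VII_loc σ τ h (by omega)]
    refine mode_loc (fun i => fol_loc _ _ σ τ h hm x) ?_
    have hc := coreII_loc σ τ h (by omega) (SII K (VII σ (G.rep (K+1) x)) (G.rep (K+1) x)) (G.rep (K+1) x)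
    split_ifs with h1
    · subst h1
      exact hc.1
    · rw [(hc.2.2 le_rfl).1]
      exact fol_loc _ _ σ τ h hm x

theorem SII_leg (hK : K % 2 = 0) {V : ℕ → G.X → (ℕ → G.X → Prop) → Prop}
    (hW : ∀ {n x y}, G.r n x y → UV V n x → UV V n y) {x : G.X} (y : G.X)
    (hy : G.r (K+1) x y) (hw : ¬ Win 1 (UV V) (K+1) x) : LegS G K (SII K V y) x := by
  refine ⟨?_, ?_, ?_, ?_, ?_⟩
  · rintro n u v hr ⟨h1, h2, h4⟩
    exact ⟨h1, G.trans (G.symm (G.le h1 hr)) h2, fun n' hn' hl hw =>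
      h4 n' hn' hl (hw.sat hW (G.symm (G.le hl hr)))⟩
  · refine ⟨le_rfl, hy, fun n' h1 h2 => ?_⟩
    obtain rfl : n' = K + 1 := by omega
    exact hw
  · rintro n u hn ⟨h1, h2, h4⟩
    exact ⟨hn, h2, fun n' hn' hl => h4 n' hn' (by omega)⟩
  · rintro n u z hn hodd ⟨h1, h2, h4⟩ hz
    refine ⟨by omega, G.trans (G.le hn hz) h2, ?_⟩
    intro n' hn' hl
    rcases Nat.lt_or_ge n n' with h | h
    · obtain rfl : n' = n + 1 := by omega
      exact fun hw => h4 n hn le_rfl (.mine hodd hz hw)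
    · exact fun hw => h4 n' hn' h (hw.sat hW (G.le h hz))
  · rintro n u hn hev ⟨h1, h2, h4⟩
    have : ∃ z, G.r n z u ∧ ¬ Win 1 (UV V) (n+1) z := by
      by_contra hcon
      push Not at hcon
      exact h4 n hn le_rfl (.opp (by omega) hcon)
    obtain ⟨z, hz, hz'⟩ := this
    refine ⟨z, hz, by omega, G.trans (G.le hn hz) h2, ?_⟩
    intro n' hn' hl
    rcases Nat.lt_or_ge n n' with h | h
    · obtain rfl : n' = n + 1 := by omega
      exact hz'
    · exact fun hw => h4 n' hn' h (hw.sat hW (G.le h hz))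

theorem liftII (hK : K % 2 = 0) (σ : Strat (HG G A K)) (x : G.X) (hx : Cons 1 (Strat.og (gII σ)) x) :
    ∃ a : HX G A K, a.x = x ∧ Cons (G := HG G A K) 1 σ a := by
  classical
  have hlow : ∀ n, n ≤ K → n % 2 = 1 → ∀ a : HX G A K, G.r n a.x x →
      G.r (n+1) x (σ.f n a : HX G A K).x := by
    intro n hn h2 a ha
    exact G.trans (hx n h2) (fol0_og (gII σ) σ hn x (by simp [gII, hn]) a ha)
  set x0 := G.rep (K+1) x with hx0
  have hx0r : G.r (K+1) x0 x := G.rep_r _ _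
  set V := VII σ x0 with hV
  set S := SII K V x0 with hSd
  have hW : ∀ {n x y}, G.r n x y → UV V n x → UV V n y := by
    rintro n u v hr ⟨S, h⟩
    exact ⟨S, VII_sat σ x0 hr h⟩
  have hgII : ∀ n, K + 1 ≤ n → gII σ n (G.rep n x) = mode 1 (UV V) (K+1) n (G.rep n x)
      (fun i => fol (wit V i (G.rep i (G.rep n x))) (Sum.inl i) σ n (G.rep n x))
      (if n = K + 1 then (coreII σ S x0).x else fol S (coreII σ S x0).o σ n (G.rep n x)) := by
    intro n hn
    unfold gII
    rw [if_neg (by omega), G.rep_rep hn]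
  have fin : ∀ a : HX G A K, a.x = x → (σ.f (K+1) a : HX G A K).o = a.o →
      (∀ m, a.o = Sum.inl m → G.r m x (σ.f (K+1) a : HX G A K).x) →
      (∀ n, K + 1 ≤ n → n % 2 = 1 → G.r (n+1) x (σ.f n a : HX G A K).x) →
      Cons (G := HG G A K) 1 σ a := by
    intro a hax h1 h2 h n hn
    rcases lt_trichotomy n (K+1) with h3 | h3 | h3
    · exact cons_step σ a (by omega) (by omega) (by rw [hax]; exact hlow n (by omega) hn a (by rw [hax]; exact G.refl _ _))
    · subst h3
      exact ⟨by rw [hax]; exact h _ le_rfl hn, fun _ => ((HG G A K).symm (σ.ext _ a)).2.1 le_rfl,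
        fun _ => ⟨h1.symm, fun m hm => by rw [hax]; exact h2 m hm⟩⟩
    · exact cons_step σ a (by omega) (by omega) (by rw [hax]; exact h n (by omega) hn)
  by_cases hhit : ∃ i, UV V i x
  · have h1 := Nat.find_spec hhit
    have h2 : ∀ i' < Nat.find hhit, ¬ UV V i' x := fun i' h => Nat.find_min hhit h
    set i := Nat.find hhit
    have h1' : UV V i (G.rep i x) := hW (G.symm (G.rep_r i x)) h1
    have hwit : V i (G.rep i x) (wit V i (G.rep i x)) := by
      unfold wit
      rw [dif_pos h1']
      exact h1'.choose_spec
    obtain ⟨hi, _, a0, ha0, ha0S, ha0o, ha0r⟩ := VII_sat σ x0 (G.rep_r i x) hwit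
    set S' := wit V i (G.rep i x) with hS'
    have hext := (σ.ext (K+1) a0).2.1 le_rfl
    obtain ⟨_, hl2, hl3⟩ := (σ.f (K+1) a0 : HX G A K).legl i ha0o
    have hLS' : LegS G K S' x := by
      rw [← ha0S]; exact a0.legS.congr (G.trans ha0 hx0r)
    let a : HX G A K := ⟨x, S', Sum.inl i, hLS', fun m h => by
      obtain rfl : i = m := by simpa using h
      refine ⟨hi, hLS'.sat _ _ _ ha0r ?_, fun h => hl3 (h.sat (G.symm ha0r))⟩
      rw [← ha0S, ← hext]; exact hl2, fun R h => by simp at h⟩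
    have haa0 : (HG G A K).r (K+1) a a0 :=
      ⟨G.symm (G.trans ha0 hx0r), fun _ => ha0S.symm, fun h => by omega⟩
    have hres := σ.resp haa0
    have hres2 := hres.2.2 le_rfl
    have hoa : (σ.f (K+1) a : HX G A K).o = Sum.inl i := hres2.1.trans ha0o
    have hra : G.r i x (σ.f (K+1) a : HX G A K).x :=
      G.symm (G.trans (hres2.2 i hoa) ha0r)
    refine ⟨a, rfl, fin a rfl hoa (fun m hm => ?_) fun n hn hn2 => ?_⟩
    · obtain rfl : i = m := by simpa [a] using hm
      exact hra
    · rcases Nat.lt_or_ge n i with h3 | h3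
      · rcases eq_or_lt_of_le hn with h4 | h4
        · subst h4; exact G.le (by omega) hra
        · exact G.le (by omega) (((HG G A K).symm (σ.ext n a)).2.2 h4 |>.2 i rfl)
      · refine G.trans (hx n hn2) (fol_og (gII σ) σ x a (G.refl _ _) ?_ ?_)
        · rw [hgII n hn, mode_hit hW (G.rep_r n x) h3 h1 h2, G.rep_rep h3]
        · intro m hm
          obtain rfl : i = m := by simpa [a] using hm
          exact h3
  · push Not at hhit
    have hnw : ∀ j, K + 1 ≤ j → ¬ Win 1 (UV V) j x :=
      mode_contra hW hhit (gII σ) _ _ (fun n hn _ => hgII n hn) hx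
    have hmn : ∀ n, K + 1 ≤ n → gII σ n (G.rep n x) = 
        if n = K + 1 then (coreII σ S x0).x else fol S (coreII σ S x0).o σ n (G.rep n x) := by
      intro n hn
      rw [hgII n hn]
      exact mode_none hW (G.rep_r n x) (fun i x h => by obtain ⟨_, h, _⟩ := h; omega) hnw _ _
    have hLS : LegS G K S x := SII_leg hK hW x0 (G.symm hx0r) (hnw _ le_rfl)
    have hex : ∃ a : HX G A K, G.r (K+1) a.x x0 ∧ a.S = S :=
      HX.exists_of_S (hLS.congr (G.symm hx0r))
    have hcore : coreII σ S x0 = σ.f (K+1) (pickS A K S x0) := rfl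
    have hc12 : G.r (K+1) (pickS A K S x0).x x0 ∧ (pickS A K S x0).S = S := by
      unfold pickS
      rw [dif_pos hex]
      exact hex.choose_spec
    obtain ⟨hc1, hc2⟩ := hc12
    set a0 := pickS A K S x0
    have hc3 := (σ.ext (K+1) a0)
    have hcx : G.r (K+2) x (coreII σ S x0).x := by
      have h1 := hmn (K+1) le_rfl
      rw [if_pos rfl] at h1
      have h2 := hx (K+1) (by omega)
      rw [og_spec _ _ _ (by
        rw [h1, hcore]
        exact G.trans hc3.1 (G.trans hc1 hx0r)), h1] at h2
      exact h2
    have hSc : (coreII σ S x0).S = S := by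
      rw [hcore, ← hc2]; exact hc3.2.1 le_rfl
    have hcS : ∀ a : HX G A K, a.x = x → a.S = S → (HG G A K).r (K+2) (σ.f (K+1) a) (coreII σ S x0) := by
      intro a hax haS
      rw [hcore]
      refine σ.resp ⟨?_, fun _ => haS.trans hc2.symm, fun h => by omega⟩
      rw [hax]; exact G.symm (G.trans hc1 hx0r)
    have ho : ∃ R, (coreII σ S x0).o = Sum.inr R := by
      rcases ho : (coreII σ S x0).o with m | R
      · exfalso
        obtain ⟨h1, h2, h3⟩ := (coreII σ S x0).legl m ho
        rw [hSc] at h2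
        refine h2.2.2 m (by omega) le_rfl (.base ⟨S, h1, h2.2.1, a0, hc1, hc2, ?_, ?_⟩)
        · rw [← hcore, ho]
        · rw [← hcore]; exact G.refl _ _
      · exact ⟨R, rfl⟩
    obtain ⟨R, hR⟩ := ho
    obtain ⟨hLR, hRc⟩ := (coreII σ S x0).legr R hR
    rw [hSc] at hLR
    have hmk : ∀ u : G.X, LegS G K S u → (∀ n, K + 2 ≤ n → R n u) →
        ∃ a : HX G A K, a.x = u ∧ a.S = S ∧ a.o = Sum.inr R := by
      intro u hu hRu
      exact ⟨⟨u, S, Sum.inr R, hu, fun m h => by simp at h, fun R' h => by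
        obtain rfl : R = R' := by simpa using h
        exact ⟨hLR, hRu⟩⟩, rfl, rfl, rfl⟩
    have hfol : ∀ n, K + 2 ≤ n → n % 2 = 1 → ∀ a : HX G A K, G.r n a.x x → a.S = S → a.o = Sum.inr R →
        G.r (n+1) x (σ.f n a : HX G A K).x := by
      intro n hn hn2 a ha haS hao
      refine G.trans (hx n hn2) (fol_og (gII σ) σ x a ha ?_ ?_)
      · rw [hmn n (by omega), if_neg (by omega), haS, hao, hR]
      · intro m hm; rw [hao] at hm; simp at hm
    have hRx : ∀ n, K + 2 ≤ n → R n x := by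
      intro n hn
      induction n, hn using Nat.le_induction with
      | base => exact hLR.sat _ _ _ (G.symm hcx) (hRc _ le_rfl)
      | succ n hn ih =>
        rcases Nat.mod_two_eq_zero_or_one n with h2 | h2
        · exact hLR.even n x x hn h2 ih (G.refl _ _)
            ⟨by omega, G.symm hx0r, fun n' h _ => hnw n' h⟩
        · obtain ⟨z, hz, hz'⟩ := hLR.run hLS hn ih
          obtain ⟨a, ha, haS, hao⟩ := hmk z (hLS.congr (G.le (by omega) (G.symm hz))) hz'
          have h3 := hfol n hn h2 a (by rw [ha]; exact hz) haS hao
          have h4 := ((σ.ext n a).2.2 hn).1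
          have h5 := ((σ.f n a : HX G A K).legr R (h4.trans hao)).2 (n+1) (by omega)
          exact hLR.sat _ _ _ (G.symm h3) h5
    obtain ⟨a, ha, haS, hao⟩ := hmk x hLS hRx
    have hca := hcS a ha haS
    refine ⟨a, ha, fin a ha ?_ (fun m hm => by rw [hao] at hm; simp at hm) fun n hn hn2 => ?_⟩
    · rw [(hca.2.2 le_rfl).1, hR, hao]
    · rcases eq_or_lt_of_le hn with h4 | h4
      · subst h4
        exact G.trans hcx (G.symm hca.1)
      · exact hfol n h4 hn2 a (by rw [ha]; exact G.refl _ _) haS hao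

theorem low_og (g : ℕ → G.X → G.X) (σ : Strat (HG G A K)) {m : ℕ} (hm : m < K)
    (hg : ∀ x, g m x = fol0 σ m x) (a : HX G A K) :
    G.r (m+1) ((Strat.og g).f m a.x) (σ.f m a : HX G A K).x :=
  fol0_og g σ hm.le a.x (hg _) a (G.refl _ _)

variable (G A K) in
noncomputable def covK (hK : K % 2 = 0) : Cov K (HG G A K) G where
  π := HX.x
  hπ h := h.1
  inj hn h := ⟨h, fun h => by omega, fun h => by omega⟩
  surj x := by
    obtain ⟨a, h⟩ := HX.exists_lift (A := A) (K := K) x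
    exact ⟨a, G.down h⟩
  φ b σ := if b = 0 then Strat.og (gI σ) else Strat.og (gII σ)
  loc b hb n σ τ h := by
    intro m hm x
    split_ifs
    · exact og_loc _ _ m (fun x => gI_loc σ τ h hm x) x
    · exact og_loc _ _ m (fun x => gII_loc σ τ h hm x) x
  low b hb σ m hm a := by
    split_ifs
    · exact low_og _ σ hm (fun x => by simp [gI, hm.le]) a
    · exact low_og _ σ hm (fun x => by simp [gII, hm.le]) a
  lift b hb σ x hx := by
    split_ifs at hx with h
    · subst h; exact liftI hK σ x hx
    · obtain rfl : b = 1 := by omega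
      exact liftII hK σ x hx

theorem closed_unravel (G : Gm) (A : Set G.X) (hA : ∀ x, x ∉ A → ∃ n, ∀ y, G.r n y x → y ∉ A) (k : ℕ) :
    ∃ (J : Gm) (c : Cov k J G) (N : ℕ), ∀ x y, J.r N x y → (c.π x ∈ A ↔ c.π y ∈ A) :=
  ⟨HG G A (2*k), (covK G A (2*k) (by omega)).weaken (by omega), 2*k+2, fun a b h => HG.decided hA a b h⟩

end Unravel3

theorem UU.of_closed {G : Gm} {A : Set G.X} (hA : ∀ x, x ∉ A → ∃ n, ∀ y, G.r n y x → y ∉ A) :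
    UU G A := by
  intro H p hp k
  refine closed_unravel H (p ⁻¹' A) ?_ k
  intro x hx
  obtain ⟨n, hn⟩ := hA _ hx
  exact ⟨n, fun y hy => hn _ (hp _ _ _ hy)⟩

structure St (G : Gm) where
  J : Gm
  q : J.X → G.X
  hq : ∀ n x y, J.r n x y → G.r n (q x) (q y)

theorem UU.iUnion {G : Gm} {A : ℕ → Set G.X} (hA : ∀ i, UU G (A i)) : UU G (⋃ i, A i) := by
  intro H p hp k
  choose J c N hN using fun (s : St G) (i : ℕ) => hA i s.J s.q s.hq (k+i)
  let s : ℕ → St G := fun i => Nat.rec ⟨H, p, hp⟩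
    (fun i s => ⟨J s i, fun x => s.q ((c s i).π x), fun n x y h => s.hq _ _ _ ((c s i).hπ h)⟩) i
  let cc : ∀ i, Cov (k+i) (s (i+1)).J (s i).J := fun i => c (s i) i
  let L := LimG k (fun i => (s i).J) cc
  have hq : ∀ i (x : L.X), (s i).q (x.1 i) = p (x.1 0) := by
    intro i
    induction i with
    | zero => intro x; rfl
    | succ i ih =>
      intro x
      rw [← ih x, ← x.2 i]
  let B : Set L.X := {x | p (x.1 0) ∉ ⋃ i, A i}
  obtain ⟨J', c', N', hN'⟩ := closed_unravel L B (by
    intro x hx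
    simp only [B, Set.mem_ofPred_eq, not_not, Set.mem_iUnion] at hx
    obtain ⟨i, hi⟩ := hx
    refine ⟨N (s i) i, fun y hy => ?_⟩
    simp only [B, Set.mem_ofPred_eq, not_not, Set.mem_iUnion]
    refine ⟨i, ?_⟩
    have := hN (s i) i _ _ (hy (i+1))
    have e : ∀ z : L.X, (s i).q ((c (s i) i).π (z.1 (i+1))) = p (z.1 0) := by
      intro z
      rw [← hq i z, ← z.2 i]
    rw [e, e] at this
    exact this.2 hi) k
  refine ⟨J', c'.trans (LimG.cov k (fun i => (s i).J) cc), N', fun x y h => ?_⟩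
  exact not_iff_not.1 (hN' x y h)

open Set

/-- The alphabet used by the coding player. -/
abbrev Gam := Bool × Bool

theorem ev_agree {α : Type*} [TopologicalSpace α] [DiscreteTopology α] (x : ℕ → α) (m : ℕ) :
    ∀ᶠ y in nhds x, ∀ j < m, y j = x j := by
  have : ∀ᶠ y in nhds x, ∀ j ∈ {j | j < m}, y j = x j := by
    rw [Filter.eventually_all_finite (Set.finite_lt_nat m)]
    intro j _
    have h : ContinuousAt (fun y : ℕ → α => y j) x := (continuous_apply j).continuousAt
    exact h.eventually (p := fun a => a = x j) (by rw [nhds_discrete]; simp)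
  exact this

theorem continuousOn_of_agree {α β : Type*} [TopologicalSpace α] [DiscreteTopology α]
    [TopologicalSpace β] {C : Set (ℕ → α)} {f : (ℕ → α) → ℕ → β}
    (h : ∀ i, ∃ m, ∀ x ∈ C, ∀ y ∈ C, (∀ j < m, x j = y j) → f x i = f y i) : ContinuousOn f C := by
  rw [continuousOn_pi]
  intro i x hx
  obtain ⟨m, hm⟩ := h i
  refine (continuousWithinAt_const (b := f x i)).congr_of_eventuallyEq ?_ rfl
  filter_upwards [(ev_agree x m).filter_mono nhdsWithin_le_nhds, self_mem_nhdsWithin] with y hy hyC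
  exact hm y hyC x hx hy

theorem continuous_of_agree {α β : Type*} [TopologicalSpace α] [DiscreteTopology α]
    [TopologicalSpace β] {f : (ℕ → α) → ℕ → β}
    (h : ∀ i, ∃ m, ∀ x y, (∀ j < m, x j = y j) → f x i = f y i) : Continuous f := by
  rw [← continuousOn_univ]
  refine continuousOn_of_agree fun i => ?_
  obtain ⟨m, hm⟩ := h i
  exact ⟨m, fun x _ y _ => hm x y⟩

def evp (w : ℕ → Gam) : ℕ → Gam := fun n => w (2*n)
def odp (w : ℕ → Gam) : Cantor := fun n => (w (2*n+1)).2

theorem mem_closed_of_agree {C : Set Cantor} (hC : IsClosed C) (y : Cantor)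
    (h : ∀ n, ∃ z ∈ C, ∀ j < n, z j = y j) : y ∈ C := by
  choose z hz hz' using h
  refine hC.mem_of_tendsto (f := z) (b := Filter.atTop) ?_ (Filter.Eventually.of_forall hz)
  rw [tendsto_pi_nhds]
  intro j
  refine tendsto_const_nhds.congr' ?_
  filter_upwards [Filter.eventually_gt_atTop j] with n hn
  exact (hz' n j hn).symm

def WG (C : Set Cantor) (hC : IsClosed C) (hne : C.Nonempty) : Gm where
  X := {w : ℕ → Gam // odp w ∈ C}
  r n w w' := ∀ i < n, w.1 i = w'.1 i
  refl n x i _ := rfl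
  symm h i hi := (h i hi).symm
  trans h h' i hi := (h i hi).trans (h' i hi)
  down h i hi := h i (by omega)
  zero x y i hi := by omega
  sep h := Subtype.ext (funext fun i => h (i+1) i (by omega))
  comp s hs := by
    have key : ∀ m n, m ≤ n → ∀ i < m, (s m).1 i = (s n).1 i := by
      intro m n h
      induction n, h using Nat.le_induction with
      | base => intro i _; rfl
      | succ n hn ih => intro i hi; rw [ih i hi, hs n i (by omega)]
    have key2 : ∀ n i, i < n → (s (i+1)).1 i = (s n).1 i := fun n i hi => key (i+1) n hi i (by omega)
    refine ⟨⟨fun i => (s (i+1)).1 i, ?_⟩, fun n i hi => key2 n i hi⟩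
    refine mem_closed_of_agree hC _ fun n => ⟨_, (s (2*n+1)).2, fun j hj => ?_⟩
    simp only [odp]
    rw [key2 (2*n+1) (2*j+1) (by omega)]
  ne := by
    obtain ⟨c, hc⟩ := hne
    exact ⟨⟨fun n => (false, c (n/2)), by
      convert hc using 1
      funext n
      simp only [odp]
      congr 1; omega⟩⟩

theorem UU_meas {C : Set Cantor} (hC : IsClosed C) (hne : C.Nonempty) (P : Set (ℕ → Gam))
    (hP : MeasurableSet P) : UU (WG C hC hne) {w | w.1 ∈ P} := by
  let M : MeasurableSpace (ℕ → Gam) :=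
    { MeasurableSet' := fun S => UU (WG C hC hne) {w | w.1 ∈ S}
      measurableSet_empty := UU.of_closed fun x _ => ⟨0, fun y _ h => h⟩
      measurableSet_compl := fun S h => h.compl
      measurableSet_iUnion := fun S h => by
        have := UU.iUnion h
        convert this using 1
        ext w; simp }
  have : (MeasurableSpace.pi : MeasurableSpace (ℕ → Gam)) ≤ M := by
    unfold MeasurableSpace.pi
    refine iSup_le fun i => ?_
    rintro _ ⟨t, _, rfl⟩
    refine UU.of_closed fun x hx => ⟨i+1, fun y hy h => hx ?_⟩
    have h1 := hy i (by omega)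
    change x.1 i ∈ t
    change y.1 i ∈ t at h
    rwa [← h1]
  exact this _ hP

theorem wadge_lemma (A : Set (ℕ → Gam)) (B : Set Cantor) (hA : MeasurableSet A)
    (hB : MeasurableSet B) (C : Set Cantor) (hC : IsClosed C) (hne : C.Nonempty) :
    (∃ ρ : (ℕ → Gam) → Cantor, Continuous ρ ∧ ∀ x, ρ x ∈ C ∧ (ρ x ∈ B ↔ x ∈ A)) ∨
    (∃ f : Cantor → (ℕ → Gam), ContinuousOn f C ∧ ∀ y ∈ C, (y ∈ B ↔ f y ∉ A)) := by
  classical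
  let P : Set (ℕ → Gam) := {w | ¬ (evp w ∈ A ↔ odp w ∈ B)}
  have hme : Measurable evp := by
    refine measurable_pi_lambda _ fun n => measurable_pi_apply _
  have hmo : Measurable odp := by
    refine measurable_pi_lambda _ fun n => measurable_snd.comp (measurable_pi_apply _)
  have hP : MeasurableSet P := by
    have h1 := hme hA
    have h2 := hmo hB
    have : P = ((evp ⁻¹' A) \ (odp ⁻¹' B)) ∪ ((odp ⁻¹' B) \ (evp ⁻¹' A)) := by
      ext w
      simp only [P, mem_union, mem_sdiff, mem_preimage]
      change (¬ (_ ↔ _)) ↔ _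
      tauto
    rw [this]
    exact (h1.diff h2).union (h2.diff h1)
  set G := WG C hC hne with hG
  rcases (UU_meas hC hne P hP).determined with ⟨σ, hσ⟩ | ⟨σ, hσ⟩
  · -- player I wins
    right
    have ex : ∀ y : Cantor, ∃ w : ℕ → Gam, ∀ _ : y ∈ C, ∃ h : odp w ∈ C, Cons (G := G) 0 σ ⟨w, h⟩ ∧
        ∀ n, w (2*n+1) = (false, y n) := by
      intro y
      by_cases hy : y ∈ C
      swap
      · exact ⟨fun _ => (false, false), fun h => (hy h).elim⟩
      let Q : Type := {w : ℕ → Gam // ∀ n, w (2*n+1) = (false, y n)}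
      have hQ : ∀ w : Q, odp w.1 ∈ C := by
        intro w
        have : odp w.1 = y := by funext n; simp [odp, w.2 n]
        rw [this]; exact hy
      let emb : Q → G.X := fun w => ⟨w.1, hQ w⟩
      let st : ℕ → Q → Q := fun n w => if hn : n % 2 = 0 then
        ⟨Function.update w.1 n ((σ.f n (emb w)).1 n), fun i => by
          rw [Function.update_of_ne (by omega)]; exact w.2 i⟩ else w
      let s : ℕ → Q := fun n => Nat.rec ⟨fun n => if n % 2 = 1 then (false, y (n/2)) else (false, false),
        fun i => by
          have : (2*i+1)/2 = i := by omega
          simp [this]⟩ st n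
      have hs : ∀ n, s (n+1) = st n (s n) := fun n => rfl
      obtain ⟨w, hw⟩ := G.comp (fun n => emb (s n)) (by
        intro n i hi
        change (s n).1 i = (s (n+1)).1 i
        rw [hs]
        simp only [st]
        split_ifs with h
        · simp only; rw [Function.update_of_ne (by omega)]
        · rfl)
      refine ⟨w.1, fun _ => ⟨w.2, ?_, ?_⟩⟩
      · intro n hn
        have h1 := σ.resp (hw n)
        have h2 := σ.ext n (emb (s n))
        refine G.trans ?_ (G.symm h1)
        refine G.trans (hw (n+1)) ?_
        intro i hi
        change (s (n+1)).1 i = _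
        rw [hs]
        simp only [st, hn, dif_pos]
        rcases Nat.lt_succ_iff_lt_or_eq.1 hi with h | h
        · rw [Function.update_of_ne (by omega)]
          exact (h2 i h).symm
        · subst h
          rw [Function.update_self]
      · intro n
        exact (hw (2*n+1+1) (2*n+1) (by omega)).trans ((s (2*n+1+1)).2 n)
    choose w hw using ex
    refine ⟨fun y => evp (w y), ?_, ?_⟩
    · refine continuousOn_of_agree fun i => ⟨2*i+1, fun x hx y hy hxy => ?_⟩
      obtain ⟨h1, h2, h3⟩ := hw x hx
      obtain ⟨h1', h2', h3'⟩ := hw y hy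
      have key : ∀ n, n ≤ 2*i+1 → G.r n ⟨w x, h1⟩ ⟨w y, h1'⟩ := by
        intro n
        induction n with
        | zero => intro _; exact G.zero _ _
        | succ n ih =>
          intro hn
          have ih := ih (by omega)
          rcases Nat.mod_two_eq_zero_or_one n with h | h
          · exact G.trans (h2 n h) (G.trans (σ.resp ih) (G.symm (h2' n h)))
          · intro j hj
            rcases Nat.lt_succ_iff_lt_or_eq.1 hj with h' | h'
            · exact ih j h'
            · have e : j = 2 * (n/2) + 1 := by omega
              change w x j = w y j
              rw [e, h3, h3', hxy (n/2) (by omega)]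
      exact key (2*i+1) le_rfl (2*i) (by omega)
    · intro y hy
      obtain ⟨h1, h2, h3⟩ := hw y hy
      have h4 : ¬ (evp (w y) ∈ A ↔ odp (w y) ∈ B) := hσ _ h2
      have h5 : odp (w y) = y := by funext n; simp [odp, h3]
      rw [h5] at h4
      tauto
  · left
    obtain ⟨c, hc⟩ := hne
    have ex : ∀ x : ℕ → Gam, ∃ w : G.X, Cons (G := G) 1 σ w ∧ evp w.1 = x := by
      intro x
      let Q : Type := {w : ℕ → Gam // odp w ∈ C ∧ ∀ n, w (2*n) = x n}
      let emb : Q → G.X := fun w => ⟨w.1, w.2.1⟩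
      have step : ∀ n (w : Q), ∃ w' : Q, (∀ i < n, w.1 i = w'.1 i) ∧
          (n % 2 = 1 → ∀ i < n + 1, w'.1 i = (σ.f n (emb w)).1 i) := by
        intro n w
        by_cases hn : n % 2 = 1
        · have h2 := σ.ext n (emb w)
          have h3 : ∀ i < n, (σ.f n (emb w)).1 i = w.1 i := h2
          have key : ∀ i < n, i % 2 = 0 → (σ.f n (emb w)).1 i = x (i/2) := by
            intro i hi h
            rw [h3 i hi]
            have := w.2.2 (i/2)
            rwa [show 2 * (i/2) = i by omega] at this
          refine ⟨⟨fun i => if i % 2 = 0 then x (i/2) else (σ.f n (emb w)).1 i, ?_, ?_⟩, ?_, ?_⟩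
          · have h := (σ.f n (emb w)).2
            convert h using 1
            funext i
            simp [odp, Nat.add_mod]
          · intro i; simp
          · intro i hi
            dsimp only
            split_ifs with h
            · rw [← key i hi h, h3 i hi]
            · exact (h3 i hi).symm
          · intro _ i hi
            dsimp only
            split_ifs with h
            · rw [key i (by omega) h]
            · rfl
        · exact ⟨w, fun _ _ => rfl, fun h => (hn h).elim⟩
      choose st hst hst' using step
      let s : ℕ → Q := fun n => Nat.rec ⟨fun i => if i % 2 = 0 then x (i/2) else (false, c (i/2)), by
          convert hc using 1
          funext i
          have : (2*i+1)/2 = i := by omega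
          simp [odp, Nat.add_mod, this], fun i => by simp⟩ st n
      have hs : ∀ n, s (n+1) = st n (s n) := fun n => rfl
      obtain ⟨w, hw⟩ := G.comp (fun n => emb (s n)) (by
        intro n i hi
        exact hst n (s n) i hi)
      refine ⟨w, ?_, ?_⟩
      · intro n hn
        refine G.trans ?_ (G.symm (σ.resp (hw n)))
        refine G.trans (hw (n+1)) ?_
        intro i hi
        exact hst' n (s n) hn i hi
      · funext n
        exact (hw (2*n+1) (2*n) (by omega)).trans ((s (2*n+1)).2.2 n)
    choose w hw hwx using ex
    refine ⟨fun x => odp (w x).1, ?_, fun x => ⟨(w x).2, ?_⟩⟩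
    · refine continuous_of_agree fun i => ⟨i+1, fun x y hxy => ?_⟩
      have key : ∀ n, n ≤ 2*i+2 → G.r n (w x) (w y) := by
        intro n
        induction n with
        | zero => intro _; exact G.zero _ _
        | succ n ih =>
          intro hn
          have ih := ih (by omega)
          rcases Nat.mod_two_eq_zero_or_one n with h | h
          · intro j hj
            rcases Nat.lt_succ_iff_lt_or_eq.1 hj with h' | h'
            · exact ih j h'
            · have e : j = 2 * (n/2) := by omega
              rw [e]
              have h1 := congrFun (hwx x) (n/2)
              have h2 := congrFun (hwx y) (n/2)
              simp only [evp] at h1 h2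
              rw [h1, h2, hxy _ (by omega)]
          · exact G.trans (hw x n h) (G.trans (σ.resp ih) (G.symm (hw y n h)))
      have := key (2*i+2) le_rfl (2*i+1) (by omega)
      simp only [odp, this]
    · have h4 := hσ _ (hw x)
      have h5 : ¬ ¬ (evp (w x).1 ∈ A ↔ odp (w x).1 ∈ B) := h4
      rw [hwx x] at h5
      tauto

open Set Topology

theorem fsigma_iff (A : Set Cantor) : IsFsigma A ↔ IsGδ Aᶜ := by
  rw [isGδ_iff_eq_iInter_nat]
  constructor
  · rintro ⟨F, hF, rfl⟩
    exact ⟨fun n => (F n)ᶜ, fun n => (hF n).isOpen_compl, by simp⟩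
  · rintro ⟨F, hF, h⟩
    refine ⟨fun n => (F n)ᶜ, fun n => (hF n).isClosed_compl, ?_⟩
    rw [← compl_iInter, ← h, compl_compl]

/-- The class of sets obtained from a countable Fσ-ranking. -/
def RR (A : Set Cantor) : Prop :=
  ∃ (g : Cantor → ℕ) (S : Set ℕ), (∀ k, IsGδ {x | k < g x}) ∧ ∀ x, x ∈ A ↔ g x ∈ S

theorem RR.compl {A : Set Cantor} (h : RR A) : RR Aᶜ := by
  obtain ⟨g, S, h1, h2⟩ := h
  exact ⟨g, Sᶜ, h1, fun x => not_congr (h2 x)⟩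

theorem RR.of_gdelta {A : Set Cantor} (h : IsGδ A) : RR A := by
  classical
  refine ⟨fun x => if x ∈ A then 1 else 0, {1}, fun k => ?_, fun x => ?_⟩
  · cases k with
    | zero =>
      convert h using 1
      ext x
      by_cases hx : x ∈ A <;> simp [hx]
    | succ k =>
      convert IsGδ.empty using 1
      ext x
      by_cases hx : x ∈ A <;> simp [hx]
  · by_cases hx : x ∈ A <;> simp [hx]

theorem RR.of_closed {A : Set Cantor} (h : IsClosed A) : RR A := .of_gdelta h.isGδ
theorem RR.of_open {A : Set Cantor} (h : IsOpen A) : RR A := .of_gdelta h.isGδ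

theorem pair_mono {a a' b b' : ℕ} (h : a ≤ a') (h' : b ≤ b') : Nat.pair a b ≤ Nat.pair a' b' := by
  have h1 : Nat.pair a b ≤ Nat.pair a' b := by
    rcases h.eq_or_lt with rfl | h
    · exact le_rfl
    · exact (Nat.pair_lt_pair_left b h).le
  have h2 : Nat.pair a' b ≤ Nat.pair a' b' := by
    rcases h'.eq_or_lt with rfl | h
    · exact le_rfl
    · exact (Nat.pair_lt_pair_right a' h).le
  exact h1.trans h2

theorem RR.inter {A B : Set Cantor} (hA : RR A) (hB : RR B) : RR (A ∩ B) := by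
  obtain ⟨g, S, h1, h2⟩ := hA
  obtain ⟨g', S', h1', h2'⟩ := hB
  refine ⟨fun x => Nat.pair (g x) (g' x), {n | n.unpair.1 ∈ S ∧ n.unpair.2 ∈ S'}, fun k => ?_, fun x => ?_⟩
  · have : {x | k < Nat.pair (g x) (g' x)} = ⋂ p : {p : ℕ × ℕ // Nat.pair p.1 p.2 ≤ k},
        ({x | p.1.1 < g x} ∪ {x | p.1.2 < g' x}) := by
      ext x
      simp only [mem_iInter, mem_union]
      change k < _ ↔ ∀ p : {p : ℕ × ℕ // Nat.pair p.1 p.2 ≤ k}, p.1.1 < g x ∨ p.1.2 < g' x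
      constructor
      · intro h p
        by_contra hcon
        push Not at hcon
        have := pair_mono hcon.1 hcon.2
        have := p.2
        omega
      · intro h
        by_contra hcon
        push Not at hcon
        have := h ⟨(g x, g' x), hcon⟩
        simp at this
    rw [this]
    exact IsGδ.iInter fun p => (h1 _).union (h1' _)
  · change _ ↔ (Nat.pair (g x) (g' x)).unpair.1 ∈ S ∧ (Nat.pair (g x) (g' x)).unpair.2 ∈ S'
    rw [Nat.unpair_pair]
    exact and_congr (h2 x) (h2' x)

theorem RR.union {A B : Set Cantor} (hA : RR A) (hB : RR B) : RR (A ∪ B) := by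
  have := (hA.compl.inter hB.compl).compl
  rwa [compl_inter, compl_compl, compl_compl] at this

theorem RR.diff {A B : Set Cantor} (hA : RR A) (hB : RR B) : RR (A \ B) := hA.inter hB.compl

theorem RR.empty : RR ∅ := .of_closed isClosed_empty

theorem gdelta_preimage {α β : Type*} [TopologicalSpace α] [TopologicalSpace β] {D : Set α}
    (hD : IsGδ D) {k : α → β} (hk : ContinuousOn k D)
    {U : Set β} (hU : IsGδ U) : IsGδ (D ∩ k ⁻¹' U) := by
  obtain ⟨f, hf, rfl⟩ := isGδ_iff_eq_iInter_nat.1 hU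
  have : ∀ n, ∃ V, IsOpen V ∧ D ∩ k ⁻¹' (f n) = D ∩ V := by
    intro n
    obtain ⟨V, hV, h⟩ := (continuousOn_iff'.1 hk) (f n) (hf n)
    exact ⟨V, hV, by rw [inter_comm, h, inter_comm]⟩
  choose V hV h using this
  have e : D ∩ k ⁻¹' (⋂ n, f n) = D ∩ ⋂ n, V n := by
    rw [preimage_iInter, inter_iInter, inter_iInter]
    exact iInter_congr h
  rw [e]
  exact hD.inter (IsGδ.iInter fun n => (hV n).isGδ)

theorem RR.preimage {A D : Set Cantor} (hA : RR A) (hD : IsGδ D) {k : Cantor → Cantor}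
    (hk : ContinuousOn k D) : RR (D ∩ k ⁻¹' A) := by
  classical
  obtain ⟨g, S, h1, h2⟩ := hA
  refine ⟨fun x => if x ∈ D then g (k x) + 1 else 0, {n | ∃ m ∈ S, n = m + 1}, fun j => ?_, fun x => ?_⟩
  · cases j with
    | zero =>
      convert hD using 1
      ext x
      by_cases hx : x ∈ D <;> simp [hx]
    | succ j =>
      convert gdelta_preimage hD hk (h1 j) using 1
      ext x
      by_cases hx : x ∈ D <;> simp [hx]
  · by_cases hx : x ∈ D <;> simp [hx, h2]

theorem RR.dOmega {A : Set Cantor} (hA : RR A) : DOmegaSigmaTwo A := by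
  classical
  obtain ⟨g, S, h1, h2⟩ := hA
  have hle : ∀ k, IsFsigma {x | g x ≤ k} := by
    intro k
    rw [fsigma_iff]
    convert h1 k using 1
    ext x; simp
  have hlt : ∀ k, IsFsigma {x | g x < k} := by
    intro k
    cases k with
    | zero =>
      rw [fsigma_iff]
      convert IsGδ.univ using 1
      ext x; simp
    | succ k =>
      convert hle k using 1
      ext x; simp
  have hmem : ∀ k x, (x ∈ if k ∈ S then {x | g x < k} else {x | g x ≤ k}) ↔
      g x ≤ k ∧ (k ∈ S → g x ≠ k) := by
    intro k x
    by_cases hk : k ∈ S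
    · simp [hk, lt_iff_le_and_ne]
    · simp [hk]
  refine ⟨fun n => if n % 2 = 1 then {x | g x ≤ n/2} else
    (if n/2 ∈ S then {x | g x < n/2} else {x | g x ≤ n/2}), fun n => ?_, ?_, ?_⟩
  · dsimp only
    split_ifs
    · exact hle _
    · exact hlt _
    · exact hle _
  · refine monotone_nat_of_le_succ fun n => ?_
    intro x
    rcases Nat.mod_two_eq_zero_or_one n with h | h
    · have e1 : (n+1)%2 = 1 := by omega
      have e2 : (n+1)/2 = n/2 := by omega
      simp only [h, e1, e2, if_true, zero_ne_one, if_false]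
      rw [hmem]
      exact fun h => h.1
    · have e1 : (n+1)%2 = 0 := by omega
      have e2 : (n+1)/2 = n/2+1 := by omega
      simp only [h, e1, e2, if_true, zero_ne_one, if_false]
      rw [hmem]
      intro hx
      have hx : g x ≤ n/2 := hx
      exact ⟨by omega, fun _ => by omega⟩
  · ext x
    simp only [mem_iUnion, mem_sdiff, not_exists]
    constructor
    · intro hx
      have hs := (h2 x).1 hx
      refine ⟨2 * g x + 1, by change Odd _; exact ⟨g x, rfl⟩, ?_, ?_⟩
      · have e1 : (2 * g x + 1) % 2 = 1 := by omega
        have e2 : (2 * g x + 1) / 2 = g x := by omega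
        simp [e1, e2]
      · intro m hm
        split_ifs with h h'
        · intro (hh : g x ≤ m / 2); omega
        · intro (hh : g x < m / 2); omega
        · intro (hle' : g x ≤ m / 2)
          have : m / 2 = g x := by omega
          rw [this] at h'
          exact h' hs
    · rintro ⟨n, hn, hx, hx'⟩
      have hn : Odd n := hn
      have hn1 : n % 2 = 1 := Nat.odd_iff.1 hn
      rw [if_pos hn1] at hx
      have hx : g x ≤ n/2 := hx
      have h3 := hx' (n-1) (by omega)
      have e1 : (n-1) % 2 ≠ 1 := by omega
      have e2 : (n-1)/2 = n/2 := by omega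
      rw [if_neg e1, e2, hmem] at h3
      rw [h2]
      by_contra hcon
      apply h3
      exact ⟨hx, fun hS he => hcon (he ▸ hS)⟩

theorem RR.inDelta {A : Set Cantor} (hA : RR A) : InDelta A := ⟨hA.dOmega, hA.compl.dOmega⟩

/-- Extension of continuous maps to Gδ sets. -/
theorem ext_gdelta {X : Set Cantor} {f : Cantor → Cantor} (hf : ContinuousOn f X) :
    ∃ (G : Set Cantor) (F : Cantor → Cantor), IsGδ G ∧ X ⊆ G ∧ ContinuousOn F G ∧ EqOn F f X := by
  classical
  let V : ℕ → Set Cantor := fun n => ⋃₀ {O | IsOpen O ∧ ∀ x ∈ X ∩ O, ∀ y ∈ X ∩ O, f x n = f y n}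
  have hV : ∀ n, IsOpen (V n) := fun n => isOpen_sUnion fun O hO => hO.1
  have hXV : ∀ n, X ⊆ V n := by
    intro n x hx
    have h1 : ∀ᶠ y in 𝓝[X] x, f y n = f x n := by
      have h2 : ContinuousWithinAt (fun y => f y n) X x := (continuousOn_pi.1 hf n) x hx
      exact h2.eventually (p := fun a => a = f x n) (by rw [nhds_discrete]; simp)
    obtain ⟨O, h, hO, hxO⟩ := eventually_nhds_iff.1 (eventually_nhdsWithin_iff.1 h1)
    exact ⟨O, ⟨hO, fun y hy z hz => (h y hy.2 hy.1).trans (h z hz.2 hz.1).symm⟩, hxO⟩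
  let G : Set Cantor := closure X ∩ ⋂ n, V n
  have hG : ∀ z ∈ G, ∀ n, ∃ b : Bool, ∃ O, IsOpen O ∧ z ∈ O ∧ ∀ x ∈ X ∩ O, f x n = b := by
    intro z hz n
    obtain ⟨O, ⟨hO, h⟩, hzO⟩ := mem_iInter.1 hz.2 n
    obtain ⟨x, hxO, hxX⟩ := mem_closure_iff.1 hz.1 O hO hzO
    exact ⟨f x n, O, hO, hzO, fun y hy => h y hy x ⟨hxX, hxO⟩⟩
  let F : Cantor → Cantor := fun z n => if h : z ∈ G then (hG z h n).choose else false
  have hF : ∀ z ∈ G, ∀ n, ∃ O, IsOpen O ∧ z ∈ O ∧ ∀ x ∈ X ∩ O, f x n = F z n := by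
    intro z hz n
    simp only [F, hz, dif_pos]
    exact (hG z hz n).choose_spec
  refine ⟨G, F, isClosed_closure.isGδ.inter (IsGδ.iInter fun n => (hV n).isGδ), ?_, ?_, ?_⟩
  · exact fun x hx => ⟨subset_closure hx, mem_iInter.2 fun n => hXV n hx⟩
  · rw [continuousOn_pi]
    intro n z hz
    obtain ⟨O, hO, hzO, h⟩ := hF z hz n
    refine (continuousWithinAt_const (b := F z n)).congr_of_eventuallyEq ?_ rfl
    filter_upwards [(hO.mem_nhds hzO |> mem_nhdsWithin_of_mem_nhds), self_mem_nhdsWithin] with w hw hwG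
    obtain ⟨O', hO', hwO', h'⟩ := hF w hwG n
    obtain ⟨x, hx, hxX⟩ := mem_closure_iff.1 hwG.1 (O ∩ O') (hO.inter hO') ⟨hw, hwO'⟩
    rw [← h x ⟨hxX, hx.1⟩, h' x ⟨hxX, hx.2⟩]
  · intro x hx
    funext n
    have hxG : x ∈ G := ⟨subset_closure hx, mem_iInter.2 fun n => hXV n hx⟩
    obtain ⟨O, _, hxO, h⟩ := hF x hxG n
    exact (h x ⟨hx, hxO⟩).symm

theorem gdelta_eq {D : Set Cantor} (hD : IsGδ D) {u : Cantor → Cantor} (hu : ContinuousOn u D) :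
    IsGδ {z | z ∈ D ∧ u z = z} := by
  have hw : ContinuousOn (fun z => (fun n => (u z n == z n) : Cantor)) D := by
    rw [continuousOn_pi] at hu ⊢
    intro n
    have h1 : Continuous fun p : Bool × Bool => (p.1 == p.2) := continuous_of_discreteTopology
    exact h1.comp_continuousOn ((hu n).prodMk (continuous_apply n).continuousOn)
  convert gdelta_preimage hD hw (IsGδ.singleton (fun _ => true)) using 1
  ext z
  simp only [mem_inter_iff, mem_preimage, mem_singleton_iff]
  change _ ∧ _ ↔ _
  refine and_congr Iff.rfl ?_
  constructor
  · intro h; funext n; simp [h]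
  · intro h; funext n
    simpa using congrFun h n

theorem lavrentiev {X Y : Set Cantor} (h : X ≃ₜ Y) : ∃ (G : Set Cantor) (F : Cantor → Cantor),
    IsGδ G ∧ X ⊆ G ∧ ContinuousOn F G ∧ (∀ x : X, F x = h x) ∧ ∀ z ∈ G, (z ∈ X ↔ F z ∈ Y) := by
  classical
  have key : ∀ (X Y : Set Cantor) (h : X ≃ₜ Y), ∃ (G : Set Cantor) (F : Cantor → Cantor),
      IsGδ G ∧ X ⊆ G ∧ ContinuousOn F G ∧ (∀ x : X, F x = h x) := by
    intro X Y h
    let f : Cantor → Cantor := fun z => if hz : z ∈ X then (h ⟨z, hz⟩).1 else z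
    have hfx : ∀ x : X, f x = h x := fun x => by simp [f, x.2]
    have hf : ContinuousOn f X := by
      rw [continuousOn_iff_continuous_domRestrict]
      have : X.domRestrict f = fun x => (h x).1 := by funext x; exact hfx x
      rw [this]
      exact continuous_subtype_val.comp h.continuous
    obtain ⟨G, F, h1, h2, h3, h4⟩ := ext_gdelta hf
    exact ⟨G, F, h1, h2, h3, fun x => by rw [h4 x.2, hfx]⟩
  obtain ⟨G1, F1, a1, a2, a3, a4⟩ := key X Y h
  obtain ⟨G2, F2, b1, b2, b3, b4⟩ := key Y X h.symm
  have c1 : IsGδ (G1 ∩ F1 ⁻¹' G2) := gdelta_preimage a1 a3 b1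
  have c2 : ContinuousOn (fun z => F2 (F1 z)) (G1 ∩ F1 ⁻¹' G2) :=
    b3.comp (a3.mono inter_subset_left) fun z hz => hz.2
  refine ⟨_, F1, gdelta_eq c1 c2, ?_, a3.mono fun z hz => hz.1.1, a4, ?_⟩
  · intro x hx
    have e1 : F1 x = h ⟨x, hx⟩ := a4 ⟨x, hx⟩
    refine ⟨⟨a2 hx, ?_⟩, ?_⟩
    · rw [mem_preimage, e1]; exact b2 (h ⟨x, hx⟩).2
    · rw [e1, b4 (h ⟨x, hx⟩)]; simp
  · rintro z ⟨⟨h1, h2⟩, h3⟩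
    constructor
    · intro hz; rw [a4 ⟨z, hz⟩]; exact (h ⟨z, hz⟩).2
    · intro hz
      have : F2 (F1 z) = (h.symm ⟨F1 z, hz⟩ : X) := b4 ⟨F1 z, hz⟩
      rw [← h3, this]
      exact Subtype.mem _

/-- Gluing partial maps along a sequence of clopen sets. -/
theorem glue_gdelta {s : ℕ → Set Cantor} (hs : ∀ i, IsClopen (s i)) {G : ℕ → Set Cantor}
    (hG : ∀ i, IsGδ (G i)) {f : ℕ → Cantor → Cantor} (hf : ∀ i, ContinuousOn (f i) (G i)) :
    ∃ (D : Set Cantor) (F : Cantor → Cantor), IsGδ D ∧ ContinuousOn F D ∧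
      (∀ z ∈ D, ∃ i, z ∈ s i ∧ z ∈ G i ∧ F z = f i z) ∧ (∀ z, (∃ i, z ∈ s i) → (∀ i, z ∈ G i) → z ∈ D) := by
  classical
  let t : ℕ → Set Cantor := fun i => s i \ ⋃ j ∈ Finset.range i, s j
  have ht : ∀ i, IsClopen (t i) := by
    intro i
    refine IsClopen.diff (hs i) ?_
    exact (Finset.range i).finite_toSet.isClopen_biUnion fun j _ => hs j
  have htd : ∀ i j z, z ∈ t i → z ∈ t j → i = j := by
    intro i j z hi hj
    by_contra hne
    rcases Nat.lt_or_gt_of_ne hne with h | h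
    · exact hj.2 (mem_biUnion (Finset.mem_coe.2 (Finset.mem_range.2 h)) hi.1)
    · exact hi.2 (mem_biUnion (Finset.mem_coe.2 (Finset.mem_range.2 h)) hj.1)
  have htc : ∀ z, (∃ i, z ∈ s i) → ∃ i, z ∈ t i := by
    intro z hz
    refine ⟨Nat.find hz, Nat.find_spec hz, fun h => ?_⟩
    simp only [mem_iUnion, Finset.mem_range] at h
    obtain ⟨j, hj, hzj⟩ := h
    exact Nat.find_min hz hj hzj
  let D : Set Cantor := (⋃ i, t i) ∩ ⋂ i, ((t i)ᶜ ∪ G i)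
  have hDm : ∀ z ∈ D, ∃ i, z ∈ t i ∧ z ∈ G i := by
    rintro z ⟨h1, h2⟩
    obtain ⟨i, hi⟩ := mem_iUnion.1 h1
    exact ⟨i, hi, (mem_iInter.1 h2 i).resolve_left fun h => h hi⟩
  let F : Cantor → Cantor := fun z => if h : ∃ i, z ∈ t i then f h.choose z else z
  have hF : ∀ i z, z ∈ t i → F z = f i z := by
    intro i z hz
    have h : ∃ i, z ∈ t i := ⟨i, hz⟩
    simp only [F, h, dif_pos]
    rw [htd _ _ z h.choose_spec hz]
  refine ⟨D, F, ?_, ?_, ?_, ?_⟩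
  · refine (isOpen_iUnion fun i => (ht i).isOpen).isGδ.inter (IsGδ.iInter fun i => ?_)
    exact (ht i).compl.isOpen.isGδ.union (hG i)
  · intro z hz
    obtain ⟨i, hi, hiG⟩ := hDm z hz
    have h1 : ContinuousWithinAt (f i) (D ∩ t i) z := (hf i z hiG).mono (by
      rintro w ⟨hw, hwt⟩
      obtain ⟨j, hj, hjG⟩ := hDm w hw
      rwa [htd _ _ w hwt hj])
    have h2 : ContinuousWithinAt F (D ∩ t i) z := h1.congr (fun w hw => hF i w hw.2) (hF i z hi)
    exact (continuousWithinAt_inter ((ht i).isOpen.mem_nhds hi)).1 h2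
  · intro z hz
    obtain ⟨i, hi, hiG⟩ := hDm z hz
    exact ⟨i, hi.1, hiG, hF i z hi⟩
  · intro z hz hzG
    exact ⟨mem_iUnion.2 (htc z hz), mem_iInter.2 fun i => Or.inr (hzG i)⟩

theorem hom_map {Y : Set Cantor} (hY : IsHomogeneous Y) {t : Set Cantor} (ht : IsClopen t)
    (hne : (Y ∩ t).Nonempty) : ∃ (D : Set Cantor) (k : Cantor → Cantor), IsGδ D ∧ Y ⊆ D ∧
      ContinuousOn k D ∧ (∀ z ∈ D, k z ∈ t) ∧ ∀ z ∈ D, (z ∈ Y ↔ k z ∈ Y) := by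
  classical
  obtain ⟨p, hpY, hpt⟩ := hne
  choose h hh using fun y : Y => hY y ⟨p, hpY⟩
  choose G F g1 g2 g3 g4 g5 using fun y : Y => lavrentiev (h y)
  have hO : ∀ y : Y, ∃ O : Set Cantor, IsClopen O ∧ y.1 ∈ O ∧ ∀ z ∈ O ∩ G y, F y z ∈ t := by
    intro y
    have hyG := g2 y y.2
    have hFy : F y y ∈ t := by rw [g4 y y, hh y]; exact hpt
    have h1 : ∀ᶠ z in 𝓝[G y] y.1, F y z ∈ t := (g3 y y.1 hyG).eventually (ht.isOpen.mem_nhds hFy)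
    obtain ⟨O, hO1, hO2, hO3⟩ := eventually_nhds_iff.1 (eventually_nhdsWithin_iff.1 h1)
    obtain ⟨V, hV, hyV, hVO⟩ := compact_exists_isClopen_in_isOpen hO2 hO3
    exact ⟨V, hV, hyV, fun z hz => hO1 z (hVO hz.1) hz.2⟩
  choose O hO1 hO2 hO3 using hO
  obtain ⟨T, hT, hTc⟩ := TopologicalSpace.isOpen_iUnion_countable O fun y => (hO1 y).isOpen
  have hTne : T.Nonempty := by
    have : p ∈ ⋃ i ∈ T, O i := by rw [hTc]; exact mem_iUnion.2 ⟨⟨p, hpY⟩, hO2 _⟩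
    obtain ⟨y, hy, _⟩ := mem_iUnion₂.1 this
    exact ⟨y, hy⟩
  obtain ⟨e, he⟩ := hT.exists_eq_range hTne
  obtain ⟨D, k, d1, d2, d3, d4⟩ := glue_gdelta (s := fun i => O (e i)) (fun i => hO1 _)
    (G := fun i => G (e i)) (fun i => g1 _) (f := fun i => F (e i)) (fun i => g3 _)
  refine ⟨D, k, d1, ?_, d2, ?_, ?_⟩
  · intro y hy
    refine d4 y ?_ fun i => g2 _ hy
    have : y ∈ ⋃ i ∈ T, O i := by rw [hTc]; exact mem_iUnion.2 ⟨⟨y, hy⟩, hO2 ⟨y, hy⟩⟩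
    obtain ⟨y', hy', h'⟩ := mem_iUnion₂.1 this
    rw [he] at hy'
    obtain ⟨i, rfl⟩ := hy'
    exact ⟨i, h'⟩
  · intro z hz
    obtain ⟨i, h1, h2, h3⟩ := d3 z hz
    rw [h3]; exact hO3 _ z ⟨h1, h2⟩
  · intro z hz
    obtain ⟨i, h1, h2, h3⟩ := d3 z hz
    rw [h3]; exact g5 _ z h2

open Set Topology

/-- A partial map preserving (or flipping) membership in `Y`. -/
structure Good (Y D : Set Cantor) (g : Cantor → Cantor) (ε : Bool) : Prop where
  gd : IsGδ D
  ct : ContinuousOn g D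
  mem : ∀ x ∈ D, (x ∈ Y ↔ (if ε then g x ∉ Y else g x ∈ Y))
  rr : RR (Y \ D)

theorem Good.comp {Y D1 D2 : Set Cantor} {g1 g2 : Cantor → Cantor} {ε1 ε2 : Bool}
    (h1 : Good Y D1 g1 ε1) (h2 : Good Y D2 g2 ε2) :
    Good Y {x | x ∈ D1 ∧ g1 x ∈ D2} (fun x => g2 (g1 x)) (xor ε1 ε2) where
  gd := gdelta_preimage h1.gd h1.ct h2.gd
  ct := h2.ct.comp (h1.ct.mono fun x hx => hx.1) fun x hx => hx.2
  mem := by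
    rintro x ⟨hx1, hx2⟩
    rw [h1.mem x hx1]
    have := h2.mem _ hx2
    cases ε1 <;> cases ε2 <;> simp_all
  rr := by
    cases ε1
    · have e : Y \ {x | x ∈ D1 ∧ g1 x ∈ D2} = (Y \ D1) ∪ (D1 ∩ g1 ⁻¹' (Y \ D2)) := by
        ext x
        have := h1.mem x
        by_cases hx : x ∈ D1
        · have := h1.mem x hx
          simp_all
        · simp_all
      rw [e]
      exact h1.rr.union (h2.rr.preimage h1.gd h1.ct)
    · have e : Y \ {x | x ∈ D1 ∧ g1 x ∈ D2} = (Y \ D1) ∪ (D1 ∩ g1 ⁻¹' (D2ᶜ \ (Y \ D2))) := by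
        ext x
        have := h1.mem x
        by_cases hx : x ∈ D1
        · have := h1.mem x hx
          simp_all
          tauto
        · simp_all
      rw [e]
      exact h1.rr.union (((RR.of_gdelta h2.gd).compl.diff h2.rr).preimage h1.gd h1.ct)

theorem Good.ident (Y : Set Cantor) : Good Y univ (fun x => x) false where
  gd := IsGδ.univ
  ct := continuousOn_id
  mem := by simp
  rr := by simpa using RR.empty

theorem RR.of_hom {Y : Set Cantor} (hY : IsHomogeneous Y) {t : Set Cantor} (ht : IsClopen t)
    (hne : (Y ∩ t).Nonempty) (h : RR (Y ∩ t)) : RR Y := by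
  obtain ⟨D, k, d1, d2, d3, d4, d5⟩ := hom_map hY ht hne
  convert h.preimage d1 d3 using 1
  ext z
  constructor
  · intro hz; exact ⟨d2 hz, (d5 z (d2 hz)).1 hz, d4 z (d2 hz)⟩
  · rintro ⟨h1, h2, -⟩; exact (d5 z h1).2 h2

theorem good_of_hom {Y : Set Cantor} (hY : IsHomogeneous Y) {t : Set Cantor} (ht : IsClopen t)
    (hne : (Y ∩ t).Nonempty) : ∃ D k, Good Y D k false ∧ ∀ z ∈ D, k z ∈ t := by
  obtain ⟨D, k, d1, d2, d3, d4, d5⟩ := hom_map hY ht hne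
  refine ⟨D, k, ⟨d1, d3, by simpa using d5, ?_⟩, d4⟩
  rw [sdiff_eq_bot_iff.2 d2]; exact RR.empty

theorem Good.globalize {Y : Set Cantor} (hY : IsHomogeneous Y) {S : Set Cantor} (hS : IsClopen S)
    (hne : (Y ∩ S).Nonempty) {D : Set Cantor} {g : Cantor → Cantor} (hD : IsGδ D)
    (hg : ContinuousOn g D) (hm : ∀ x ∈ D, (x ∈ Y ↔ g x ∉ Y)) (hr : RR ((Y ∩ S) \ D)) :
    ∃ D g, Good Y D g true := by
  obtain ⟨D', k, d1, d2, d3, d4, d5⟩ := hom_map hY hS hne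
  refine ⟨D' ∩ k ⁻¹' D, fun x => g (k x), gdelta_preimage d1 d3 hD,
    hg.comp (d3.mono inter_subset_left) fun x hx => hx.2, ?_, ?_⟩
  · rintro x ⟨h1, h2⟩
    rw [d5 x h1, hm _ h2]; simp
  · convert hr.preimage d1 d3 using 1
    ext x
    simp only [mem_sdiff, mem_inter_iff, mem_preimage]
    constructor
    · rintro ⟨hx, h2⟩
      have hx' := d2 hx
      exact ⟨hx', ⟨(d5 x hx').1 hx, d4 x hx'⟩, fun h => h2 ⟨hx', h⟩⟩
    · rintro ⟨h1, ⟨h2, h3⟩, h4⟩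
      exact ⟨(d5 x h1).2 h2, fun h => h4 h.2⟩

/-- Generic recursive construction. -/
theorem exists_seq {α : Type*} [Nonempty α] (P : ℕ → (ℕ → α) → Prop)
    (hloc : ∀ m T T', (∀ i ≤ m, T i = T' i) → P m T → P m T')
    (hstep : ∀ m T, (∀ i < m, P i T) → ∃ a, P m (Function.update T m a)) : ∃ T, ∀ m, P m T := by
  classical
  let a0 : α := Classical.arbitrary α
  let F : ∀ m, {T : ℕ → α // ∀ i < m, P i T} := fun m => Nat.rec
    ⟨fun _ => a0, fun i hi => absurd hi (Nat.not_lt_zero i)⟩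
    (fun m T => ⟨Function.update T.1 m (hstep m T.1 T.2).choose, by
      intro i hi
      rcases Nat.lt_succ_iff_lt_or_eq.1 hi with h | h
      · refine hloc i T.1 _ ?_ (T.2 i h)
        intro j hj
        rw [Function.update_of_ne (by omega)]
      · rw [h]
        exact (hstep m T.1 T.2).choose_spec⟩) m
  have hF : ∀ m i, i < m → (F (m+1)).1 i = (F m).1 i := by
    intro m i hi
    change Function.update (F m).1 m _ i = _
    rw [Function.update_of_ne (by omega)]
  have hF' : ∀ m i, i < m → (F m).1 i = (F (i+1)).1 i := by
    intro m i hi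
    induction m with
    | zero => omega
    | succ m ih =>
      rcases Nat.lt_succ_iff_lt_or_eq.1 hi with h | h
      · rw [hF m i h, ih h]
      · rw [h]
  refine ⟨fun i => (F (i+1)).1 i, fun m => ?_⟩
  refine hloc m (F (m+1)).1 _ ?_ ((F (m+1)).2 m (by omega))
  intro i hi
  exact hF' _ _ (by omega)

section MM
variable (dm : Set Cantor → Bool → Set Cantor) (mp : Set Cantor → Bool → Cantor → Cantor)

def mmU (T : ℕ → Set Cantor) (z : Cantor) : ℕ → ℕ → Cantor → Cantor
  | _, 0 => fun x => x
  | n, k+1 => fun x => mp (T n) (z n) (mmU T z (n+1) k x)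

def mmW (T : ℕ → Set Cantor) (z : Cantor) : ℕ → ℕ → Set Cantor
  | _, 0 => univ
  | n, k+1 => {x | x ∈ mmW T z (n+1) k ∧ mmU mp T z (n+1) k x ∈ dm (T n) (z n)}

theorem mmU_congr {T T' : ℕ → Set Cantor} {z z' : Cantor} {n k : ℕ}
    (h : ∀ i, n ≤ i → i < n + k → T i = T' i ∧ z i = z' i) : mmU mp T z n k = mmU mp T' z' n k := by
  induction k generalizing n with
  | zero => rfl
  | succ k ih =>
    funext x
    simp only [mmU]
    rw [ih fun i h1 h2 => h i (by omega) (by omega), (h n le_rfl (by omega)).1,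
      (h n le_rfl (by omega)).2]

theorem mmW_congr {T T' : ℕ → Set Cantor} {z z' : Cantor} {n k : ℕ}
    (h : ∀ i, n ≤ i → i < n + k → T i = T' i ∧ z i = z' i) :
    mmW dm mp T z n k = mmW dm mp T' z' n k := by
  induction k generalizing n with
  | zero => rfl
  | succ k ih =>
    simp only [mmW]
    rw [ih fun i h1 h2 => h i (by omega) (by omega), (h n le_rfl (by omega)).1,
      (h n le_rfl (by omega)).2,
      mmU_congr mp (T := T) (T' := T') (z := z) (z' := z') fun i h1 h2 => h i (by omega) (by omega)]

theorem mmU_add (T : ℕ → Set Cantor) (z : Cantor) (n a b : ℕ) (x : Cantor) :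
    mmU mp T z n (a + b) x = mmU mp T z n a (mmU mp T z (n + a) b x) := by
  induction a generalizing n with
  | zero => simp [mmU]
  | succ a ih =>
    rw [show a + 1 + b = (a + b) + 1 by omega]
    change mp (T n) (z n) (mmU mp T z (n+1) (a+b) x) = mp (T n) (z n) (mmU mp T z (n+1) a _)
    rw [ih, show n + 1 + a = n + (a + 1) by omega]

theorem mmW_add (T : ℕ → Set Cantor) (z : Cantor) (n a b : ℕ) (x : Cantor)
    (h : x ∈ mmW dm mp T z n (a + b)) :
    mmU mp T z (n + a) b x ∈ mmW dm mp T z n a ∧ x ∈ mmW dm mp T z (n + a) b := by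
  induction a generalizing n with
  | zero => simp [mmW] at h ⊢; exact h
  | succ a ih =>
    rw [show a + 1 + b = (a + b) + 1 by omega] at h
    obtain ⟨h1, h2⟩ := h
    rw [mmU_add] at h2
    have := ih _ h1
    rw [show n + 1 + a = n + (a + 1) by omega] at this h2
    exact ⟨⟨this.1, h2⟩, this.2⟩

theorem mm_good {Y : Set Cantor} {T : ℕ → Set Cantor} {z : Cantor} {n k : ℕ}
    (h : ∀ i, n ≤ i → i < n + k → ∃ ε, Good Y (dm (T i) (z i)) (mp (T i) (z i)) ε) :
    ∃ ε, Good Y (mmW dm mp T z n k) (mmU mp T z n k) ε := by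
  induction k generalizing n with
  | zero => exact ⟨false, Good.ident Y⟩
  | succ k ih =>
    obtain ⟨ε1, h1⟩ := ih (n := n + 1) fun i h1 h2 => h i (by omega) (by omega)
    obtain ⟨ε2, h2⟩ := h n le_rfl (by omega)
    exact ⟨_, h1.comp h2⟩

end MM

theorem RR.iUnion_fin {ι : Type*} [Finite ι] {A : ι → Set Cantor} (h : ∀ i, RR (A i)) :
    RR (⋃ i, A i) := by
  classical
  cases nonempty_fintype ι
  have : ∀ s : Finset ι, RR (⋃ i ∈ s, A i) := by
    intro s
    induction s using Finset.induction_on with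
    | empty => simpa using RR.empty
    | insert a s _ ih => rw [Finset.set_biUnion_insert]; exact (h a).union ih
  simpa using this Finset.univ

def flipAt (n : ℕ) (z : Cantor) : Cantor := fun i => if i = n then !(z i) else z i

theorem flipAt_flipAt (n : ℕ) (z : Cantor) : flipAt n (flipAt n z) = z := by
  funext i; by_cases h : i = n <;> simp [flipAt, h]

theorem continuous_flipAt (n : ℕ) : Continuous (flipAt n) := by
  refine continuous_pi fun i => ?_
  by_cases h : i = n
  · simp only [flipAt, h, if_true]
    exact (continuous_of_discreteTopology (f := not)).comp (continuous_apply n)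
  · simp only [flipAt, h, if_false]
    exact continuous_apply i

def flipHomeo (n : ℕ) : Cantor ≃ₜ Cantor where
  toFun := flipAt n
  invFun := flipAt n
  left_inv := flipAt_flipAt n
  right_inv := flipAt_flipAt n
  continuous_toFun := continuous_flipAt n
  continuous_invFun := continuous_flipAt n

theorem no_flip_set {B : Set Cantor} (hB : MeasurableSet B)
    (h : ∀ n z, z ∈ B ↔ flipAt n z ∉ B) : False := by
  obtain ⟨U, hU, hBU⟩ := MeasurableSet.residualEq_isOpen hB
  have hR : {z | z ∈ B ↔ z ∈ U} ∈ residual Cantor := by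
    filter_upwards [hBU] with z hz
    exact iff_of_eq hz
  have hR' : ∀ n, {z | flipAt n z ∈ B ↔ flipAt n z ∈ U} ∈ residual Cantor := by
    intro n
    have e := (flipHomeo n).residual_map_eq
    rw [← e] at hR
    exact hR
  have hd : ∀ n, Dense ({z | z ∈ B ↔ z ∈ U} ∩ {z | flipAt n z ∈ B ↔ flipAt n z ∈ U}) := fun n =>
    dense_of_mem_residual (Filter.inter_mem hR (hR' n))
  rcases U.eq_empty_or_nonempty with rfl | ⟨u, hu⟩
  · obtain ⟨z, h1, h2⟩ := (hd 0).nonempty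
    have h1 : z ∈ B ↔ z ∈ (∅ : Set Cantor) := h1
    have h2 : flipAt 0 z ∈ B ↔ flipAt 0 z ∈ (∅ : Set Cantor) := h2
    have := h 0 z
    simp at h1 h2
    tauto
  · have : ∃ m, ∀ y : Cantor, (∀ j < m, y j = u j) → y ∈ U := by
      obtain ⟨V, hV, huV, h3⟩ := mem_nhds_iff.1 (hU.mem_nhds hu)
      obtain ⟨I, v, h4, h5⟩ := isOpen_pi_iff.1 hU u hu
      refine ⟨I.sup id + 1, fun y hy => h5 ?_⟩
      intro i hi
      have : i ≤ I.sup id := Finset.le_sup (f := id) hi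
      rw [hy i (by omega)]
      exact (h4 i hi).2
    obtain ⟨m, hm⟩ := this
    have ho : {y : Cantor | ∀ j < m, y j = u j} ∈ 𝓝 u := ev_agree u m
    obtain ⟨z, hz, h1, h2⟩ := mem_closure_iff_nhds.1 (hd m u) _ ho
    have h1 : z ∈ B ↔ z ∈ U := h1
    have h2 : flipAt m z ∈ B ↔ flipAt m z ∈ U := h2
    have hz1 : z ∈ U := hm z hz
    have hz2 : flipAt m z ∈ U := hm _ fun j hj => by
      rw [← hz j hj]; simp [flipAt, hj.ne]
    have := h m z
    tauto

open Set Topology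

theorem martin_monk {Y : Set Cantor} (hYB : MeasurableSet Y) (hY : IsHomogeneous Y) (hR : ¬ RR Y)
    {D0 : Set Cantor} {g0 : Cantor → Cantor} (hg0 : Good Y D0 g0 true) : False := by
  classical
  have hE : ∀ (t : Set Cantor) (b : Bool), ∃ (D : Set Cantor) (k : Cantor → Cantor) (O : ℕ → Set Cantor),
      IsClopen t ∧ (Y ∩ t).Nonempty → Good Y D k b ∧ (∀ z ∈ D, k z ∈ t) ∧ (∀ j, IsOpen (O j)) ∧ D = ⋂ j, O j := by
    intro t b
    by_cases h : IsClopen t ∧ (Y ∩ t).Nonempty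
    · obtain ⟨D, k, h1, h2⟩ := good_of_hom hY h.1 h.2
      cases b
      · obtain ⟨O, hO⟩ := isGδ_iff_eq_iInter_nat.1 h1.gd
        exact ⟨D, k, O, fun _ => ⟨h1, h2, hO⟩⟩
      · have h3 := hg0.comp h1
        obtain ⟨O, hO⟩ := isGδ_iff_eq_iInter_nat.1 h3.gd
        exact ⟨_, _, O, fun _ => ⟨h3, fun z hz => h2 _ hz.2, hO⟩⟩
    · exact ⟨∅, id, fun _ => ∅, fun h' => absurd h' h⟩
  choose dm mp O hE using hE
  let P : ℕ → (ℕ → Set Cantor) → Prop := fun m T =>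
    IsClopen (T m) ∧ ∃ p, p ∈ Y ∧ p ∈ T m ∧ ∀ z : Cantor, ∀ n ≤ m,
      p ∈ mmW dm mp T z n (m - n) ∧
      (∀ q ∈ T m, q ∈ mmW dm mp T z n (m - n) → ∀ j < m, mmU mp T z n (m-n) q j = mmU mp T z n (m-n) p j) ∧
      (n + 1 ≤ m → ∀ j < m, ∃ V, IsClosed V ∧ V ⊆ O (T n) (z n) j ∧
        ∀ q ∈ T m, q ∈ mmW dm mp T z n (m - n) → mmU mp T z (n+1) (m-(n+1)) q ∈ V)
  have hex : ∃ T, ∀ m, P m T := by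
    apply exists_seq P
    · rintro m T T' hT ⟨h1, p, h2, h3, h4⟩
      refine ⟨hT m le_rfl ▸ h1, p, h2, hT m le_rfl ▸ h3, fun z n hn => ?_⟩
      have := h4 z n hn
      rwa [hT m le_rfl, hT n hn, mmW_congr dm mp (T' := T') (z' := z) fun i _ _ => ⟨hT i (by omega), rfl⟩,
        mmU_congr mp (T' := T') (z' := z) fun i _ _ => ⟨hT i (by omega), rfl⟩,
        mmU_congr mp (n := n+1) (k := m-(n+1)) (T' := T') (z' := z) fun i _ _ => ⟨hT i (by omega), rfl⟩] at this
    · intro m T hT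
      have hgood : ∀ i < m, ∀ b, Good Y (dm (T i) b) (mp (T i) b) b ∧ (∀ z ∈ (dm (T i) b), mp (T i) b z ∈ T i) ∧
          (∀ j, IsOpen (O (T i) b j)) ∧ (dm (T i) b) = ⋂ j, O (T i) b j := by
        intro i hi b
        obtain ⟨h1, p, h2, h3, _⟩ := hT i hi
        exact hE _ _ ⟨h1, p, h2, h3⟩
      let ex : (Fin m → Bool) → Cantor := fun s i => if h : i < m then s ⟨i, h⟩ else false
      have hW : ∀ s : (Fin m → Bool) × Fin (m+1), ∃ ε, Good Y (mmW dm mp T (ex s.1) s.2 (m - s.2))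
          (mmU mp T (ex s.1) s.2 (m - s.2)) ε := by
        intro s
        apply mm_good
        intro i h1 h2
        exact ⟨_, (hgood i (by omega) _).1⟩
      have hp : ∃ p ∈ Y, ∀ s : (Fin m → Bool) × Fin (m+1), p ∈ mmW dm mp T (ex s.1) s.2 (m - s.2) := by
        by_contra hcon
        push Not at hcon
        apply hR
        have e : Y = ⋃ s : (Fin m → Bool) × Fin (m+1), Y \ mmW dm mp T (ex s.1) s.2 (m - s.2) := by
          ext y
          simp only [mem_iUnion, mem_sdiff]
          constructor
          · intro hy
            obtain ⟨s, hs⟩ := hcon y hy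
            exact ⟨s, hy, hs⟩
          · rintro ⟨s, hy, _⟩; exact hy
        rw [e]
        exact RR.iUnion_fin fun s => (hW s).choose_spec.rr
      obtain ⟨p, hpY, hp⟩ := hp
      have hV : ∀ s : (Fin m → Bool) × Fin (m+1), ∀ j : Fin m, ∃ V, s.2 + 1 ≤ m →
          (IsClopen V ∧ V ⊆ O (T s.2) (ex s.1 s.2) j ∧
            mmU mp T (ex s.1) (s.2 + 1) (m - (s.2 + 1)) p ∈ V) := by
        rintro ⟨s, n⟩ j
        by_cases hn : n + 1 ≤ m
        · have h1 := hp ⟨s, n⟩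
          dsimp only at h1
          rw [show m - n.1 = (m - (n.1 + 1)) + 1 by omega] at h1
          have h2 := h1.2
          obtain ⟨_, _, g3, g4⟩ := hgood n (by omega) (ex s n)
          rw [g4] at h2
          obtain ⟨V, hV, hyV, hVO⟩ := compact_exists_isClopen_in_isOpen (g3 j) (mem_iInter.1 h2 j)
          exact ⟨V, fun _ => ⟨hV, hVO, hyV⟩⟩
        · exact ⟨∅, fun h => absurd h hn⟩
      choose V hV using hV
      have hev : ∀ s : (Fin m → Bool) × Fin (m+1), ∀ᶠ q in 𝓝 p, q ∈ mmW dm mp T (ex s.1) s.2 (m - s.2) →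
          ((∀ j < m, mmU mp T (ex s.1) s.2 (m - s.2) q j = mmU mp T (ex s.1) s.2 (m - s.2) p j) ∧
          (s.2 + 1 ≤ m → ∀ j : Fin m, mmU mp T (ex s.1) (s.2 + 1) (m - (s.2 + 1)) q ∈ V s j)) := by
        rintro ⟨s, n⟩
        obtain ⟨ε, hg⟩ := hW ⟨s, n⟩
        dsimp only at hg
        rw [← eventually_nhdsWithin_iff]
        refine Filter.Eventually.and ?_ ?_
        · exact (hg.ct p (hp ⟨s, n⟩)).eventually (ev_agree _ m)
        · by_cases hn : n + 1 ≤ m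
          · have hsub : mmW dm mp T (ex s) n (m - n) ⊆ mmW dm mp T (ex s) (n+1) (m - (n+1)) := by
              rw [show m - n.1 = (m - (n.1 + 1)) + 1 by omega]
              exact fun x hx => hx.1
            have hct : ContinuousWithinAt (mmU mp T (ex s) (n + 1) (m - (n + 1)))
                (mmW dm mp T (ex s) n (m - n)) p := by
              obtain ⟨ε', hg'⟩ := mm_good dm mp (Y := Y) (T := T) (z := ex s) (n := n+1) (k := m-(n+1))
                fun i h1 h2 => ⟨_, (hgood i (by omega) _).1⟩
              exact (hg'.ct p (hsub (hp ⟨s, n⟩))).mono hsub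
            have : ∀ j : Fin m, ∀ᶠ q in 𝓝[mmW dm mp T (ex s) n (m - n)] p,
                mmU mp T (ex s) (n + 1) (m - (n + 1)) q ∈ V (s, n) j := fun j =>
              hct.eventually ((hV ⟨s, n⟩ j hn).1.isOpen.mem_nhds (hV ⟨s, n⟩ j hn).2.2)
            filter_upwards [Filter.eventually_all.2 this] with q hq _
            exact hq
          · exact Filter.Eventually.of_forall fun q h => absurd h hn
      obtain ⟨N, hN1, hN2, hN3⟩ := eventually_nhds_iff.1 (Filter.eventually_all.2 hev)
      obtain ⟨t, ht, hpt, htN⟩ := compact_exists_isClopen_in_isOpen hN2 hN3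
      refine ⟨t, ?_⟩
      set T' := Function.update T m t with hT'
      have hTT : ∀ i < m, T' i = T i := fun i hi => by rw [hT', Function.update_of_ne (by omega)]
      have hTm : T' m = t := by simp [hT']
      refine ⟨hTm ▸ ht, p, hpY, hTm ▸ hpt, ?_⟩
      intro z n hn
      have hz : ∀ i < m, ex (fun i => z i) i = z i := fun i hi => by simp [ex, hi]
      have e1 : mmW dm mp T' z n (m - n) = mmW dm mp T (ex (fun i => z i)) n (m - n) :=
        mmW_congr dm mp fun i _ _ => ⟨hTT i (by omega), (hz i (by omega)).symm⟩
      have e2 : mmU mp T' z n (m - n) = mmU mp T (ex (fun i => z i)) n (m - n) :=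
        mmU_congr mp fun i _ _ => ⟨hTT i (by omega), (hz i (by omega)).symm⟩
      have e3 : mmU mp T' z (n+1) (m - (n+1)) = mmU mp T (ex (fun i => z i)) (n+1) (m - (n+1)) :=
        mmU_congr mp fun i _ _ => ⟨hTT i (by omega), (hz i (by omega)).symm⟩
      rw [e1, e2, e3, hTm]
      have hs := fun q hq => hN1 q hq ((fun i => z i), ⟨n, by omega⟩)
      refine ⟨hp ((fun i => z i), ⟨n, by omega⟩), fun q hq hqW => (hs q (htN hq) hqW).1, ?_⟩
      intro hn1 j hj
      have := hV ((fun i => z i), ⟨n, by omega⟩) ⟨j, hj⟩ hn1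
      rw [hTT n (by omega), ← hz n (by omega)]
      exact ⟨_, this.1.isClosed, this.2.1, fun q hq hqW => (hs q (htN hq) hqW).2 hn1 _⟩
  obtain ⟨T, hT⟩ := hex
  choose hTc p hpY hpT hP using hT
  have hgood : ∀ i b, Good Y (dm (T i) b) (mp (T i) b) b ∧ (∀ z ∈ (dm (T i) b), mp (T i) b z ∈ T i) ∧
      (∀ j, IsOpen (O (T i) b j)) ∧ (dm (T i) b) = ⋂ j, O (T i) b j := fun i b =>
    hE _ _ ⟨hTc i, p i, hpY i, hpT i⟩
  -- approximations
  let a : Cantor → ℕ → ℕ → Cantor := fun z n m => mmU mp T z n (m - n) (p m)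
  have ha : ∀ z n m m', n ≤ m → m ≤ m' → a z n m' = mmU mp T z n (m - n) (a z m m') ∧
      a z m m' ∈ mmW dm mp T z n (m - n) := by
    intro z n m m' h1 h2
    have e := mmU_add mp T z n (m - n) (m' - m) (p m')
    have e' := mmW_add dm mp T z n (m - n) (m' - m) (p m')
    rw [show m - n + (m' - m) = m' - n by omega, show n + (m - n) = m by omega] at e e'
    exact ⟨e, (e' (hP m' z n (by omega)).1).1⟩
  have hsucc : ∀ z n m, n < m → a z n m = mp (T n) (z n) (a z (n+1) m) ∧ a z (n+1) m ∈ dm (T n) (z n) := by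
    intro z n m h
    have := (hP m z n h.le).1
    simp only [a]
    rw [show m - n = (m - (n+1)) + 1 by omega] at this ⊢
    exact ⟨rfl, this.2⟩
  have haT : ∀ z n m, n ≤ m → a z n m ∈ T n := by
    intro z n m h
    rcases h.eq_or_lt with rfl | h
    · simp only [a, Nat.sub_self]; exact hpT n
    · rw [(hsucc z n m h).1]
      exact (hgood n (z n)).2.1 _ (hsucc z n m h).2
  have hagree : ∀ z n m m', n ≤ m → m ≤ m' → ∀ j < m, a z n m' j = a z n m j := by
    intro z n m m' h1 h2 j hj
    have h3 := ha z n m m' h1 h2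
    rw [h3.1, (hP m z n h1).2.1 _ (haT z m m' h2) h3.2 j hj]
  let x : Cantor → ℕ → Cantor := fun z n i => a z n (n + i + 1) i
  have hx : ∀ z n m j, n ≤ m → j < m → x z n j = a z n m j := by
    intro z n m j h1 h2
    rcases le_total m (n+j+1) with h | h
    · exact hagree z n m _ h1 h j h2
    · exact (hagree z n _ m (by omega) h j (by omega)).symm
  have hlim : ∀ z n, Filter.Tendsto (fun m => a z n m) Filter.atTop (𝓝 (x z n)) := by
    intro z n
    rw [tendsto_pi_nhds]
    intro j
    refine tendsto_const_nhds.congr' ?_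
    filter_upwards [Filter.eventually_ge_atTop (n + j + 1)] with m hm
    exact hx z n m j (by omega) (by omega)
  have hxd : ∀ z n, x z (n+1) ∈ dm (T n) (z n) := by
    intro z n
    rw [(hgood n (z n)).2.2.2]
    refine mem_iInter.2 fun j => ?_
    obtain ⟨V, hV1, hV2, hV3⟩ := (hP (n+1+j+1) z n (by omega)).2.2 (by omega) j (by omega)
    refine hV2 (hV1.mem_of_tendsto (hlim z (n+1)) ?_)
    filter_upwards [Filter.eventually_ge_atTop (n + 1 + j + 1)] with m hm
    rw [(ha z (n+1) (n+1+j+1) m (by omega) hm).1]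
    exact hV3 _ (haT _ _ _ hm) (ha z n (n+1+j+1) m (by omega) hm).2
  have hxs : ∀ z n, x z n = mp (T n) (z n) (x z (n+1)) := by
    intro z n
    refine tendsto_nhds_unique (hlim z n) ?_
    have h1 := (hgood n (z n)).1.ct _ (hxd z n)
    have h2 : Filter.Tendsto (fun m => a z (n+1) m) Filter.atTop (𝓝[dm (T n) (z n)] (x z (n+1))) := by
      rw [tendsto_nhdsWithin_iff]
      refine ⟨hlim z _, ?_⟩
      filter_upwards [Filter.eventually_ge_atTop (n + 1)] with m hm
      exact (hsucc z n m hm).2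
    refine (h1.tendsto.comp h2).congr' ?_
    filter_upwards [Filter.eventually_ge_atTop (n + 1)] with m hm
    exact (hsucc z n m hm).1.symm
  have hxc : Continuous (fun z => x z 0) := by
    apply continuous_of_agree
    intro i
    refine ⟨i + 1, fun z z' h => ?_⟩
    simp only [x, a]
    rw [mmU_congr mp (T := T) (T' := T) (z := z) (z' := z') fun i _ h2 => ⟨rfl, h i (by omega)⟩]
  have hxloc : ∀ z z' n, (∀ i, n ≤ i → z i = z' i) → x z n = x z' n := by
    intro z z' n h
    funext i
    simp only [x, a]
    rw [mmU_congr mp (T := T) (T' := T) (z := z) (z' := z') fun i h1 _ => ⟨rfl, h i h1⟩]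
  have hmem : ∀ z n, (x z n ∈ Y ↔ (x z (n+1) ∈ Y ↔ z n = false)) := by
    intro z n
    have h1 := (hgood n (z n)).1.mem _ (hxd z n)
    rw [← hxs z n] at h1
    cases hz : z n <;> simp [hz] at h1 ⊢ <;> tauto
  have hflip : ∀ n z k, k ≤ n → (x z k ∈ Y ↔ x (flipAt n z) k ∉ Y) := by
    intro n z k hk
    induction hk using Nat.decreasingInduction with
    | self =>
      have h1 : x (flipAt n z) (n+1) = x z (n+1) := hxloc _ _ _ fun i hi => by
        simp [flipAt, show i ≠ n by omega]
      have h2 : flipAt n z n = !(z n) := by simp [flipAt]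
      rw [hmem z n, hmem (flipAt n z) n, h1, h2]
      cases z n <;> simp
    | of_succ k hk ih =>
      have h2 : flipAt n z k = z k := by simp [flipAt, hk.ne]
      rw [hmem z k, hmem (flipAt n z) k, h2, ih]
      tauto
  refine no_flip_set (B := (fun z => x z 0) ⁻¹' Y) (hxc.measurable hYB) fun n z => ?_
  exact hflip n z 0 (Nat.zero_le _)

open Set Topology

def InfD (y : ℕ → Gam) : Prop := {n | (y n).1 = true}.Infinite

noncomputable def phi (y : ℕ → Gam) : Cantor := fun j => (y (Nat.nth (fun n => (y n).1 = true) j)).2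

theorem phi_eq (y : ℕ → Gam) (n : ℕ) (h : (y n).1 = true) :
    phi y (Nat.count (fun n => (y n).1 = true) n) = (y n).2 := by
  simp only [phi]
  rw [Nat.nth_count (p := fun n => (y n).1 = true) h]

theorem phi_cont : ContinuousOn phi {y | InfD y} := by
  rw [continuousOn_pi]
  intro j y hy
  have hy : InfD y := hy
  set n0 := Nat.nth (fun n => (y n).1 = true) j with hn0
  have hd : (y n0).1 = true := Nat.nth_mem_of_infinite hy j
  have hc : Nat.count (fun n => (y n).1 = true) n0 = j := Nat.count_nth_of_infinite hy j
  refine (continuousWithinAt_const (b := phi y j)).congr_of_eventuallyEq ?_ rfl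
  refine Filter.Eventually.filter_mono nhdsWithin_le_nhds ?_
  filter_upwards [ev_agree y (n0+1)] with y' hy'
  have hc' : Nat.count (fun n => (y' n).1 = true) n0 = j := by
    rw [← hc]
    rw [Nat.count_eq_card_filter_range, Nat.count_eq_card_filter_range]
    congr 1
    apply Finset.filter_congr
    intro i hi
    rw [hy' i (by have := Finset.mem_range.1 hi; omega)]
  have h1 := phi_eq y n0 hd
  have h2 := phi_eq y' n0 (by rw [hy' n0 (by omega)]; exact hd)
  rw [hc] at h1
  rw [hc'] at h2
  rw [h1, h2, hy' n0 (by omega)]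

theorem infD_gd : IsGδ {y | InfD y} := by
  have e : {y | InfD y} = ⋂ n : ℕ, ⋃ m : ℕ, ⋃ (_ : n < m), {y : ℕ → Gam | (y m).1 = true} := by
    ext y
    simp only [mem_iInter, mem_iUnion]
    change {n | (y n).1 = true}.Infinite ↔ _
    rw [Set.infinite_iff_exists_gt]
    refine forall_congr' fun n => exists_congr fun m => ?_
    change (y m).1 = true ∧ _ ↔ ∃ (_ : n < m), (y m).1 = true
    simp [and_comm]
  rw [e]
  refine IsGδ.iInter fun n => IsOpen.isGδ ?_
  refine isOpen_iUnion fun m => isOpen_iUnion fun _ => ?_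
  exact (isOpen_discrete {g : Gam | g.1 = true}).preimage (continuous_apply (A := fun _ : ℕ => Gam) m)

def EvFT (y : ℕ → Gam) : Prop := ∃ N, ∀ n, N ≤ n → y n = (false, true)

theorem evFT_gd : IsGδ {y | ¬ EvFT y} := by
  have e : {y | ¬ EvFT y} = ⋂ N : ℕ, ⋃ n : ℕ, ⋃ (_ : N ≤ n), {y : ℕ → Gam | y n ≠ (false, true)} := by
    ext y
    simp only [mem_iInter, mem_iUnion]
    change (¬ ∃ N, ∀ n, N ≤ n → y n = (false, true)) ↔ ∀ N, ∃ n, ∃ _ : N ≤ n, y n ≠ _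
    push Not
    simp
  rw [e]
  refine IsGδ.iInter fun n => IsOpen.isGδ ?_
  refine isOpen_iUnion fun m => isOpen_iUnion fun _ => ?_
  exact (isOpen_discrete {g : Gam | g ≠ (false, true)}).preimage (continuous_apply (A := fun _ : ℕ => Gam) m)

theorem EvFT.not_inf {y : ℕ → Gam} (h : EvFT y) : ¬ InfD y := by
  obtain ⟨N, hN⟩ := h
  intro hi
  obtain ⟨m, hm, hNm⟩ := Set.infinite_iff_exists_gt.1 hi N
  have hm : (y m).1 = true := hm
  rw [hN m hNm.le] at hm
  simp at hm

def XS (X : Set Cantor) : Set (ℕ → Gam) := {y | (InfD y ∧ phi y ∈ X) ∨ EvFT y}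

theorem XS_meas {X : Set Cantor} (hX : MeasurableSet X) : MeasurableSet (XS X) := by
  have h1 : MeasurableSet {y : ℕ → Gam | InfD y} := infD_gd.measurableSet
  have h2 : MeasurableSet {y : ℕ → Gam | EvFT y} := by
    have := evFT_gd.measurableSet.compl
    convert this using 1
    ext y; simp
  have h3 : MeasurableSet {y : ℕ → Gam | InfD y ∧ phi y ∈ X} := by
    have hc := continuousOn_iff_continuous_domRestrict.1 phi_cont
    have := h1.subtype_image (hc.measurable hX)
    convert this using 1
    ext y
    constructor
    · rintro ⟨h, h'⟩; exact ⟨⟨y, h⟩, h', rfl⟩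
    · rintro ⟨⟨y, h⟩, h', rfl⟩; exact ⟨h, h'⟩
  exact h3.union h2

theorem mem_XS_of_inf {X : Set Cantor} {y : ℕ → Gam} (h : InfD y) : y ∈ XS X ↔ phi y ∈ X := by
  change (_ ∨ _) ↔ _
  have := fun h' : EvFT y => h'.not_inf h
  tauto

theorem mem_XS_of_fin {X : Set Cantor} {y : ℕ → Gam} (h : ¬ InfD y) : y ∈ XS X ↔ EvFT y := by
  change (_ ∨ _) ↔ _
  tauto

theorem exists_rho {X Y : Set Cantor} (hX : MeasurableSet X) (hYB : MeasurableSet Y)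
    (hY : IsHomogeneous Y) (hR : ¬ RR Y) (hle : WadgeLe X Y) {t : Set Cantor} (ht : IsClopen t)
    (hne : (Y ∩ t).Nonempty) :
    ∃ ρ : (ℕ → Gam) → Cantor, Continuous ρ ∧ ∀ x, ρ x ∈ closure Y ∩ t ∧ (ρ x ∈ Y ↔ x ∈ XS X) := by
  have hC : IsClosed (closure Y ∩ t) := isClosed_closure.inter ht.isClosed
  rcases wadge_lemma (XS X) Y (XS_meas hX) hYB (closure Y ∩ t) hC
    (hne.mono (inter_subset_inter_left _ subset_closure)) with h | ⟨f, hf, hfY⟩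
  · exact h
  exfalso
  obtain ⟨h, hh, rfl⟩ := hle
  set C := closure Y ∩ t with hCdef
  have hD : IsGδ (C ∩ f ⁻¹' {y | InfD y}) := gdelta_preimage hC.isGδ hf infD_gd
  obtain ⟨D, g, hg⟩ := Good.globalize hY ht hne hD (g := fun y => h (phi (f y)))
    (hh.comp_continuousOn (phi_cont.comp (hf.mono inter_subset_left) fun x hx => hx.2))
    (by
      rintro x ⟨hx1, hx2⟩
      have hx2 : InfD (f x) := hx2
      rw [hfY x hx1, mem_XS_of_inf hx2]; rfl)
    (by
      have h2 : IsGδ (C ∩ f ⁻¹' {y | ¬ EvFT y}) := gdelta_preimage hC.isGδ hf evFT_gd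
      convert (RR.of_gdelta h2).diff (RR.of_gdelta hD) using 1
      ext x
      simp only [mem_sdiff]
      refine and_congr_left fun hx => ?_
      constructor
      · intro hxY
        have hxC : x ∈ C := ⟨subset_closure hxY.1, hxY.2⟩
        refine ⟨hxC, ?_⟩
        have h3 : ¬ InfD (f x) := fun h => hx ⟨hxC, h⟩
        have h4 := (hfY x hxC).1 hxY.1
        rw [mem_XS_of_fin h3] at h4
        exact h4
      · rintro ⟨hxC, h4⟩
        have h4 : ¬ EvFT (f x) := h4
        have h3 : ¬ InfD (f x) := fun h => hx ⟨hxC, h⟩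
        rw [← mem_XS_of_fin (X := h ⁻¹' Y) h3] at h4
        exact ⟨(hfY x hxC).2 h4, hxC.2⟩)
  exact martin_monk hYB hY hR hg

/-- A sequence extends a list. -/
def LExt (l : List Gam) (y : ℕ → Gam) : Prop := ∀ i (h : i < l.length), y i = l[i]

theorem LExt.append_left {l l' : List Gam} {y : ℕ → Gam} (h : LExt (l ++ l') y) : LExt l y := by
  intro i hi
  have := h i (by simp; omega)
  rwa [List.getElem_append_left hi] at this

theorem LExt.right {l l' : List Gam} {y : ℕ → Gam} (h : LExt (l ++ l') y) (i : ℕ) (hi : i < l'.length) :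
    y (l.length + i) = l'[i] := by
  have := h (l.length + i) (by simp; omega)
  rw [this, List.getElem_append_right (by omega)]
  simp

def Cat (l : List Gam) (g : Gam) : ℕ → Gam := fun i => l.getD i g

theorem Cat_ext (l : List Gam) (g : Gam) (k : ℕ) : LExt (l ++ List.replicate k g) (Cat l g) := by
  intro i hi
  rcases lt_or_ge i l.length with h | h
  · rw [List.getElem_append_left h]; simp [Cat, h]
  · rw [List.getElem_append_right h]; simp [Cat, h]

theorem Cat_ge (l : List Gam) (g : Gam) (i : ℕ) (h : l.length ≤ i) : Cat l g i = g := by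
  simp [Cat, h]

theorem Cat_not_inf (l : List Gam) (b : Bool) : ¬ InfD (Cat l (false, b)) := by
  intro hi
  obtain ⟨m, hm, hNm⟩ := Set.infinite_iff_exists_gt.1 hi l.length
  have hm : (Cat l (false, b) m).1 = true := hm
  rw [Cat_ge _ _ _ hNm.le] at hm
  simp at hm

theorem exists_K {X Y : Set Cantor} {ρ : (ℕ → Gam) → Cantor} (hρ : Continuous ρ)
    (hm : ∀ x, ρ x ∈ Y ↔ x ∈ XS X) (l : List Gam) : ∃ k, ∀ y y',
      LExt (l ++ List.replicate k (false, false)) y → LExt (l ++ List.replicate k (false, true)) y' →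
      ρ y ≠ ρ y' := by
  have h1 : ρ (Cat l (false, false)) ∉ Y := by
    rw [hm, mem_XS_of_fin (Cat_not_inf _ _)]
    rintro ⟨N, hN⟩
    have := hN (N + l.length) (by omega)
    rw [Cat_ge _ _ _ (by omega)] at this
    simp at this
  have h2 : ρ (Cat l (false, true)) ∈ Y := by
    rw [hm, mem_XS_of_fin (Cat_not_inf _ _)]
    exact ⟨l.length, fun n hn => Cat_ge _ _ _ hn⟩
  have hne : ρ (Cat l (false, false)) ≠ ρ (Cat l (false, true)) := fun h => h1 (h ▸ h2)
  obtain ⟨i, hi⟩ := Function.ne_iff.1 hne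
  have key : ∀ x : ℕ → Gam, ∃ m, ∀ y, (∀ j < m, y j = x j) → ρ y i = ρ x i := by
    intro x
    have ho : IsOpen {y | ρ y i = ρ x i} :=
      (isOpen_discrete {ρ x i}).preimage ((continuous_apply i).comp hρ)
    obtain ⟨I, v, h4, h5⟩ := isOpen_pi_iff.1 ho x rfl
    refine ⟨I.sup id + 1, fun y hy => h5 ?_⟩
    intro j hj
    have : j ≤ I.sup id := Finset.le_sup (f := id) hj
    rw [hy j (by omega)]
    exact (h4 j hj).2
  obtain ⟨m1, hm1⟩ := key (Cat l (false, false))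
  obtain ⟨m2, hm2⟩ := key (Cat l (false, true))
  refine ⟨m1 + m2, fun y y' hy hy' he => hi ?_⟩
  rw [← hm1 y, ← hm2 y', he]
  · intro j hj
    rw [hy' j (by simp; omega), ← Cat_ext l _ (m1+m2) j]
  · intro j hj
    rw [hy j (by simp; omega), ← Cat_ext l _ (m1+m2) j]

def HW (K : List Gam → ℕ) (x : Cantor) : ℕ → List Gam
  | 0 => []
  | n+1 => HW K x n ++ (List.replicate (K (HW K x n)) (false, x n) ++ [(true, x n)])

theorem HW_congr (K : List Gam → ℕ) {x x' : Cantor} {n : ℕ} (h : ∀ i < n, x i = x' i) :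
    HW K x n = HW K x' n := by
  induction n with
  | zero => rfl
  | succ n ih => simp only [HW, ih fun i hi => h i (by omega), h n (by omega)]

theorem HW_len (K : List Gam → ℕ) (x : Cantor) (n : ℕ) : n ≤ (HW K x n).length := by
  induction n with
  | zero => simp
  | succ n ih => simp [HW]; omega

theorem HW_prefix (K : List Gam → ℕ) (x : Cantor) {n m : ℕ} (h : n ≤ m) : HW K x n <+: HW K x m := by
  induction m, h using Nat.le_induction with
  | base => exact List.prefix_rfl
  | succ m _ ih => exact ih.trans (List.prefix_append _ _)

def HY (K : List Gam → ℕ) (x : Cantor) : ℕ → Gam := fun i => (HW K x (i+1)).getD i (false, false)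

theorem HY_ext (K : List Gam → ℕ) (x : Cantor) (n : ℕ) : LExt (HW K x n) (HY K x) := by
  intro i hi
  have h1 := HW_len K x (i+1)
  simp only [HY]
  rw [List.getD_eq_getElem _ _ (by omega)]
  rcases le_total n (i+1) with h | h
  · exact ((HW_prefix K x h).getElem hi).symm
  · exact (HW_prefix K x h).getElem (by omega)

theorem HY_count (K : List Gam → ℕ) (x : Cantor) (n : ℕ) :
    Nat.count (fun i => (HY K x i).1 = true) (HW K x n).length = n := by
  induction n with
  | zero => simp [HW]
  | succ n ih =>
    have h1 := HY_ext K x (n+1)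
    simp only [HW] at h1
    have h2 := h1.right
    simp only [HW, List.length_append, List.length_replicate, List.length_singleton]
    rw [← add_assoc, Nat.count_add, Nat.count_add, ih]
    have e1 : Nat.count (fun k => (HY K x ((HW K x n).length + k)).1 = true) (K (HW K x n)) = 0 := by
      rw [Nat.count_eq_card_filter_range, Finset.card_eq_zero, Finset.filter_eq_empty_iff]
      intro i hi
      have hi := Finset.mem_range.1 hi
      rw [h2 i (by simp; omega), List.getElem_append_left (by simpa using hi)]
      simp
    have e2 : (HY K x ((HW K x n).length + K (HW K x n))).1 = true := by
      rw [h2 _ (by simp), List.getElem_append_right (by simp)]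
      simp
    rw [e1, Nat.count_succ]
    simp [e2]

theorem HY_digit (K : List Gam → ℕ) (x : Cantor) (n : ℕ) :
    ∃ m, n ≤ m ∧ HY K x m = (true, x n) ∧ Nat.count (fun i => (HY K x i).1 = true) m = n := by
  have h1 := HY_ext K x (n+1)
  simp only [HW] at h1
  have h2 := h1.right
  have e2 : (HY K x ((HW K x n).length + K (HW K x n))) = (true, x n) := by
    rw [h2 _ (by simp), List.getElem_append_right (by simp)]
    simp
  refine ⟨_, ?_, e2, ?_⟩
  · have := HW_len K x n; omega
  · have := HY_count K x (n+1)
    simp only [HW, List.length_append, List.length_replicate, List.length_singleton] at this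
    rw [← add_assoc, Nat.count_succ, e2] at this
    simpa using this

theorem HY_inf (K : List Gam → ℕ) (x : Cantor) : InfD (HY K x) := by
  apply Set.infinite_iff_exists_gt.2
  intro n
  obtain ⟨m, h1, h2, _⟩ := HY_digit K x (n+1)
  exact ⟨m, by change (HY K x m).1 = true; rw [h2], by omega⟩

theorem HY_phi (K : List Gam → ℕ) (x : Cantor) : phi (HY K x) = x := by
  funext n
  obtain ⟨m, h1, h2, h3⟩ := HY_digit K x n
  have := phi_eq (HY K x) m (by rw [h2])
  rw [h3, h2] at this
  exact this

theorem HY_cont (K : List Gam → ℕ) : Continuous (HY K) := by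
  apply continuous_of_agree
  intro i
  refine ⟨i+1, fun x y h => ?_⟩
  simp only [HY]
  rw [HW_congr K h]

theorem harrington {X Y : Set Cantor} (hX : MeasurableSet X) (hYB : MeasurableSet Y)
    (hY : IsHomogeneous Y) (hR : ¬ RR Y) (hle : WadgeLe X Y) {t : Set Cantor} (ht : IsClopen t)
    (hne : (Y ∩ t).Nonempty) :
    ∃ F : Cantor → Cantor, Continuous F ∧ Function.Injective F ∧
      ∀ x, F x ∈ closure Y ∩ t ∧ (F x ∈ Y ↔ x ∈ X) := by
  obtain ⟨ρ, hρ, hm⟩ := exists_rho hX hYB hY hR hle ht hne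
  choose K hK using exists_K hρ fun x => (hm x).2
  have hinj : ∀ x x' : Cantor, ∀ n, (∀ i < n, x i = x' i) → x n = false → x' n = true →
      ρ (HY K x) ≠ ρ (HY K x') := by
    intro x x' n h h1 h2
    have e1 := HY_ext K x (n+1)
    have e2 := HY_ext K x' (n+1)
    simp only [HW, ← List.append_assoc] at e1 e2
    rw [h1] at e1
    rw [← HW_congr K h, h2] at e2
    exact hK _ _ _ e1.append_left e2.append_left
  refine ⟨fun x => ρ (HY K x), hρ.comp (HY_cont K), ?_, fun x => ⟨(hm _).1, ?_⟩⟩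
  · intro x x' he
    by_contra hne
    have hex := Function.ne_iff.1 hne
    classical
    have hmin : ∀ i < Nat.find hex, x i = x' i := fun i hi => not_not.1 (Nat.find_min hex hi)
    have hs := Nat.find_spec hex
    cases h1 : x (Nat.find hex) <;> cases h2 : x' (Nat.find hex)
    · exact hs (h1.trans h2.symm)
    · exact hinj x x' _ hmin h1 h2 he
    · exact hinj x' x _ (fun i hi => (hmin i hi).symm) h2 h1 he.symm
    · exact hs (h1.trans h2.symm)
  · rw [(hm _).2, mem_XS_of_inf (HY_inf K x), HY_phi]

theorem wadge_of_homeo {X Y : Set Cantor} (hX : MeasurableSet X) (hYB : MeasurableSet Y)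
    (hY : IsHomogeneous Y) (hR : ¬ RR Y) (e : X ≃ₜ Y) : WadgeLe X Y := by
  have hsnd : Continuous fun (x : ℕ → Gam) => (fun n => (x n).2 : Cantor) :=
    continuous_pi fun n => continuous_snd.comp (continuous_apply n)
  have hpair : Continuous fun (x : Cantor) => (fun n => (false, x n) : ℕ → Gam) :=
    continuous_pi fun n => continuous_const.prodMk (continuous_apply n)
  have hYne : Y.Nonempty := by
    by_contra h
    rw [not_nonempty_iff_eq_empty] at h
    exact hR (h ▸ RR.empty)
  rcases wadge_lemma ((fun (x : ℕ → Gam) => (fun n => (x n).2 : Cantor)) ⁻¹' X) Y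
    (hsnd.measurable hX) hYB univ isClosed_univ univ_nonempty with ⟨ρ, hρ, h⟩ | ⟨f, hf, h⟩
  · refine ⟨fun x => ρ (fun n => (false, x n)), hρ.comp hpair, ?_⟩
    ext x
    exact ((h fun n => (false, x n)).2).symm
  exfalso
  obtain ⟨G, F, g1, g2, g3, g4, g5⟩ := lavrentiev e
  set f' : Cantor → Cantor := fun y n => (f y n).2 with hf'
  have hfc : Continuous f' := hsnd.comp (continuousOn_univ.1 hf)
  have hfY : ∀ y, y ∈ Y ↔ f' y ∉ X := fun y => h y trivial
  have hD : IsGδ (f' ⁻¹' G) := by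
    have := gdelta_preimage (D := univ) IsGδ.univ hfc.continuousOn g1
    rwa [univ_inter] at this
  refine martin_monk hYB hY hR (D0 := f' ⁻¹' G) (g0 := fun y => F (f' y)) ⟨hD, ?_, ?_, ?_⟩
  · exact g3.comp hfc.continuousOn fun x hx => hx
  · intro x hx
    rw [hfY, g5 _ hx]; simp
  · have : Y \ f' ⁻¹' G = (f' ⁻¹' G)ᶜ := by
      ext y
      simp only [mem_sdiff, mem_compl_iff, mem_preimage]
      have := @g2 (f' y)
      rw [hfY]
      tauto
    rw [this]
    exact (RR.of_gdelta hD).compl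

open Set Topology

def Crowded (α : Type*) [TopologicalSpace α] : Prop :=
  ∀ (x : α) (O : Set α), IsOpen O → x ∈ O → ∃ y ∈ O, y ≠ x

theorem clopen_split {β : Type*} [TopologicalSpace β] [CompactSpace β] [T2Space β]
    [TotallyDisconnectedSpace β] (hcr : Crowded β) {Q F F0 F1 : Set β} (hQ : IsClopen Q)
    (hQn : Q.Nonempty) (hF : IsClosed F) (hFi : interior F = ∅) (h0 : IsClosed F0) (h1 : IsClosed F1)
    (h0F : F0 ⊆ F) (h1F : F1 ⊆ F) (hd : Disjoint F0 F1) :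
    ∃ W, IsClopen W ∧ F1 ⊆ W ∧ Disjoint F0 W ∧ (Q ∩ W).Nonempty ∧ (Q \ W).Nonempty := by
  have ho : IsOpen (Q \ F) := hQ.isOpen.sdiff hF
  have hne : (Q \ F).Nonempty := by
    by_contra h
    rw [not_nonempty_iff_eq_empty] at h
    replace h : Q ⊆ F := sdiff_eq_bot_iff.1 h
    have := interior_maximal h hQ.isOpen
    rw [hFi] at this
    exact hQn.ne_empty (subset_empty_iff.1 this)
  obtain ⟨u, hu⟩ := hne
  obtain ⟨v, hv, hvu⟩ := hcr u _ ho hu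
  have hZ : IsClosed (F1 ∪ {v}) := h1.union isClosed_singleton
  have hU : IsOpen (F0 ∪ {u})ᶜ := (h0.union isClosed_singleton).isOpen_compl
  have hsub : F1 ∪ {v} ⊆ (F0 ∪ {u})ᶜ := by
    rintro x hx hx'
    rcases hx with hx | hx <;> rcases hx' with hx' | hx'
    · exact (disjoint_left.1 hd) hx' hx
    · rw [mem_singleton_iff] at hx'; subst hx'; exact hu.2 (h1F hx)
    · rw [mem_singleton_iff] at hx; subst hx; exact hv.2 (h0F hx')
    · rw [mem_singleton_iff] at hx hx'; exact hvu (hx.symm.trans hx')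
  obtain ⟨W, hW, hZW, hWU⟩ := exists_clopen_of_closed_subset_open hZ hU hsub
  refine ⟨W, hW, fun x hx => hZW (Or.inl hx), ?_, ⟨v, hv.1, hZW (Or.inr rfl)⟩, ⟨u, hu.1, fun h => ?_⟩⟩
  · rw [disjoint_left]; exact fun x hx hxW => hWU hxW (Or.inl hx)
  · exact hWU h (Or.inr rfl)

/-- States of the back-and-forth construction. -/
structure BF {α β : Type*} [TopologicalSpace α] [TopologicalSpace β] (X : Set α) (Y : Set β)
    (G : Set (α × β)) (p : α → ℕ) (q : β → ℕ) : Prop where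
  closed : IsClosed G
  inj1 : ∀ x y y', (x, y) ∈ G → (x, y') ∈ G → y = y'
  inj2 : ∀ x x' y, (x, y) ∈ G → (x', y) ∈ G → x = x'
  nwd1 : interior (Prod.fst '' G) = ∅
  nwd2 : interior (Prod.snd '' G) = ∅
  lp : IsLocallyConstant p
  lq : IsLocallyConstant q
  rng : range p = range q
  pq : ∀ x y, (x, y) ∈ G → p x = q y
  pres : ∀ x y, (x, y) ∈ G → (x ∈ X ↔ y ∈ Y)

theorem BF.swap {α β : Type*} [TopologicalSpace α] [TopologicalSpace β] {X : Set α} {Y : Set β} {G : Set (α × β)} {p : α → ℕ} {q : β → ℕ} (h : BF X Y G p q) :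
    BF Y X (Prod.swap ⁻¹' G) q p where
  closed := h.closed.preimage continuous_swap
  inj1 := fun x y y' h1 h2 => h.inj2 _ _ _ h1 h2
  inj2 := fun x y y' h1 h2 => h.inj1 _ _ _ h1 h2
  nwd1 := by
    have : Prod.fst '' (Prod.swap ⁻¹' G) = Prod.snd '' G := by
      ext y; simp
    rw [this]; exact h.nwd2
  nwd2 := by
    have : Prod.snd '' (Prod.swap ⁻¹' G) = Prod.fst '' G := by
      ext y; simp
    rw [this]; exact h.nwd1
  lp := h.lq
  lq := h.lp
  rng := h.rng.symm
  pq := fun x y hxy => (h.pq _ _ hxy).symm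
  pres := fun x y hxy => (h.pres _ _ hxy).symm


theorem BF.stepA {α β : Type*} [TopologicalSpace α] [CompactSpace α]
    [TopologicalSpace β] [CompactSpace β] [T2Space β]
    [TotallyDisconnectedSpace β] {X : Set α} {Y : Set β} {G : Set (α × β)} {p : α → ℕ} {q : β → ℕ}
    (h : BF X Y G p q) (hcr : Crowded β) (b : α → Bool) (hb : IsLocallyConstant b) :
    ∃ b' : β → Bool, BF X Y G (fun x => 2 * p x + (b x).toNat) (fun y => 2 * q y + (b' y).toNat) := by
  classical
  have hcl : ∀ c, IsClosed (Prod.snd '' (G ∩ {z | b z.1 = c})) := by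
    intro c
    refine IsCompact.isClosed (IsCompact.image (IsClosed.isCompact ?_) continuous_snd)
    exact h.closed.inter ((hb.isClosed_fiber c).preimage continuous_fst)
  have hF : IsClosed (Prod.snd '' G) := (h.closed.isCompact.image continuous_snd).isClosed
  have hr : ∀ c, (∃ x, p x = c) ↔ ∃ y, q y = c := fun c => by
    have := Set.ext_iff.1 h.rng c
    simpa using this
  have key : ∀ c, ∃ W, IsClopen W ∧ (∀ x y, (x, y) ∈ G → q y = c → (y ∈ W ↔ b x = true)) ∧
      ((∃ x, p x = c ∧ b x = true) ↔ ∃ y, q y = c ∧ y ∈ W) ∧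
      ((∃ x, p x = c ∧ b x = false) ↔ ∃ y, q y = c ∧ y ∉ W) := by
    intro c
    by_cases h1 : ∃ x, p x = c ∧ b x = true
    · by_cases h0 : ∃ x, p x = c ∧ b x = false
      · obtain ⟨W, w1, w2, w3, w4, w5⟩ := clopen_split hcr (h.lq.isClopen_fiber c)
          ((hr c).1 ⟨h1.choose, h1.choose_spec.1⟩) hF h.nwd2 (hcl false) (hcl true)
          (image_mono inter_subset_left) (image_mono inter_subset_left) (by
            rw [disjoint_left]
            rintro _ ⟨⟨x, y⟩, ⟨hz1, hz2⟩, rfl⟩ ⟨⟨x', y'⟩, ⟨hw1, hw2⟩, hy⟩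
            have hy : y' = y := hy
            subst hy
            have := h.inj2 _ _ _ hz1 hw1
            subst this
            have hz2 : b x = false := hz2
            have hw2 : b x = true := hw2
            simp [hz2] at hw2)
        refine ⟨W, w1, ?_, iff_of_true h1 ?_, iff_of_true h0 ?_⟩
        · intro x y hxy hq
          constructor
          · intro hy
            by_contra hbx
            have hbx : b x = false := by simpa using hbx
            exact disjoint_left.1 w3 ⟨(x, y), ⟨hxy, hbx⟩, rfl⟩ hy
          · intro hbx
            exact w2 ⟨(x, y), ⟨hxy, hbx⟩, rfl⟩
        · obtain ⟨y, hy1, hy2⟩ := w4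
          exact ⟨y, hy1, hy2⟩
        · obtain ⟨y, hy1, hy2⟩ := w5
          exact ⟨y, hy1, hy2⟩
      · have hall : ∀ x, p x = c → b x = true := fun x hx => by
          by_contra hb
          exact h0 ⟨x, hx, by simpa using hb⟩
        refine ⟨univ, isClopen_univ, ?_, iff_of_true h1 ?_, iff_of_false h0 ?_⟩
        · intro x y hxy hq
          simp [hall x ((h.pq x y hxy).trans hq)]
        · obtain ⟨y, hy⟩ := (hr c).1 ⟨h1.choose, h1.choose_spec.1⟩
          exact ⟨y, hy, trivial⟩
        · rintro ⟨y, _, hy⟩; exact hy trivial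
    · have hall : ∀ x, p x = c → b x = false := fun x hx => by
        by_contra hb
        exact h1 ⟨x, hx, by simpa using hb⟩
      refine ⟨∅, isClopen_empty, ?_, iff_of_false h1 ?_, ?_⟩
      · intro x y hxy hq
        simp [hall x ((h.pq x y hxy).trans hq)]
      · rintro ⟨y, _, hy⟩; exact hy
      · constructor
        · rintro ⟨x, hx, _⟩
          obtain ⟨y, hy⟩ := (hr c).1 ⟨x, hx⟩
          exact ⟨y, hy, fun h => h⟩
        · rintro ⟨y, hy, _⟩
          obtain ⟨x, hx⟩ := (hr c).2 ⟨y, hy⟩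
          exact ⟨x, hx, hall x hx⟩
  choose W w1 w2 w3 w4 using key
  refine ⟨fun y => decide (y ∈ W (q y)), h.closed, h.inj1, h.inj2, h.nwd1, h.nwd2, ?_, ?_, ?_, ?_, h.pres⟩
  · exact h.lp.comp₂ hb fun (a : ℕ) (b : Bool) => 2 * a + b.toNat
  · refine h.lq.comp₂ ?_ fun (a : ℕ) (b : Bool) => 2 * a + b.toNat
    rw [IsLocallyConstant.iff_eventually_eq]
    intro y
    by_cases hy : y ∈ W (q y)
    · filter_upwards [h.lq.eventually_eq y, (w1 (q y)).isOpen.mem_nhds hy] with z h1 h2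
      rw [h1]; simp [hy, h2]
    · filter_upwards [h.lq.eventually_eq y, (w1 (q y)).compl.isOpen.mem_nhds hy] with z h1 h2
      have h2 : z ∉ W (q y) := h2
      rw [h1]; simp [hy, h2]
  · ext k
    simp only [mem_range]
    constructor
    · rintro ⟨x, rfl⟩
      cases hbx : b x
      · obtain ⟨y, hy1, hy2⟩ := (w4 (p x)).1 ⟨x, rfl, hbx⟩
        exact ⟨y, by simp [hy1, hy2]⟩
      · obtain ⟨y, hy1, hy2⟩ := (w3 (p x)).1 ⟨x, rfl, hbx⟩
        exact ⟨y, by simp [hy1, hy2]⟩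
    · rintro ⟨y, rfl⟩
      by_cases hy : y ∈ W (q y)
      · obtain ⟨x, hx1, hx2⟩ := (w3 (q y)).2 ⟨y, rfl, hy⟩
        exact ⟨x, by simp [hx1, hx2, hy]⟩
      · obtain ⟨x, hx1, hx2⟩ := (w4 (q y)).2 ⟨y, rfl, hy⟩
        exact ⟨x, by simp [hx1, hx2, hy]⟩
  · intro x y hxy
    have := w2 (q y) x y hxy rfl
    have e : decide (y ∈ W (q y)) = b x := by
      cases hbx : b x <;> simp [this, hbx]
    simp only [e, h.pq x y hxy]

/-- A refinement of a pair of colourings. -/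
def Refn {α β : Type*} (p : α → ℕ) (q : β → ℕ) (p' : α → ℕ) (q' : β → ℕ) : Prop :=
  ∃ r : ℕ → ℕ, (∀ x, p x = r (p' x)) ∧ ∀ y, q y = r (q' y)

theorem Refn.rfl' {α β : Type*} (p : α → ℕ) (q : β → ℕ) : Refn p q p q :=
  ⟨id, fun _ => rfl, fun _ => rfl⟩

theorem Refn.trans {α β : Type*} {p p' p'' : α → ℕ} {q q' q'' : β → ℕ} (h : Refn p q p' q')
    (h' : Refn p' q' p'' q'') : Refn p q p'' q'' := by
  obtain ⟨r, h1, h2⟩ := h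
  obtain ⟨r', h1', h2'⟩ := h'
  exact ⟨fun n => r (r' n), fun x => by rw [h1, h1'], fun x => by rw [h2, h2']⟩

theorem BF.stepAA {α β : Type*} [TopologicalSpace α] [CompactSpace α] [T2Space α]
    [TotallyDisconnectedSpace α] [TopologicalSpace β] [CompactSpace β] [T2Space β]
    [TotallyDisconnectedSpace β] {X : Set α} {Y : Set β} {G : Set (α × β)} {p : α → ℕ} {q : β → ℕ}
    (h : BF X Y G p q) (hcα : Crowded α) (hcβ : Crowded β) (a : α → Bool) (ha : IsLocallyConstant a)
    (b : β → Bool) (hb : IsLocallyConstant b) : ∃ p' q', BF X Y G p' q' ∧ Refn p q p' q' ∧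
      (∀ x x', p' x = p' x' → a x = a x') ∧ (∀ y y', q' y = q' y' → b y = b y') := by
  obtain ⟨a', h1⟩ := h.stepA hcβ a ha
  obtain ⟨b', h2⟩ := h1.swap.stepA hcα b hb
  have h3 := h2.swap
  refine ⟨_, _, h3, ⟨fun n => n / 2 / 2, ?_, ?_⟩, ?_, ?_⟩
  · intro x
    have := Bool.toNat_le (a x)
    have := Bool.toNat_le (b' x)
    dsimp only; omega
  · intro x
    have := Bool.toNat_le (a' x)
    have := Bool.toNat_le (b x)
    dsimp only; omega
  · intro x x' he
    have := Bool.toNat_le (a x)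
    have := Bool.toNat_le (b' x)
    have := Bool.toNat_le (a x')
    have := Bool.toNat_le (b' x')
    have : (a x).toNat = (a x').toNat := by omega
    exact (by decide : ∀ u v : Bool, u.toNat = v.toNat → u = v) _ _ this
  · intro x x' he
    have := Bool.toNat_le (b x)
    have := Bool.toNat_le (a' x)
    have := Bool.toNat_le (b x')
    have := Bool.toNat_le (a' x')
    have : (b x).toNat = (b x').toNat := by omega
    exact (by decide : ∀ u v : Bool, u.toNat = v.toNat → u = v) _ _ this

theorem limit_fun {α β : Type*} [TopologicalSpace α] 
    [TopologicalSpace β] [CompactSpace β]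
    (p : ℕ → α → ℕ) (q : ℕ → β → ℕ) (lp : ∀ n, IsLocallyConstant (p n))
    (lq : ∀ n, IsLocallyConstant (q n)) (rng : ∀ n, range (p n) = range (q n))
    (ref : ∀ n, Refn (p n) (q n) (p (n+1)) (q (n+1)))
    (sq : ∀ y y', (∀ n, q n y = q n y') → y = y') :
    ∃ h : α → β, Continuous h ∧ ∀ n x, q n (h x) = p n x := by
  have hne : ∀ x n, {y | q n y = p n x}.Nonempty := by
    intro x n
    have : p n x ∈ range (q n) := by rw [← rng n]; exact mem_range_self x
    exact this
  have hcl : ∀ x n, IsClosed {y | q n y = p n x} := fun x n => (lq n).isClosed_fiber _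
  have hanti : ∀ x, Antitone fun n => {y | q n y = p n x} := by
    intro x
    refine antitone_nat_of_succ_le fun n => ?_
    intro y (hy : q (n+1) y = p (n+1) x)
    obtain ⟨r, h1, h2⟩ := ref n
    change q n y = p n x
    rw [h1, h2, hy]
  have hex : ∀ x, ∃ y, ∀ n, q n y = p n x := by
    intro x
    obtain ⟨y, hy⟩ := IsCompact.nonempty_iInter_of_directed_nonempty_isCompact_isClosed
      (fun n => {y | q n y = p n x}) (hanti x).directed_ge (hne x) (fun n => (hcl x n).isCompact) (hcl x)
    exact ⟨y, fun n => mem_iInter.1 hy n⟩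
  choose h hh using hex
  refine ⟨h, ?_, fun n x => hh x n⟩
  rw [continuous_iff_continuousAt]
  intro x U hU
  obtain ⟨n, hn⟩ := exists_subset_nhds_of_isCompact' (V := fun n => {y | q n y = p n x})
    (hanti x).directed_ge (fun n => (hcl x n).isCompact) (hcl x) (U := U) (by
      intro y hy
      have : y = h x := sq _ _ fun n => (mem_iInter.1 hy n : q n y = p n x).trans (hh x n).symm
      rw [this]; exact hU)
  have := (lp n).eventually_eq x
  rw [Filter.mem_map]
  filter_upwards [this] with x' hx'
  apply hn
  change q n (h x') = p n x
  rw [hh, hx']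

theorem limit_homeo {α β : Type*} [TopologicalSpace α] [CompactSpace α]
    [TopologicalSpace β] [CompactSpace β]
    (p : ℕ → α → ℕ) (q : ℕ → β → ℕ) (lp : ∀ n, IsLocallyConstant (p n))
    (lq : ∀ n, IsLocallyConstant (q n)) (rng : ∀ n, range (p n) = range (q n))
    (ref : ∀ n, Refn (p n) (q n) (p (n+1)) (q (n+1)))
    (sp : ∀ y y', (∀ n, p n y = p n y') → y = y')
    (sq : ∀ y y', (∀ n, q n y = q n y') → y = y') :
    ∃ h : α ≃ₜ β, ∀ n x, q n (h x) = p n x := by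
  obtain ⟨f, hf, hf'⟩ := limit_fun p q lp lq rng ref sq
  obtain ⟨g, hg, hg'⟩ := limit_fun q p lq lp (fun n => (rng n).symm)
    (fun n => by obtain ⟨r, h1, h2⟩ := ref n; exact ⟨r, h2, h1⟩) sp
  refine ⟨⟨⟨f, g, fun x => sp _ _ fun n => by rw [hg', hf'], fun y => sq _ _ fun n => by rw [hf', hg']⟩,
    hf, hg⟩, hf'⟩

theorem BF.extend {α β : Type*} [TopologicalSpace α] [CompactSpace α] [T2Space α]
    [TotallyDisconnectedSpace α] [TopologicalSpace β] [CompactSpace β] [T2Space β]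
    [TotallyDisconnectedSpace β] {X : Set α} {Y : Set β} {G : Set (α × β)} {p : α → ℕ} {q : β → ℕ}
    (h : BF X Y G p q) (hcα : Crowded α) (hcβ : Crowded β) {ι : α → Cantor} (hι : Continuous ι)
    (hιi : Function.Injective ι) {κ : β → Cantor} (hκ : Continuous κ) (hκi : Function.Injective κ) :
    ∃ f : α ≃ₜ β, (∀ x, q (f x) = p x) ∧ ∀ x y, (x, y) ∈ G → f x = y := by
  have lι : ∀ n, IsLocallyConstant fun x => ι x n := fun n =>
    (IsLocallyConstant.iff_continuous _).2 ((continuous_apply n).comp hι)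
  have lκ : ∀ n, IsLocallyConstant fun x => κ x n := fun n =>
    (IsLocallyConstant.iff_continuous _).2 ((continuous_apply n).comp hκ)
  have step : ∀ (n : ℕ) (s : {s : (α → ℕ) × (β → ℕ) // BF X Y G s.1 s.2}),
      ∃ s' : {s : (α → ℕ) × (β → ℕ) // BF X Y G s.1 s.2}, Refn s.1.1 s.1.2 s'.1.1 s'.1.2 ∧
      (∀ x x', s'.1.1 x = s'.1.1 x' → ι x n = ι x' n) ∧ (∀ y y', s'.1.2 y = s'.1.2 y' → κ y n = κ y' n) := by
    rintro n ⟨s, hs⟩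
    obtain ⟨p', q', h1, h2, h3, h4⟩ := hs.stepAA hcα hcβ _ (lι n) _ (lκ n)
    exact ⟨⟨(p', q'), h1⟩, h2, h3, h4⟩
  choose nx hn1 hn2 hn3 using step
  let S : ℕ → {s : (α → ℕ) × (β → ℕ) // BF X Y G s.1 s.2} := fun n =>
    Nat.rec ⟨(p, q), h⟩ (fun n s => nx n s) n
  obtain ⟨f, hf⟩ := limit_homeo (fun n => (S n).1.1) (fun n => (S n).1.2) (fun n => (S n).2.lp)
    (fun n => (S n).2.lq) (fun n => (S n).2.rng) (fun n => hn1 n (S n))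
    (fun y y' hy => hιi (funext fun n => hn2 n (S n) y y' (hy (n+1))))
    (fun y y' hy => hκi (funext fun n => hn3 n (S n) y y' (hy (n+1))))
  refine ⟨f, fun x => hf 0 x, fun x y hxy => hκi (funext fun n => hn3 n (S n) _ _ ?_)⟩
  have h1 := hf (n+1) x
  have h2 := (S (n+1)).2.pq x y hxy
  exact h1.trans h2

open Set Topology

/-- Cylinders with respect to an injection into the Cantor space. -/
def Cyl {α : Type*} (ι : α → Cantor) (x : α) (n : ℕ) : Set α := {x' | ∀ i < n, ι x' i = ι x i}

theorem Cyl.self {α : Type*} (ι : α → Cantor) (x : α) (n : ℕ) : x ∈ Cyl ι x n := fun _ _ => rfl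

theorem Cyl.eq {α : Type*} {ι : α → Cantor} {x x' : α} {n : ℕ} (h : x' ∈ Cyl ι x n) :
    Cyl ι x' n = Cyl ι x n := by
  ext z
  exact ⟨fun hz i hi => (hz i hi).trans (h i hi), fun hz i hi => (hz i hi).trans (h i hi).symm⟩

theorem Cyl.mono {α : Type*} {ι : α → Cantor} {x : α} {n m : ℕ} (h : n ≤ m) :
    Cyl ι x m ⊆ Cyl ι x n := fun _ hz i hi => hz i (lt_of_lt_of_le hi h)

theorem Cyl.isOpen {α : Type*} [TopologicalSpace α] {ι : α → Cantor} (hι : Continuous ι) (x : α) (n : ℕ) :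
    IsOpen (Cyl ι x n) := by
  have : Cyl ι x n = ⋂ i ∈ Finset.range n, (fun x' => ι x' i) ⁻¹' {ι x i} := by
    ext z; simp [Cyl]
  rw [this]
  refine isOpen_biInter_finset fun i _ => ?_
  exact (isOpen_discrete _).preimage ((continuous_apply i).comp hι)

theorem Cyl.basis {α : Type*} [TopologicalSpace α] [CompactSpace α] {ι : α → Cantor} (hι : Continuous ι)
    (hi : Function.Injective ι) {x : α} {U : Set α} (hU : U ∈ 𝓝 x) : ∃ n, Cyl ι x n ⊆ U := by
  have hcl : ∀ n, IsClosed (Cyl ι x n) := by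
    intro n
    have : Cyl ι x n = ⋂ i ∈ Finset.range n, (fun x' => ι x' i) ⁻¹' {ι x i} := by
      ext z; simp [Cyl]
    rw [this]
    exact isClosed_biInter fun i _ => (isClosed_discrete _).preimage ((continuous_apply i).comp hι)
  refine exists_subset_nhds_of_isCompact' (V := fun n => Cyl ι x n)
    (Antitone.directed_ge fun n m h => Cyl.mono h) (fun n => (hcl n).isCompact) hcl ?_
  intro y hy
  have : y = x := hi (funext fun n => mem_iInter.1 hy (n+1) n (Nat.lt_succ_self n))
  rw [this]; exact hU

/-- A pasted injective reduction extending a homeomorphism on a closed set. -/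
theorem paste {α β : Type*} [TopologicalSpace α] [CompactSpace α] [TopologicalSpace β] {X : Set α} {Y : Set β}
    {ι : α → Cantor} (hι : Continuous ι) (hιi : Function.Injective ι) (h : α ≃ₜ β) {E : Set α} (hE : IsClosed E)
    {p : α → ℕ} (lp : IsLocallyConstant p) {q : β → ℕ} (hq : ∀ x, q (h x) = p x)
    (hEX : ∀ x ∈ E, (x ∈ X ↔ h x ∈ Y))
    (hred : ∀ O : Set β, IsOpen O → O.Nonempty → ∃ F : α → β, Continuous F ∧ Function.Injective F ∧
      (∀ x, F x ∈ O) ∧ ∀ x, (x ∈ X ↔ F x ∈ Y)) :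
    ∃ e : α → β, Continuous e ∧ Function.Injective e ∧ (∀ x ∈ E, e x = h x) ∧ (∀ x, q (e x) = p x) ∧
      ∀ x, (x ∈ X ↔ e x ∈ Y) := by
  classical
  let good : ℕ → α → Prop := fun n x => Cyl ι x n ⊆ Eᶜ ∩ {z | p z = p x}
  have hgood : ∀ x, x ∉ E → ∃ n, good n x := fun x hx =>
    Cyl.basis hι hιi ((hE.isOpen_compl.inter (lp.isOpen_fiber (p x))).mem_nhds ⟨hx, rfl⟩)
  have gtr : ∀ n x x', x' ∈ Cyl ι x n → good n x → good n x' := by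
    intro n x x' hx' hg
    change Cyl ι x' n ⊆ _
    rw [Cyl.eq hx']
    have : p x' = p x := (hg hx').2
    rw [this]; exact hg
  let ℓ : α → ℕ := fun x => if hx : ∃ n, good n x then Nat.find hx else 0
  have hℓ : ∀ x, x ∉ E → good (ℓ x) x := by
    intro x hx
    have := hgood x hx
    simp only [ℓ, dif_pos this]
    exact Nat.find_spec this
  have hℓ' : ∀ x n, x ∉ E → good n x → ℓ x ≤ n := by
    intro x n hx hn
    have := hgood x hx
    simp only [ℓ, dif_pos this]
    exact Nat.find_min' this hn
  let P : α → Set α := fun x => Cyl ι x (ℓ x)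
  have hPE : ∀ x, x ∉ E → ∀ z ∈ P x, z ∉ E := fun x hx z hz => (hℓ x hx hz).1
  have hPp : ∀ x, x ∉ E → ∀ z ∈ P x, p z = p x := fun x hx z hz => (hℓ x hx hz).2
  have hPeq : ∀ x, x ∉ E → ∀ z ∈ P x, P z = P x := by
    intro x hx z hz
    have hzE := hPE x hx z hz
    have h1 : ℓ z ≤ ℓ x := hℓ' z _ hzE (gtr _ _ _ hz (hℓ x hx))
    have hxz : x ∈ Cyl ι z (ℓ z) := fun i hi => (hz i (lt_of_lt_of_le hi h1)).symm
    have h2 : ℓ x ≤ ℓ z := hℓ' x _ hx (gtr _ _ _ hxz (hℓ z hzE))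
    have h3 : ℓ z = ℓ x := le_antisymm h1 h2
    change Cyl ι z (ℓ z) = _
    rw [h3]; exact Cyl.eq hz
  have hPo : ∀ x, IsOpen (P x) := fun x => Cyl.isOpen hι x _
  have hFF : ∀ x, ∃ F : α → β, Continuous F ∧ Function.Injective F ∧
      (∀ z, F z ∈ h '' P x) ∧ ∀ z, (z ∈ X ↔ F z ∈ Y) := fun x =>
    hred (h '' P x) (h.isOpenMap _ (hPo x)) ⟨_, mem_image_of_mem _ (Cyl.self _ _ _)⟩
  have hF : ∀ S : Set α, ∃ F : α → β, ∀ x, P x = S → Continuous F ∧ Function.Injective F ∧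
      (∀ z, F z ∈ h '' P x) ∧ ∀ z, (z ∈ X ↔ F z ∈ Y) := by
    intro S
    by_cases hS : ∃ x, P x = S
    · obtain ⟨x, rfl⟩ := hS
      obtain ⟨F, hF⟩ := hFF x
      exact ⟨F, fun z hz => by rw [hz]; exact hF⟩
    · exact ⟨h, fun x hx => (hS ⟨x, hx⟩).elim⟩
  choose F hF using hF
  let e : α → β := fun x => if x ∈ E then h x else F (P x) x
  have e1 : ∀ x ∈ E, e x = h x := fun x hx => if_pos hx
  have e2 : ∀ x, x ∉ E → e x = F (P x) x := fun x hx => if_neg hx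
  have e3 : ∀ x, x ∉ E → ∃ z ∈ P x, h z = e x := by
    intro x hx
    rw [e2 x hx]
    exact (hF _ x rfl).2.2.1 x
  refine ⟨e, ?_, ?_, e1, ?_, ?_⟩
  · rw [continuous_iff_continuousAt]
    intro x
    by_cases hx : x ∈ E
    · intro U hU
      rw [e1 x hx] at hU
      obtain ⟨m, hm⟩ := Cyl.basis hι hιi (h.continuous.continuousAt hU)
      rw [Filter.mem_map]
      filter_upwards [(Cyl.isOpen hι x m).mem_nhds (Cyl.self _ _ _)] with x' hx'
      by_cases hE' : x' ∈ E
      · change e x' ∈ U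
        rw [e1 x' hE']; exact hm hx'
      · obtain ⟨z, hz, hze⟩ := e3 x' hE'
        change e x' ∈ U
        rw [← hze]
        apply hm
        rw [← Cyl.eq hx']
        refine Cyl.mono ?_ hz
        by_contra hlt
        push Not at hlt
        have : x ∈ P x' := by
          refine Cyl.mono hlt.le ?_
          rw [Cyl.eq hx']; exact Cyl.self _ _ _
        exact hPE x' hE' x this hx
    · have hc : Continuous (F (P x)) := (hF _ x rfl).1
      refine hc.continuousAt.congr ?_
      filter_upwards [(hPo x).mem_nhds (Cyl.self _ _ _)] with x' hx'
      rw [e2 x' (hPE x hx x' hx'), hPeq x hx x' hx']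
  · intro x x' hxx
    by_cases hx : x ∈ E <;> by_cases hx' : x' ∈ E
    · rw [e1 x hx, e1 x' hx'] at hxx; exact h.injective hxx
    · obtain ⟨z, hz, hze⟩ := e3 x' hx'
      rw [← hxx, e1 x hx] at hze
      have := h.injective hze
      subst this
      exact (hPE _ hx' _ hz hx).elim
    · obtain ⟨z, hz, hze⟩ := e3 x hx
      rw [hxx, e1 x' hx'] at hze
      have := h.injective hze
      subst this
      exact (hPE _ hx _ hz hx').elim
    · obtain ⟨z, hz, hze⟩ := e3 x hx
      obtain ⟨z', hz', hze'⟩ := e3 x' hx'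
      have : z = z' := h.injective (by rw [hze, hze', hxx])
      subst this
      have hP : P x = P x' := by rw [← hPeq x hx z hz, hPeq x' hx' z hz']
      rw [e2 x hx, e2 x' hx', ← hP] at hxx
      exact (hF _ x rfl).2.1 hxx
  · intro x
    by_cases hx : x ∈ E
    · rw [e1 x hx, hq]
    · obtain ⟨z, hz, hze⟩ := e3 x hx
      rw [← hze, hq, hPp x hx z hz]
  · intro x
    by_cases hx : x ∈ E
    · rw [e1 x hx, hEX x hx]
    · rw [e2 x hx]; exact (hF _ x rfl).2.2.2 x

theorem BF.stepB {α β : Type*} [TopologicalSpace α] [CompactSpace α] [T2Space α]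
    [TotallyDisconnectedSpace α] [TopologicalSpace β] [CompactSpace β] [T2Space β]
    [TotallyDisconnectedSpace β] {X : Set α} {Y : Set β} {G : Set (α × β)} {p : α → ℕ} {q : β → ℕ}
    (h : BF X Y G p q) (hcα : Crowded α) (hcβ : Crowded β) {ι : α → Cantor} (hι : Continuous ι)
    (hιi : Function.Injective ι) {κ : β → Cantor} (hκ : Continuous κ) (hκi : Function.Injective κ)
    (hred : ∀ O : Set β, IsOpen O → O.Nonempty → ∃ F : α → β, Continuous F ∧ Function.Injective F ∧
      (∀ x, F x ∈ O) ∧ ∀ x, (x ∈ X ↔ F x ∈ Y)) {K : Set α} (hK : IsClosed K) (hKi : interior K = ∅) :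
    ∃ G', G ⊆ G' ∧ BF X Y G' p q ∧ ∀ x ∈ K, ∃ y, (x, y) ∈ G' := by
  obtain ⟨f, hf1, hf2⟩ := h.extend hcα hcβ hι hιi hκ hκi
  have hE : IsClosed (Prod.fst '' G) := (h.closed.isCompact.image continuous_fst).isClosed
  obtain ⟨e, he1, he2, he3, he4, he5⟩ := paste (X := X) (Y := Y) hι hιi f hE h.lp hf1 (by
    rintro _ ⟨⟨x, y⟩, hxy, rfl⟩
    rw [show f (x, y).1 = y from hf2 x y hxy]; exact h.pres x y hxy) hred
  set E := Prod.fst '' G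
  have hEK : IsClosed (E ∪ K) := hE.union hK
  have hEKi : interior (E ∪ K) = ∅ := by
    rw [interior_union_isClosed_of_interior_empty hE hKi]; exact h.nwd1
  have hfst : Prod.fst '' {z : α × β | z.1 ∈ E ∪ K ∧ z.2 = e z.1} = E ∪ K := by
    ext x; constructor
    · rintro ⟨⟨x, y⟩, h, rfl⟩; exact h.1
    · intro hx; exact ⟨(x, e x), ⟨hx, rfl⟩, rfl⟩
  refine ⟨{z | z.1 ∈ E ∪ K ∧ z.2 = e z.1}, ?_, ⟨?_, ?_, ?_, ?_, ?_, h.lp, h.lq, h.rng, ?_, ?_⟩, ?_⟩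
  · rintro ⟨x, y⟩ hxy
    have hx : x ∈ E := ⟨_, hxy, rfl⟩
    exact ⟨Or.inl hx, by change y = e x; rw [he3 x hx, hf2 x y hxy]⟩
  · exact (hEK.preimage continuous_fst).inter (isClosed_eq continuous_snd (he1.comp continuous_fst))
  · rintro x y y' ⟨_, h1⟩ ⟨_, h2⟩; exact h1.trans h2.symm
  · rintro x x' y ⟨_, h1⟩ ⟨_, h2⟩; exact he2 (h1.symm.trans h2)
  · rw [hfst]; exact hEKi
  · by_contra hne
    obtain ⟨y, hy⟩ := nonempty_iff_ne_empty.2 hne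
    have hsub : e ⁻¹' (interior (Prod.snd '' {z : α × β | z.1 ∈ E ∪ K ∧ z.2 = e z.1})) ⊆ E ∪ K := by
      intro x hx
      obtain ⟨⟨x', y'⟩, ⟨h1, h2⟩, h3⟩ := interior_subset hx
      have : x' = x := he2 (h2.symm.trans h3)
      rw [← this]; exact h1
    have := interior_maximal hsub (isOpen_interior.preimage he1)
    rw [hEKi] at this
    obtain ⟨⟨x', y'⟩, ⟨h1, h2⟩, h3⟩ := interior_subset hy
    refine this (a := x') ?_
    rw [mem_preimage]
    have h2 : y' = e x' := h2
    have h3 : y' = y := h3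
    rw [← h2, h3]; exact hy
  · rintro x y ⟨_, h1⟩
    have h1 : y = e x := h1
    rw [h1, he4]
  · rintro x y ⟨_, h1⟩
    have h1 : y = e x := h1
    rw [h1]; exact he5 x
  · intro x hx; exact ⟨e x, Or.inr hx, rfl⟩

/-- The back-and-forth theorem. -/
theorem knaster_reichbach {α β : Type*} [TopologicalSpace α] [CompactSpace α] [T2Space α]
    [TotallyDisconnectedSpace α] [TopologicalSpace β] [CompactSpace β] [T2Space β]
    [TotallyDisconnectedSpace β] [Nonempty α] [Nonempty β] {X : Set α} {Y : Set β}
    (hcα : Crowded α) (hcβ : Crowded β) {ι : α → Cantor} (hι : Continuous ι)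
    (hιi : Function.Injective ι) {κ : β → Cantor} (hκ : Continuous κ) (hκi : Function.Injective κ)
    (hXY : ∀ O : Set β, IsOpen O → O.Nonempty → ∃ F : α → β, Continuous F ∧ Function.Injective F ∧
      (∀ x, F x ∈ O) ∧ ∀ x, (x ∈ X ↔ F x ∈ Y))
    (hYX : ∀ O : Set α, IsOpen O → O.Nonempty → ∃ F : β → α, Continuous F ∧ Function.Injective F ∧
      (∀ x, F x ∈ O) ∧ ∀ x, (x ∈ Y ↔ F x ∈ X))
    (K : ℕ → Set α) (hK : ∀ n, IsClosed (K n)) (hKi : ∀ n, interior (K n) = ∅) (hXK : X ⊆ ⋃ n, K n)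
    (L : ℕ → Set β) (hL : ∀ n, IsClosed (L n)) (hLi : ∀ n, interior (L n) = ∅) (hYL : Y ⊆ ⋃ n, L n) :
    ∃ h : α ≃ₜ β, ∀ x, (x ∈ X ↔ h x ∈ Y) := by
  have lι : ∀ n, IsLocallyConstant fun x => ι x n := fun n =>
    (IsLocallyConstant.iff_continuous _).2 ((continuous_apply n).comp hι)
  have lκ : ∀ n, IsLocallyConstant fun x => κ x n := fun n =>
    (IsLocallyConstant.iff_continuous _).2 ((continuous_apply n).comp hκ)
  let St := {s : Set (α × β) × (α → ℕ) × (β → ℕ) // BF X Y s.1 s.2.1 s.2.2}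
  have step : ∀ (n : ℕ) (s : St), ∃ s' : St, Refn s.1.2.1 s.1.2.2 s'.1.2.1 s'.1.2.2 ∧
      (∀ x x', s'.1.2.1 x = s'.1.2.1 x' → ι x n = ι x' n) ∧
      (∀ y y', s'.1.2.2 y = s'.1.2.2 y' → κ y n = κ y' n) ∧ s.1.1 ⊆ s'.1.1 ∧
      (∀ x ∈ K n, ∃ y, (x, y) ∈ s'.1.1) ∧ (∀ y ∈ L n, ∃ x, (x, y) ∈ s'.1.1) := by
    rintro n ⟨⟨G, p, q⟩, hs⟩
    obtain ⟨p', q', h1, h2, h3, h4⟩ := hs.stepAA hcα hcβ _ (lι n) _ (lκ n)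
    obtain ⟨G1, g1, h5, h6⟩ := h1.stepB hcα hcβ hι hιi hκ hκi hXY (hK n) (hKi n)
    obtain ⟨G2, g2, h7, h8⟩ := h5.swap.stepB hcβ hcα hκ hκi hι hιi hYX (hL n) (hLi n)
    refine ⟨⟨⟨Prod.swap ⁻¹' G2, p', q'⟩, h7.swap⟩, h2, h3, h4, ?_, ?_, h8⟩
    · rintro ⟨x, y⟩ hxy; exact g2 (a := (y, x)) (g1 hxy)
    · intro x hx; obtain ⟨y, hy⟩ := h6 x hx; exact ⟨y, g2 (a := (y, x)) hy⟩
  choose nx hn1 hn2 hn3 hn4 hn5 hn6 using step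
  have h0 : BF X Y ∅ (fun _ => 0) (fun _ => 0) :=
    ⟨isClosed_empty, by simp, by simp, by simp, by simp, IsLocallyConstant.const 0,
      IsLocallyConstant.const 0, by simp, by simp, by simp⟩
  let S : ℕ → St := fun n => Nat.rec ⟨(∅, _, _), h0⟩ (fun n s => nx n s) n
  obtain ⟨f, hf⟩ := limit_homeo (fun n => (S n).1.2.1) (fun n => (S n).1.2.2) (fun n => (S n).2.lp)
    (fun n => (S n).2.lq) (fun n => (S n).2.rng) (fun n => hn1 n (S n))
    (fun y y' hy => hιi (funext fun n => hn2 n (S n) y y' (hy (n+1))))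
    (fun y y' hy => hκi (funext fun n => hn3 n (S n) y y' (hy (n+1))))
  have hmono : Monotone fun n => (S n).1.1 := monotone_nat_of_le_succ fun n => hn4 n (S n)
  have hG : ∀ n x y, (x, y) ∈ (S n).1.1 → f x = y := by
    intro n x y hxy
    refine hκi (funext fun k => ?_)
    have hxy' : (x, y) ∈ (S (max n k + 1)).1.1 :=
      hmono (le_trans (le_max_left n k) (Nat.le_succ _)) hxy
    have key : ∀ m, k ≤ m → ∀ y y', (S (m+1)).1.2.2 y = (S (m+1)).1.2.2 y' →
        (S (k+1)).1.2.2 y = (S (k+1)).1.2.2 y' := by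
      intro m hm
      induction m, hm using Nat.le_induction with
      | base => exact fun _ _ h => h
      | succ m hm ih =>
        intro y y' h
        apply ih
        obtain ⟨r, _, h2⟩ := hn1 (m+1) (S (m+1))
        have h : (nx (m+1) (S (m+1))).1.2.2 y = (nx (m+1) (S (m+1))).1.2.2 y' := h
        rw [h2 y, h2 y', h]
    refine hn3 k (S k) _ _ (key (max n k) (le_max_right _ _) _ _ ?_)
    have h1 := hf (max n k + 1) x
    have h2 := (S (max n k + 1)).2.pq x y hxy'
    exact h1.trans h2
  refine ⟨f, fun x => ⟨fun hx => ?_, fun hx => ?_⟩⟩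
  · obtain ⟨n, hn⟩ := mem_iUnion.1 (hXK hx)
    obtain ⟨y, hy⟩ := hn5 n (S n) x hn
    have e := hG (n+1) x y hy
    rw [e]
    exact ((S (n+1)).2.pres x y hy).1 hx
  · obtain ⟨n, hn⟩ := mem_iUnion.1 (hYL hx)
    obtain ⟨x', hy⟩ := hn6 n (S n) _ hn
    have e := hG (n+1) x' _ hy
    have e := f.injective e
    subst e
    exact ((S (n+1)).2.pres _ _ hy).2 hx

open Set Topology

theorem firstCategory_iff {Z : Type*} [TopologicalSpace Z] : FirstCategory Z ↔ IsMeagre (univ : Set Z) := by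
  constructor
  · rintro ⟨f, hf, hu⟩
    rw [hu]
    exact isMeagre_iUnion fun n => IsNowhereDense.isMeagre (hf n)
  · intro h
    obtain ⟨S, h1, h2, h3⟩ := isMeagre_iff_countable_union_isNowhereDense.1 h
    obtain ⟨f, hf⟩ := (h2.insert ∅).exists_eq_range (insert_nonempty _ _)
    refine ⟨f, fun n => ?_, ?_⟩
    · have : f n ∈ insert ∅ S := by rw [hf]; exact mem_range_self n
      rcases this with h | h
      · rw [h]; exact isNowhereDense_empty
      · exact h1 _ h
    · symm
      rw [eq_univ_iff_forall]
      intro x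
      obtain ⟨t, ht, hx⟩ := h3 (mem_univ x)
      have : t ∈ range f := by rw [← hf]; exact Or.inr ht
      obtain ⟨n, rfl⟩ := this
      exact mem_iUnion.2 ⟨n, hx⟩

theorem meagre_seq {Z : Type*} [TopologicalSpace Z] {M : Set Z} (h : IsMeagre M) :
    ∃ K : ℕ → Set Z, (∀ n, IsClosed (K n)) ∧ (∀ n, interior (K n) = ∅) ∧ M ⊆ ⋃ n, K n := by
  obtain ⟨S, h1, h2, h3⟩ := isMeagre_iff_countable_union_isNowhereDense.1 h
  obtain ⟨f, hf⟩ := (h2.insert ∅).exists_eq_range (insert_nonempty _ _)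
  refine ⟨fun n => closure (f n), fun n => isClosed_closure, fun n => ?_, ?_⟩
  · have : f n ∈ insert ∅ S := by rw [hf]; exact mem_range_self n
    rcases this with h | h
    · dsimp only; rw [h]; exact isNowhereDense_empty
    · exact h1 _ h
  · intro x hx
    obtain ⟨t, ht, hx⟩ := h3 hx
    have : t ∈ range f := by rw [← hf]; exact Or.inr ht
    obtain ⟨n, rfl⟩ := this
    exact mem_iUnion.2 ⟨n, subset_closure hx⟩

theorem category_dichotomy {Z : Type*} [TopologicalSpace Z] [SecondCountableTopology Z] (hZ : IsHomogeneous Z) :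
    FirstCategory Z ∨ BaireSpace Z := by
  by_contra hcon
  push Not at hcon
  obtain ⟨h1, h2⟩ := hcon
  apply h2
  refine ⟨fun f ho hd => ?_⟩
  by_contra hnd
  apply h1
  rw [firstCategory_iff]
  have hO : IsOpen (closure (⋂ n, f n))ᶜ := isClosed_closure.isOpen_compl
  obtain ⟨z, hz⟩ : ((closure (⋂ n, f n))ᶜ).Nonempty := by
    rw [nonempty_compl]; exact fun h => hnd (dense_iff_closure_eq.2 h)
  have hm : IsMeagre (closure (⋂ n, f n))ᶜ := by
    have : ⋂ n, f n ∈ residual Z :=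
      countable_iInter_mem.2 fun n => residual_of_dense_open (ho n) (hd n)
    unfold IsMeagre
    rw [compl_compl]
    exact Filter.mem_of_superset this subset_closure
  obtain ⟨T, hT, hTe⟩ := TopologicalSpace.isOpen_iUnion_countable
    (fun h : Z ≃ₜ Z => h ⁻¹' (closure (⋂ n, f n))ᶜ) (fun h => hO.preimage h.continuous)
  have : (⋃ h : Z ≃ₜ Z, h ⁻¹' (closure (⋂ n, f n))ᶜ) = univ := by
    rw [eq_univ_iff_forall]
    intro x
    obtain ⟨h, hh⟩ := hZ x z
    exact mem_iUnion.2 ⟨h, by rw [mem_preimage, hh]; exact hz⟩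
  rw [← this, ← hTe]
  exact isMeagre_biUnion hT fun h _ => hm.preimage_of_isOpenMap h.continuous h.isOpenMap

/-- The trace of a set on its closure. -/
def Tr (X : Set Cantor) : Set (closure X) := {x | x.1 ∈ X}

/-- The inclusion of a set in its closure. -/
def jj (X : Set Cantor) : X → closure X := fun x => ⟨x.1, subset_closure x.2⟩

theorem jj_inducing (X : Set Cantor) : IsInducing (jj X) := by
  have h : IsInducing ((Subtype.val : closure X → Cantor) ∘ jj X) := IsInducing.subtypeVal
  exact (IsInducing.subtypeVal.of_comp_iff).1 h

theorem tr_dense (X : Set Cantor) : Dense (Tr X) := by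
  intro x
  rw [closure_subtype]
  have : (Subtype.val '' Tr X) = X := by
    ext y; constructor
    · rintro ⟨x, hx, rfl⟩; exact hx
    · intro hy; exact ⟨⟨y, subset_closure hy⟩, hy, rfl⟩
  rw [this]; exact x.2

theorem jj_preimage_meagre {X : Set Cantor} {M : Set (closure X)} (hM : IsMeagre M) :
    IsMeagre (jj X ⁻¹' M) := by
  obtain ⟨K, h1, h2, h3⟩ := meagre_seq hM
  refine IsMeagre.mono (s := ⋃ n, jj X ⁻¹' (K n)) ?_ (isMeagre_iUnion fun n => IsNowhereDense.isMeagre ?_)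
  · rw [← preimage_iUnion]; exact preimage_mono h3
  · rw [((h1 n).preimage (jj_inducing X).continuous).isNowhereDense_iff]
    rw [eq_empty_iff_forall_notMem]
    intro x hx
    obtain ⟨W, hW, hWe⟩ := (jj_inducing X).isOpen_iff.1 (isOpen_interior (s := jj X ⁻¹' (K n)))
    have hs : W ∩ Tr X ⊆ K n := by
      rintro ⟨z, hz⟩ ⟨hzW, hzX⟩
      have : (⟨z, hzX⟩ : X) ∈ jj X ⁻¹' W := hzW
      rw [hWe] at this
      have h4 : (⟨z, hzX⟩ : X) ∈ jj X ⁻¹' K n := interior_subset this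
      exact h4
    have hs' : W ⊆ K n :=
      ((tr_dense X).open_subset_closure_inter hW).trans (closure_minimal hs (h1 n))
    have := interior_maximal hs' hW
    rw [h2 n] at this
    rw [← hWe] at hx
    exact this hx

theorem tr_meagre_of_firstCategory {X : Set Cantor} (h : FirstCategory X) : IsMeagre (Tr X) := by
  have := (jj_inducing X).isMeagre_image (firstCategory_iff.1 h)
  refine this.mono ?_
  rintro ⟨z, hz⟩ hzX
  exact ⟨⟨z, hzX⟩, mem_univ _, rfl⟩

theorem tr_comeagre_of_baire {X : Set Cantor} (hX : MeasurableSet X) (h : BaireSpace X) : IsMeagre (Tr X)ᶜ := by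
  have hm : MeasurableSet (Tr X) := measurable_subtype_coe hX
  obtain ⟨u, hu, hXu⟩ := hm.residualEq_isOpen
  have hXu : ∀ᶠ x in residual _, (x ∈ Tr X) = (x ∈ u) := hXu
  have hd : Dense u := by
    by_contra hnd
    obtain ⟨z, hz⟩ : ((closure u)ᶜ).Nonempty := by
      rw [nonempty_compl]; exact fun h => hnd (dense_iff_closure_eq.2 h)
    have hO : IsOpen (closure u)ᶜ := isClosed_closure.isOpen_compl
    have hmeag : IsMeagre (Tr X ∩ (closure u)ᶜ) := by
      unfold IsMeagre
      filter_upwards [hXu] with x hx hx'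
      exact hx'.2 (subset_closure (hx ▸ hx'.1))
    have h2 := jj_preimage_meagre hmeag
    refine not_isMeagre_of_isOpen (hO.preimage (jj_inducing X).continuous) ?_ (h2.mono ?_)
    · obtain ⟨w, hw, hwX⟩ := (tr_dense X).inter_open_nonempty _ hO ⟨z, hz⟩
      exact ⟨⟨w.1, hwX⟩, hw⟩
    · intro x hx; exact ⟨x.2, hx⟩
  have := residual_of_dense_open hu hd
  unfold IsMeagre
  rw [compl_compl]
  filter_upwards [hXu, this] with x h1 h2
  rw [h1]; exact h2

theorem crowded_of_not_rr {X : Set Cantor} (hh : IsHomogeneous X) (hR : ¬ RR X) : Crowded (closure X) := by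
  intro x O hO hx
  by_contra hcon
  push Not at hcon
  obtain ⟨w, hw, hwX⟩ := (tr_dense X).inter_open_nonempty _ hO ⟨x, hx⟩
  have hwx := hcon w hw
  subst hwx
  have hop : IsOpen ({(⟨w.1, hwX⟩ : X)} : Set X) := by
    have : ({(⟨w.1, hwX⟩ : X)} : Set X) = jj X ⁻¹' O := by
      ext z; constructor
      · rintro rfl; exact hw
      · intro hz
        have := hcon _ hz
        rw [mem_singleton_iff]
        have h5 : (jj X z).1 = w.1 := congrArg Subtype.val this
        exact Subtype.ext h5
    rw [this]; exact hO.preimage (jj_inducing X).continuous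
  have hdisc : DiscreteTopology X := by
    rw [discreteTopology_iff_isOpen_singleton]
    intro z
    obtain ⟨h, hz⟩ := hh z ⟨w.1, hwX⟩
    have : ({z} : Set X) = h ⁻¹' {(⟨w.1, hwX⟩ : X)} := by
      ext y; simp only [mem_singleton_iff, mem_preimage]
      rw [← hz, h.injective.eq_iff]
    rw [this]; exact hop.preimage h.continuous
  have hc : Countable X := countable_of_Lindelof_of_discrete
  have hc' : X.Countable := hc
  apply hR
  have := RR.compl (RR.of_gdelta hc'.isGδ_compl)
  rwa [compl_compl] at this

theorem reduction {X Y : Set Cantor} (hX : MeasurableSet X) (hYB : MeasurableSet Y) (hY : IsHomogeneous Y)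
    (hR : ¬ RR Y) (hle : WadgeLe X Y) (O : Set (closure Y)) (hO : IsOpen O) (hne : O.Nonempty) :
    ∃ F : closure X → closure Y, Continuous F ∧ Function.Injective F ∧
      (∀ x, F x ∈ O) ∧ ∀ x, (x ∈ Tr X ↔ F x ∈ Tr Y) := by
  obtain ⟨O', hO', rfl⟩ := isOpen_induced_iff.1 hO
  obtain ⟨w, hw, hwY⟩ := (tr_dense Y).inter_open_nonempty _ hO hne
  obtain ⟨t, ht, hwt, htO⟩ := compact_exists_isClopen_in_isOpen hO' hw
  obtain ⟨F, h1, h2, h3⟩ := harrington hX hYB hY hR hle ht ⟨w.1, hwY, hwt⟩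
  refine ⟨fun x => ⟨F x.1, (h3 x.1).1.1⟩, (h1.comp continuous_subtype_val).subtype_mk _, ?_, ?_, ?_⟩
  · intro x x' h
    exact Subtype.ext (h2 (congrArg Subtype.val h))
  · intro x; exact htO (h3 x.1).1.2
  · intro x; exact (h3 x.1).2.symm

theorem homeo_restrict {X Y : Set Cantor} (h : closure X ≃ₜ closure Y) (hh : ∀ x, (x ∈ Tr X ↔ h x ∈ Tr Y)) :
    Nonempty (X ≃ₜ Y) := by
  have hh' : ∀ y, y ∈ Tr Y → h.symm y ∈ Tr X := fun y hy => by rw [hh, h.apply_symm_apply]; exact hy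
  refine ⟨⟨⟨fun x => ⟨(h (jj X x)).1, (hh (jj X x)).1 x.2⟩,
    fun y => ⟨(h.symm (jj Y y)).1, hh' (jj Y y) y.2⟩, fun x => ?_, fun y => ?_⟩, ?_, ?_⟩⟩
  · apply Subtype.ext
    change (h.symm (h (jj X x))).1 = x.1
    rw [h.symm_apply_apply]; rfl
  · apply Subtype.ext
    change (h (h.symm (jj Y y))).1 = y.1
    rw [h.apply_symm_apply]; rfl
  · exact (continuous_subtype_val.comp (h.continuous.comp (jj_inducing X).continuous)).subtype_mk _
  · exact (continuous_subtype_val.comp (h.symm.continuous.comp (jj_inducing Y).continuous)).subtype_mk _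

theorem firstCategory_homeo {Z W : Type*} [TopologicalSpace Z] [TopologicalSpace W] (e : Z ≃ₜ W)
    (h : FirstCategory Z) : FirstCategory W := by
  rw [firstCategory_iff] at *
  have := h.preimage_of_isOpenMap e.symm.continuous e.symm.isOpenMap
  rwa [preimage_univ] at this

theorem baire_homeo {Z W : Type*} [TopologicalSpace Z] [TopologicalSpace W] (e : Z ≃ₜ W)
    (h : BaireSpace Z) : BaireSpace W := e.symm.isOpenEmbedding.baireSpace

theorem homeo_of_meagre {X Y : Set Cantor} (hX : MeasurableSet X) (hY : MeasurableSet Y) (hXh : IsHomogeneous X)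
    (hYh : IsHomogeneous Y) (hRX : ¬ RR X) (hRY : ¬ RR Y) (hXY : WadgeLe X Y) (hYX : WadgeLe Y X)
    (hm : (IsMeagre (Tr X) ∧ IsMeagre (Tr Y)) ∨ (IsMeagre (Tr X)ᶜ ∧ IsMeagre (Tr Y)ᶜ)) :
    Nonempty (X ≃ₜ Y) := by
  have cX : CompactSpace (closure X) := isCompact_iff_compactSpace.1 isClosed_closure.isCompact
  have cY : CompactSpace (closure Y) := isCompact_iff_compactSpace.1 isClosed_closure.isCompact
  have nX : Nonempty (closure X) := by
    rw [nonempty_coe_sort, closure_nonempty_iff, nonempty_iff_ne_empty]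
    rintro rfl; exact hRX RR.empty
  have nY : Nonempty (closure Y) := by
    rw [nonempty_coe_sort, closure_nonempty_iff, nonempty_iff_ne_empty]
    rintro rfl; exact hRY RR.empty
  have rXY := reduction hX hY hYh hRY hXY
  have rYX := reduction hY hX hXh hRX hYX
  rcases hm with ⟨h1, h2⟩ | ⟨h1, h2⟩
  · obtain ⟨K, k1, k2, k3⟩ := meagre_seq h1
    obtain ⟨L, l1, l2, l3⟩ := meagre_seq h2
    obtain ⟨h, hh⟩ := knaster_reichbach (crowded_of_not_rr hXh hRX) (crowded_of_not_rr hYh hRY)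
      continuous_subtype_val Subtype.val_injective continuous_subtype_val Subtype.val_injective
      rXY rYX K k1 k2 k3 L l1 l2 l3
    exact homeo_restrict h hh
  · obtain ⟨K, k1, k2, k3⟩ := meagre_seq h1
    obtain ⟨L, l1, l2, l3⟩ := meagre_seq h2
    obtain ⟨h, hh⟩ := knaster_reichbach (crowded_of_not_rr hXh hRX) (crowded_of_not_rr hYh hRY)
      continuous_subtype_val Subtype.val_injective continuous_subtype_val Subtype.val_injective
      (fun O hO hn => by
        obtain ⟨F, f1, f2, f3, f4⟩ := rXY O hO hn
        exact ⟨F, f1, f2, f3, fun x => not_congr (f4 x)⟩)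
      (fun O hO hn => by
        obtain ⟨F, f1, f2, f3, f4⟩ := rYX O hO hn
        exact ⟨F, f1, f2, f3, fun x => not_congr (f4 x)⟩) K k1 k2 k3 L l1 l2 l3
    exact homeo_restrict h fun x => not_iff_not.1 (hh x)

/-- Steel's homeomorphism criterion for homogeneous Borel spaces outside Δ. -/
theorem steel_consequence (X Y : Set Cantor)
    (hXB : @MeasurableSet Cantor (borel Cantor) X)
    (hYB : @MeasurableSet Cantor (borel Cantor) Y)
    (hXhom : IsHomogeneous X) (hYhom : IsHomogeneous Y)
    (hXdel : ¬ InDelta X) (hYdel : ¬ InDelta Y) :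
    Nonempty (X ≃ₜ Y) ↔
      (WadgeEquiv X Y ∧
        ((FirstCategory X ∧ FirstCategory Y) ∨ (BaireSpace X ∧ BaireSpace Y))) := by
  have hX : MeasurableSet X := by
    rw [BorelSpace.measurable_eq (α := Cantor)]; exact hXB
  have hY : MeasurableSet Y := by
    rw [BorelSpace.measurable_eq (α := Cantor)]; exact hYB
  have hRX : ¬ RR X := fun h => hXdel h.inDelta
  have hRY : ¬ RR Y := fun h => hYdel h.inDelta
  constructor
  · rintro ⟨e⟩
    refine ⟨⟨wadge_of_homeo hX hY hYhom hRY e, wadge_of_homeo hY hX hXhom hRX e.symm⟩, ?_⟩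
    rcases category_dichotomy hXhom with h | h
    · exact Or.inl ⟨h, firstCategory_homeo e h⟩
    · exact Or.inr ⟨h, baire_homeo e h⟩
  · rintro ⟨⟨hXY, hYX⟩, hcat⟩
    refine homeo_of_meagre hX hY hXhom hYhom hRX hRY hXY hYX ?_
    rcases hcat with ⟨h1, h2⟩ | ⟨h1, h2⟩
    · exact Or.inl ⟨tr_meagre_of_firstCategory h1, tr_meagre_of_firstCategory h2⟩
    · exact Or.inr ⟨tr_comeagre_of_baire hX h1, tr_comeagre_of_baire hY h2⟩
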